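/- arXiv:1301.1735 — 4 statements merged into one kernel-verified Lean document; each statement's English description precedes it below -/
import Mathlib

section
/- Hobson coupling formula: for every ν ∈ ℂ and θ₁, θ₂ ∈ [0, π), if θ₁ + θ₂ ≤ π then (1/(2π)) ∫_0^{2π} P_ν(cos θ₁ cos θ₂ + sin θ₁ sin θ₂ cos φ) dφ = P_ν(cos θ₁) P_ν(cos θ₂), while if θ₁ + θ₂ ≥ π then (1/(2π)) ∫_0^{2π} P_ν(cos θ₁ cos θ₂ + sin θ₁ sin θ₂ cos φ) dφ = P_ν(−cos θ₁) P_ν(−cos θ₂). -/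
open Real MeasureTheory intervalIntegral
/-- Legendre function of the first kind of complex degree `ν`, defined on `(-1, 1]`
via the Mehler–Dirichlet integral. -/
noncomputable def legendreP (ν : ℂ) (x : ℝ) : ℂ :=
  if x = 1 then 1
  else ((2 / π : ℝ) : ℂ) *
    ∫ β in (0:ℝ)..(Real.arccos x),
      Complex.cos ((2*ν + 1) * (β:ℂ) / 2) / ((Real.sqrt (2 * (Real.cos β - x)) : ℝ) : ℂ)

namespace Hob
open Polynomial Finset

noncomputable def DD (p : ℝ[X]) : ℝ[X] := derivative (X * (1 - X) * derivative p)

lemma DD_add (p q : ℝ[X]) : DD (p + q) = DD p + DD q := by simp [DD]; ring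
lemma DD_smul (c : ℝ) (p : ℝ[X]) : DD (c • p) = c • DD p := by
  simp [DD]
lemma DD_sum {ι : Type*} (s : Finset ι) (f : ι → ℝ[X]) : DD (∑ i ∈ s, f i) = ∑ i ∈ s, DD (f i) := by
  classical
  induction s using Finset.induction_on with
  | empty => simp [DD]
  | insert a s ha ih => rw [sum_insert ha, sum_insert ha, DD_add, ih]

noncomputable def TT (k m : ℕ) : ℝ[X] := X ^ k * (1 - X) ^ m

lemma DD_TT (k m : ℕ) : DD (TT k m) = ((k:ℝ) ^ 2) • TT (k - 1) (m + 1) + ((m:ℝ) ^ 2) • TT (k + 1) (m - 1)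
    - ((k:ℝ) + m + 2 * k * m) • TT k m := by
  rcases k with _ | _ | k <;> rcases m with _ | _ | m <;>
  simp [DD, TT, derivative_mul, derivative_pow, smul_eq_C_mul, map_ofNat] <;> ring

lemma coeff_DD (p : ℝ[X]) (j : ℕ) :
    (DD p).coeff j = ((j:ℝ) + 1) ^ 2 * p.coeff (j + 1) - j * (j + 1) * p.coeff j := by
  have : X * (1 - X) * derivative p = X * derivative p - X * (X * derivative p) := by ring
  rw [DD, this, coeff_derivative, coeff_sub, coeff_X_mul, coeff_X_mul, coeff_derivative]
  rcases j with _ | j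
  · simp
  · rw [coeff_X_mul, coeff_derivative]; push_cast; ring

/-- coefficient (in y^j) of Q_n -/
noncomputable def gg (n j : ℕ) : ℝ[X] :=
  ∑ k ∈ range (n + 1), ((n.choose k : ℝ) ^ 2 * (TT (n - k) k).coeff j) • TT k (n - k)

lemma gg_zero (n : ℕ) : gg n 0 = X ^ n := by
  rw [gg, sum_range_succ, Finset.sum_eq_zero]
  · simp [TT, coeff_zero_eq_eval_zero]
  · intro k hk
    have : n - k ≠ 0 := by have := mem_range.1 hk; omega
    simp [TT, coeff_zero_eq_eval_zero, this]

lemma reindex (n : ℕ) (B : ℕ → ℕ → ℝ[X]) :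
    ∑ k ∈ range (n + 1), ((n.choose k : ℝ) ^ 2 * (k:ℝ) ^ 2) • B (k - 1) (n - k)
    = ∑ k ∈ range (n + 1), ((n.choose k : ℝ) ^ 2 * ((n - k : ℕ):ℝ) ^ 2) • B k (n - k - 1) := by
  rw [sum_range_succ', sum_range_succ]
  simp only [Nat.cast_zero, Nat.sub_self]
  simp only [ne_eq, OfNat.ofNat_ne_zero, not_false_eq_true, zero_pow, mul_zero, zero_smul, add_zero]
  refine sum_congr rfl fun k hk => ?_
  have h := Nat.choose_succ_right_eq n k
  have h' : (n.choose (k+1) : ℝ) * (k + 1 : ℕ) = n.choose k * (n - k : ℕ) := by exact_mod_cast h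
  rw [← mul_pow, ← mul_pow, h']
  rfl

lemma gg_rec (n j : ℕ) : DD (gg n j) = (((j:ℝ) + 1) ^ 2) • gg n (j + 1) - ((j:ℝ) * (j + 1)) • gg n j := by
  have e1 : (((j:ℝ) + 1) ^ 2) • gg n (j + 1) - ((j:ℝ) * (j + 1)) • gg n j
      = ∑ k ∈ range (n + 1), ((n.choose k : ℝ) ^ 2 * (DD (TT (n - k) k)).coeff j) • TT k (n - k) := by
    rw [gg, gg, smul_sum, smul_sum, ← sum_sub_distrib]
    refine sum_congr rfl fun k _ => ?_
    rw [coeff_DD, smul_smul, smul_smul, ← sub_smul]; congr 1; ring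
  rw [e1, gg, DD_sum]
  have e2 : ∀ k ∈ range (n+1), DD (((n.choose k : ℝ) ^ 2 * (TT (n - k) k).coeff j) • TT k (n - k))
     - ((n.choose k : ℝ) ^ 2 * (DD (TT (n - k) k)).coeff j) • TT k (n - k)
     = (((n.choose k : ℝ) ^ 2 * (k:ℝ) ^ 2) • ((TT (n - k) (n - (n - k))).coeff j • TT (k - 1) (n - (k - 1)))
       - ((n.choose k : ℝ) ^ 2 * ((n - k : ℕ):ℝ) ^ 2) • ((TT (n - k - 1) (n - (n - k - 1))).coeff j • TT k (n - k)))
       + (((n.choose k : ℝ) ^ 2 * ((n - k : ℕ):ℝ) ^ 2) • ((TT (n - k) k).coeff j • TT (k + 1) (n - k - 1))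
       - ((n.choose k : ℝ) ^ 2 * (k:ℝ) ^ 2) • ((TT (n - k + 1) (k - 1)).coeff j • TT k (n - k))) := by
    intro k hk
    have hk := mem_range.1 hk
    rw [DD_smul, DD_TT, DD_TT]
    simp only [coeff_add, coeff_sub, coeff_smul, smul_eq_mul]
    have a1 : n - (n - k) = k := by omega
    rcases Nat.eq_zero_or_pos k with h0 | h0
    · subst h0
      rcases Nat.eq_zero_or_pos n with h1 | h1
      · subst h1; simp
      · have a2 : n - (n - 0 - 1) = 0 + 1 := by omega
        simp only [a2]; simp; module
    · have a3 : n - (k - 1) = n - k + 1 := by omega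
      rcases Nat.eq_or_lt_of_le (Nat.lt_succ_iff.1 hk) with h1 | h1
      · subst h1
        simp [a3]; module
      · have a2 : n - (n - k - 1) = k + 1 := by omega
        rw [a1, a2, a3]; module
  rw [← sub_eq_zero, ← sum_sub_distrib, sum_congr rfl e2, sum_add_distrib, sum_sub_distrib, sum_sub_distrib]
  have r1 := reindex n (fun a b => (TT b (n - b)).coeff j • TT a (n - a))
  have r2 := reindex n (fun a b => (TT (n - a) a).coeff j • TT (n - b) b)
  rw [r1, sub_self, zero_add, sub_eq_zero, eq_comm]
  convert r2 using 1
  · refine sum_congr rfl fun k hk => ?_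
    have hk := mem_range.1 hk
    rcases Nat.eq_zero_or_pos k with h0 | h0
    · subst h0; simp
    · have a3 : n - (k - 1) = n - k + 1 := by omega
      have a1 : n - (n - k) = k := by omega
      rw [a1, a3]
  · refine sum_congr rfl fun k hk => ?_
    have hk := mem_range.1 hk
    rcases Nat.eq_or_lt_of_le (Nat.lt_succ_iff.1 hk) with h1 | h1
    · subst h1; simp
    · have a2 : n - (n - k - 1) = k + 1 := by omega
      rw [a2]

noncomputable def pc (N k : ℕ) : ℝ := (-1) ^ k * N.choose k * (N + k).choose k

lemma pc_rec (N k : ℕ) : ((k:ℝ) + 1) ^ 2 * pc N (k + 1) = (k * (k + 1) - N * (N + 1)) * pc N k := by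
  have h1 := Nat.choose_succ_right_eq N k
  have h2 : (N + k + 1).choose (k+1) * (k+1) = (N + k + 1) * (N + k).choose k :=
    (Nat.add_one_mul_choose_eq (N + k) k).symm
  have h1' : (N.choose (k+1) : ℝ) * (k + 1) = N.choose k * (N - k) := by
    rcases le_or_gt k N with h | h
    · rw [← Nat.cast_sub h]; exact_mod_cast h1
    · rw [Nat.choose_eq_zero_of_lt h, Nat.choose_eq_zero_of_lt (by omega)]; simp
  have h2' : ((N + k + 1).choose (k+1) : ℝ) * (k + 1) = (N + k + 1) * (N + k).choose k := by exact_mod_cast h2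
  rw [pc, pc, ← add_assoc]
  calc _ = (-1) ^ (k+1) * ((N.choose (k+1) : ℝ) * (k + 1)) * (((N + k + 1).choose (k+1) : ℝ) * (k + 1)) := by ring
    _ = _ := by rw [h1', h2']; ring

noncomputable def PP (N : ℕ) : ℝ[X] := ∑ k ∈ range (N + 1), pc N k • X ^ k

lemma coeff_PP (N j : ℕ) : (PP N).coeff j = pc N j := by
  simp only [PP, finsetSum_coeff, coeff_smul, coeff_X_pow, smul_eq_mul, mul_ite, mul_one, mul_zero]
  rw [Finset.sum_ite_eq]
  split_ifs with h
  · rfl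
  · have : N < j := by simpa using h
    simp [pc, Nat.choose_eq_zero_of_lt this]

lemma DD_PP (N : ℕ) : DD (PP N) = (-((N:ℝ) * (N + 1))) • PP N := by
  ext j
  rw [coeff_DD, coeff_smul, coeff_PP, coeff_PP, pc_rec, smul_eq_mul]; ring

lemma sum_gg (N j : ℕ) : ∑ n ∈ range (N + 1), pc N n • gg n j = pc N j • PP N := by
  induction j with
  | zero => simp [gg_zero, PP, pc]
  | succ j ih =>
    have h := congrArg DD ih
    rw [DD_sum, DD_smul, DD_PP] at h
    simp only [DD_smul, gg_rec] at h
    have hj : (((j:ℝ) + 1) ^ 2) ≠ 0 := by positivity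
    apply smul_right_injective _ hj
    simp only [smul_smul, pc_rec]
    have h3 : ∑ x ∈ range (N + 1), pc N x • ((((j:ℝ) + 1) ^ 2) • gg x (j + 1) - ((j:ℝ) * (j + 1)) • gg x j)
       = (((j:ℝ) + 1) ^ 2) • ∑ n ∈ range (N + 1), pc N n • gg n (j+1) - ((j:ℝ) * (j + 1)) • ∑ n ∈ range (N + 1), pc N n • gg n j := by
      rw [smul_sum, smul_sum, ← sum_sub_distrib]
      refine sum_congr rfl fun k _ => by module
    rw [h3, ih] at h
    rw [sub_eq_iff_eq_add] at h
    rw [h]; module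

noncomputable def QQ (n : ℕ) (x y : ℝ) : ℝ :=
  ∑ k ∈ range (n + 1), (n.choose k : ℝ) ^ 2 * (x * (1 - y)) ^ k * (y * (1 - x)) ^ (n - k)

lemma TT_natDegree (k m : ℕ) : (TT k m).natDegree ≤ k + m := by
  unfold TT; compute_degree!

lemma QQ_eq (n N : ℕ) (h : n ≤ N) (x y : ℝ) : QQ n x y = ∑ j ∈ range (N + 1), (gg n j).eval x * y ^ j := by
  simp only [gg, eval_finsetSum, eval_smul, smul_eq_mul, sum_mul]
  rw [sum_comm, QQ]
  refine sum_congr rfl fun k hk => ?_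
  have hk := mem_range.1 hk
  have := eval_eq_sum_range' (p := TT (n - k) k) (n := N + 1) (lt_of_le_of_lt (TT_natDegree _ _) (by omega)) y
  have e : ∀ j, (n.choose k : ℝ) ^ 2 * (TT (n - k) k).coeff j * (TT k (n - k)).eval x * y ^ j
     = (n.choose k : ℝ) ^ 2 * (TT k (n - k)).eval x * ((TT (n - k) k).coeff j * y ^ j) := fun j => by ring
  simp only [e, ← mul_sum, ← this]
  simp [TT, mul_pow]; ring

theorem key_poly (N : ℕ) (x y : ℝ) :
    ∑ n ∈ range (N + 1), pc N n * QQ n x y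
      = (∑ k ∈ range (N + 1), pc N k * x ^ k) * (∑ k ∈ range (N + 1), pc N k * y ^ k) := by
  have e : ∀ n ∈ range (N + 1), pc N n * QQ n x y = ∑ j ∈ range (N + 1), (pc N n • gg n j).eval x * y ^ j := by
    intro n hn
    rw [QQ_eq n N (by have := mem_range.1 hn; omega), mul_sum]
    refine sum_congr rfl fun j _ => by simp; ring
  rw [sum_congr rfl e, sum_comm, mul_sum]
  refine sum_congr rfl fun j _ => ?_
  rw [← sum_mul, ← eval_finsetSum, sum_gg]
  simp [PP, eval_finsetSum]; ring

noncomputable def vc (N k : ℕ) : ℝ := (-4) ^ k * (N + k).choose (2 * k)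

noncomputable def VV (N : ℕ) : ℝ[X] := ∑ k ∈ range (N + 1), vc N k • X ^ k

lemma coeff_VV (N j : ℕ) : (VV N).coeff j = vc N j := by
  simp only [VV, finsetSum_coeff, coeff_smul, coeff_X_pow, smul_eq_mul, mul_ite, mul_one, mul_zero]
  rw [Finset.sum_ite_eq]
  split_ifs with h
  · rfl
  · have : N < j := by simpa using h
    have h2 : N + j < 2 * j := by omega
    simp [vc, Nat.choose_eq_zero_of_lt h2]

lemma choose_second (m r : ℕ) :
    (m + 2).choose (r + 2) + m.choose (r + 2) = 2 * (m + 1).choose (r + 2) + m.choose r := by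
  have h1 := Nat.choose_succ_succ (m + 1) (r + 1)
  have h2 := Nat.choose_succ_succ m (r + 1)
  have h3 := Nat.choose_succ_succ m r
  simp only [Nat.succ_eq_add_one, add_assoc] at h1 h2 h3
  norm_num at h1 h2 h3
  omega

lemma VV_rec (N : ℕ) : VV (N + 2) + VV N = 2 * VV (N + 1) - X * ((4:ℝ) • VV (N + 1)) := by
  ext j
  rcases j with _ | j
  · simp [coeff_VV, vc, two_mul]
  · rw [coeff_add, coeff_sub, two_mul, coeff_add, coeff_X_mul, coeff_smul]
    simp only [coeff_VV, vc, smul_eq_mul]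
    have h := choose_second (N + (j + 1)) (2 * j)
    have e1 : N + 2 + (j + 1) = N + (j + 1) + 2 := by omega
    have e2 : 2 * (j + 1) = 2 * j + 2 := by omega
    have e3 : N + 1 + (j + 1) = N + (j + 1) + 1 := by omega
    have e4 : N + 1 + j = N + (j + 1) := by omega
    rw [e1, e2, e3, e4]
    have h' : ((N + (j + 1) + 2).choose (2 * j + 2) : ℝ) + (N + (j + 1)).choose (2 * j + 2) = 2 * (N + (j + 1) + 1).choose (2 * j + 2) + (N + (j + 1)).choose (2 * j) := by exact_mod_cast h
    calc _ = (-4:ℝ) ^ (j + 1) * (((N + (j + 1) + 2).choose (2 * j + 2) : ℝ) + (N + (j + 1)).choose (2 * j + 2)) := by ring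
      _ = _ := by rw [h']; ring

lemma cos_VV (t : ℝ) (N : ℕ) : Real.cos ((2 * N + 1) * t) = Real.cos t * (VV N).eval (Real.sin t ^ 2) := by
  induction N using Nat.twoStepInduction with
  | zero => simp [VV, vc]
  | one =>
    have : (2 * ((1:ℕ):ℝ) + 1) * t = 3 * t := by push_cast; ring
    rw [this, Real.cos_three_mul]
    simp [VV, vc, sum_range_succ]
    have := Real.sin_sq_add_cos_sq t
    linear_combination (4 * Real.cos t) * this
  | more N ih1 ih2 =>
    have h := congrArg (Polynomial.eval (Real.sin t ^ 2)) (VV_rec N)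
    simp only [eval_add, eval_sub, eval_mul, eval_X, eval_smul, eval_ofNat, smul_eq_mul] at h
    have e1 : (2 * ((N + 2 : ℕ):ℝ) + 1) * t = (2 * ((N + 1 : ℕ):ℝ) + 1) * t + 2 * t := by push_cast; ring
    have e0 : (2 * (N:ℝ) + 1) * t = (2 * ((N + 1 : ℕ):ℝ) + 1) * t - 2 * t := by push_cast; ring
    have a1 := Real.cos_add ((2 * ((N + 1 : ℕ):ℝ) + 1) * t) (2 * t)
    have a2 := Real.cos_sub ((2 * ((N + 1 : ℕ):ℝ) + 1) * t) (2 * t)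
    rw [← e1] at a1; rw [← e0] at a2
    have a3 := Real.cos_two_mul t
    have := Real.sin_sq_add_cos_sq t
    have a4 : Real.cos (2 * t) = 1 - 2 * Real.sin t ^ 2 := by linarith
    rw [a4] at a1 a2
    linear_combination a1 + a2 - ih1 + 2 * (1 - 2 * Real.sin t ^ 2) * ih2 - Real.cos t * h

noncomputable def cc (k : ℕ) : ℝ := (2 * k).choose k / 4 ^ k

lemma cc_vc (N k : ℕ) : vc N k * cc k = pc N k := by
  rcases le_or_gt k N with h | h
  · have h1 := Nat.choose_mul (n := N + k) (k := 2 * k) (s := k) (by omega)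
    have e1 : N + k - k = N := by omega
    have e2 : 2 * k - k = k := by omega
    rw [e1, e2] at h1
    have h1' : ((N + k).choose (2 * k) : ℝ) * (2 * k).choose k = (N + k).choose k * N.choose k := by
      exact_mod_cast h1
    rw [vc, cc, pc]
    have : (-4:ℝ) ^ k = (-1) ^ k * 4 ^ k := by rw [← mul_pow]; norm_num
    rw [this]
    field_simp
    linear_combination h1'
  · have h2 : N + k < 2 * k := by omega
    simp [vc, pc, Nat.choose_eq_zero_of_lt h, Nat.choose_eq_zero_of_lt h2]

lemma cc_prod (n : ℕ) : ∏ i ∈ range n, (2 * (i : ℝ) + 1) / (2 * i + 2) = cc n := by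
  induction n with
  | zero => simp [cc]
  | succ n ih =>
    rw [prod_range_succ, ih, cc, cc]
    have h := Nat.succ_mul_centralBinom_succ n
    simp only [Nat.centralBinom] at h
    have h' : ((n:ℝ) + 1) * ((2 * (n + 1)).choose (n + 1) : ℝ) = 2 * (2 * n + 1) * (2 * n).choose n := by
      exact_mod_cast h
    have : (n:ℝ) + 1 ≠ 0 := by positivity
    field_simp
    rw [pow_succ]
    linear_combination (-2 * 4 ^ n) * h'

lemma int_sin_pow (k : ℕ) : ∫ α in Set.Ioo (-(π/2)) (π/2), Real.sin α ^ (2 * k) = π * cc k := by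
  rw [← cc_prod, ← integral_sin_pow_even, ← integral_Ioc_eq_integral_Ioo,
    ← intervalIntegral.integral_of_le (by linarith [Real.pi_pos])]
  have hper : Function.Periodic (fun α => Real.sin α ^ (2 * k)) π := by
    intro x; simp [Real.sin_add_pi, pow_mul]
  have := hper.intervalIntegral_add_eq (-(π/2)) 0
  rw [zero_add, show -(π/2) + π = π/2 by ring] at this
  exact this

lemma int_exp (m : ℤ) : ∫ φ in (0:ℝ)..(2*π), Complex.exp (m * φ * Complex.I) = if m = 0 then 2 * π else 0 := by
  split_ifs with h
  · subst h; simp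
  · have hc : (m * Complex.I : ℂ) ≠ 0 := by simp [h]
    have := integral_exp_mul_complex (a := 0) (b := 2 * π) hc
    have e : ∀ φ : ℝ, (m * φ * Complex.I : ℂ) = m * Complex.I * φ := fun φ => by ring
    simp only [e]
    rw [this]
    have e2 : (m * Complex.I * ((2 * π : ℝ) : ℂ)) = m * (2 * π * Complex.I) := by push_cast; ring
    rw [e2, Complex.exp_int_mul_two_pi_mul_I]
    simp

lemma int_phi (a b : ℝ) (n : ℕ) : ∫ φ in (0:ℝ)..(2*π), (a^2 + b^2 - 2*a*b*Real.cos φ) ^ n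
    = 2 * π * ∑ k ∈ range (n + 1), (n.choose k : ℝ) ^ 2 * (a^2) ^ k * (b^2) ^ (n - k) := by
  apply Complex.ofReal_injective
  rw [← intervalIntegral.integral_ofReal]
  have e : ∀ φ : ℝ, (((a^2 + b^2 - 2*a*b*Real.cos φ) ^ n : ℝ) : ℂ)
     = ∑ k ∈ range (n + 1), ∑ l ∈ range (n + 1),
        ((a:ℂ) ^ k * (-b) ^ (n - k) * n.choose k * ((a:ℂ) ^ l * (-b) ^ (n - l) * n.choose l)) *
          Complex.exp ((((l:ℤ) - k : ℤ) : ℂ) * φ * Complex.I) := by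
    intro φ
    have h1 : ((a^2 + b^2 - 2*a*b*Real.cos φ : ℝ) : ℂ)
       = (a + (-b) * Complex.exp (φ * Complex.I)) * (a + (-b) * Complex.exp (-(φ * Complex.I))) := by
      have hh : Complex.exp (φ * Complex.I) * Complex.exp (-(φ * Complex.I)) = 1 := by
        rw [← Complex.exp_add]; simp
      have h2 : Complex.exp (φ * Complex.I) + Complex.exp (-(φ * Complex.I)) = 2 * Complex.cos φ := by
        rw [Complex.cos]; ring_nf
      push_cast
      linear_combination (-(b:ℂ)^2) * hh + (a:ℂ) * b * h2
    rw [Complex.ofReal_pow, h1, mul_pow, add_pow, add_pow, sum_mul_sum]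
    refine sum_congr rfl fun k hk => sum_congr rfl fun l hl => ?_
    have hk : k ≤ n := by have := mem_range.1 hk; omega
    have hl : l ≤ n := by have := mem_range.1 hl; omega
    rw [mul_pow, mul_pow]
    have h3 : Complex.exp (φ * Complex.I) ^ (n - k) * Complex.exp (-(φ * Complex.I)) ^ (n - l)
      = Complex.exp ((((l:ℤ) - k : ℤ) : ℂ) * φ * Complex.I) := by
      rw [← Complex.exp_nat_mul, ← Complex.exp_nat_mul, ← Complex.exp_add]
      congr 1
      push_cast [Nat.cast_sub hk, Nat.cast_sub hl]; ring
    rw [← h3]; ring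
  have ie : ∀ k l : ℕ, ∫ φ in (0:ℝ)..(2*π), Complex.exp (((l:ℂ) - k) * φ * Complex.I)
      = if l = k then 2 * (π:ℂ) else 0 := by
    intro k l
    have := int_exp ((l:ℤ) - k)
    push_cast at this
    rw [this]
    by_cases h : l = k
    · simp [h]
    · rw [if_neg h, if_neg (by omega), Complex.ofReal_zero]
  simp only [e]
  rw [intervalIntegral.integral_finsetSum]
  · push_cast
    rw [mul_sum]
    refine sum_congr rfl fun k hk => ?_
    rw [intervalIntegral.integral_finsetSum]
    · simp only [intervalIntegral.integral_const_mul, ie]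
      rw [Finset.sum_eq_single k]
      · rw [if_pos rfl]
        have : ((-b:ℂ)) ^ (n - k) * (-b) ^ (n - k) = ((b:ℂ)^2) ^ (n - k) := by
          rw [← mul_pow]; ring
        rw [← this, ← pow_mul]; ring
      · intro l _ hl
        rw [if_neg hl]; simp
      · intro h; exact absurd hk h
    · intro l _
      apply Continuous.intervalIntegrable; fun_prop
  · intro k _
    apply Continuous.intervalIntegrable; fun_prop

/-- Moments determine finite measures on `[0,1]`. -/
lemma measure_ext_moments (μ ν : Measure ℝ) [IsFiniteMeasure μ] [IsFiniteMeasure ν]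
    (hμ : ∀ᵐ x ∂μ, x ∈ Set.Icc (0:ℝ) 1) (hν : ∀ᵐ x ∂ν, x ∈ Set.Icc (0:ℝ) 1)
    (h : ∀ n : ℕ, ∫ x, x ^ n ∂μ = ∫ x, x ^ n ∂ν) : μ = ν := by
  have ipow : ∀ (ρ : Measure ℝ) [IsFiniteMeasure ρ], (∀ᵐ x ∂ρ, x ∈ Set.Icc (0:ℝ) 1) → ∀ p : ℝ[X],
      Integrable (fun x => p.eval x) ρ := by
    intro ρ _ hρ p
    obtain ⟨C, hC⟩ := (isCompact_Icc (a := (0:ℝ)) (b := 1)).exists_bound_of_continuousOn p.continuous.continuousOn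
    refine Integrable.of_bound p.continuous.aestronglyMeasurable C ?_
    filter_upwards [hρ] with x hx using hC x hx
  have hp : ∀ p : ℝ[X], ∫ x, p.eval x ∂μ = ∫ x, p.eval x ∂ν := by
    intro p
    simp only [eval_eq_sum_range]
    rw [MeasureTheory.integral_finsetSum, MeasureTheory.integral_finsetSum]
    · simp only [MeasureTheory.integral_const_mul, h]
    · intro i _
      exact (ipow ν hν (C (p.coeff i) * X ^ i)).congr (ae_of_all _ fun x => by simp)
    · intro i _
      exact (ipow μ hμ (C (p.coeff i) * X ^ i)).congr (ae_of_all _ fun x => by simp)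
  apply ext_of_forall_integral_eq_of_IsFiniteMeasure
  intro f
  have bound : ∀ (ρ : Measure ℝ) [IsFiniteMeasure ρ], (∀ᵐ x ∂ρ, x ∈ Set.Icc (0:ℝ) 1) → ∀ p : ℝ[X], ∀ ε : ℝ,
      (∀ x ∈ Set.Icc (0:ℝ) 1, |p.eval x - f x| < ε) → |∫ x, p.eval x ∂ρ - ∫ x, f x ∂ρ| ≤ ε * ρ.real Set.univ := by
    intro ρ _ hρ p ε hh
    rw [← integral_sub (ipow ρ hρ p) (f.integrable ρ), ← Real.norm_eq_abs]
    apply MeasureTheory.norm_integral_le_of_norm_le_const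
    filter_upwards [hρ] with x hx using (hh x hx).le
  by_contra hne
  set d := |∫ x, f x ∂μ - ∫ x, f x ∂ν| with hd
  have hdpos : 0 < d := abs_pos.2 (sub_ne_zero.2 hne)
  set M := μ.real Set.univ + ν.real Set.univ + 1 with hM
  have hM0 : 0 < M := by positivity
  obtain ⟨p, hp1⟩ := exists_polynomial_near_of_continuousOn 0 1 f f.continuous.continuousOn (d / M) (by positivity)
  have b1 := bound μ hμ p _ hp1
  have b2 := bound ν hν p _ hp1
  rw [hp p] at b1
  have t : d ≤ d / M * μ.real Set.univ + d / M * ν.real Set.univ := by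
    have := abs_sub_le (∫ x, f x ∂μ) (∫ x, p.eval x ∂ν) (∫ x, f x ∂ν)
    rw [abs_sub_comm (∫ x, f x ∂μ) (∫ x, p.eval x ∂ν)] at this
    linarith
  have : d / M * μ.real Set.univ + d / M * ν.real Set.univ = d - d / M := by
    field_simp; rw [hM]; ring
  have : 0 < d / M := by positivity
  linarith
end Hob

namespace Hob

noncomputable def GG (ν : ℂ) (z : ℝ) : ℂ :=
  Complex.cos ((2 * ν + 1) * (Real.arcsin (√z) : ℝ)) / ((√(1 - z) : ℝ) : ℂ)

lemma GG_sin (ν : ℂ) (t : ℝ) (ht : |t| < π / 2) :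
    GG ν (Real.sin t ^ 2) = Complex.cos ((2 * ν + 1) * t) / ((Real.cos t : ℝ) : ℂ) := by
  have h := abs_lt.1 ht
  have hc : 0 < Real.cos t := Real.cos_pos_of_mem_Ioo ⟨h.1, h.2⟩
  have e2 : √(1 - Real.sin t ^ 2) = Real.cos t := by
    rw [← Real.cos_sq', Real.sqrt_sq hc.le]
  rw [GG, e2, Real.sqrt_sq_eq_abs]
  congr 1
  rcases le_total 0 t with h0 | h0
  · rw [abs_of_nonneg (Real.sin_nonneg_of_nonneg_of_le_pi h0 (by linarith [Real.pi_pos])),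
      Real.arcsin_sin (by linarith) (by linarith)]
  · rw [abs_of_nonpos (Real.sin_nonpos_of_nonpos_of_neg_pi_le h0 (by linarith [Real.pi_pos])),
      ← Real.sin_neg, Real.arcsin_sin (by linarith) (by linarith), Complex.ofReal_neg, mul_neg, Complex.cos_neg]

lemma measurable_GG (ν : ℂ) : Measurable (GG ν) := by
  unfold GG
  have h1 : Measurable fun z : ℝ => Complex.cos ((2 * ν + 1) * (Real.arcsin (√z) : ℝ)) :=
    (show Continuous fun z : ℝ => Complex.cos ((2 * ν + 1) * (Real.arcsin (√z) : ℝ)) by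
      have := Real.continuous_arcsin
      fun_prop).measurable
  have h2 : Measurable fun z : ℝ => ((√(1 - z) : ℝ) : ℂ) :=
    (show Continuous fun z : ℝ => ((√(1 - z) : ℝ) : ℂ) by fun_prop).measurable
  exact h1.div h2

lemma legendreP_eq (ν : ℂ) (x : ℝ) (hx : x ∈ Set.Icc (-1:ℝ) 1) :
    legendreP ν x = ((2 / π : ℝ) : ℂ) *
      ∫ α in Set.Ioo 0 (π / 2), GG ν ((1 - x) / 2 * Real.sin α ^ 2) := by
  have hpi := Real.pi_pos
  by_cases h1 : x = 1
  · have : (π:ℂ) ≠ 0 := by exact_mod_cast hpi.ne'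
    simp [legendreP, h1, GG, Measure.real]
    rw [ENNReal.toReal_ofReal (by positivity)]
    push_cast
    field_simp
  · rw [legendreP, if_neg h1]
    congr 1
    have hx1 : x < 1 := lt_of_le_of_ne hx.2 h1
    set θ := Real.arccos x with hθ
    have hθ0 : 0 < θ := Real.arccos_pos.2 hx1
    have hθpi : θ ≤ π := Real.arccos_le_pi x
    have hcos : Real.cos θ = x := Real.cos_arccos hx.1 hx.2
    set s := Real.sin (θ / 2) with hs
    have hs0 : 0 < s := Real.sin_pos_of_pos_of_lt_pi (by linarith) (by linarith)
    have hs1 : s ≤ 1 := Real.sin_le_one _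
    have hsx : (1 - x) / 2 = s ^ 2 := by
      have := Real.cos_sq' (θ / 2)
      rw [Real.cos_sq, mul_div_cancel₀ _ (two_ne_zero), hcos, ← hs] at this
      linarith
    rw [intervalIntegral.integral_of_le hθ0.le, integral_Ioc_eq_integral_Ioo]
    set f : ℝ → ℝ := fun α => 2 * Real.arcsin (s * Real.sin α) with hf
    have hsin : ∀ α ∈ Set.Ioo 0 (π / 2), 0 < Real.sin α ∧ Real.sin α < 1 := by
      intro α hα
      refine ⟨Real.sin_pos_of_pos_of_lt_pi hα.1 (by linarith [hα.2]), ?_⟩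
      rw [← Real.sin_pi_div_two]
      exact Real.sin_lt_sin_of_lt_of_le_pi_div_two (by linarith [hα.1]) le_rfl hα.2
    have hsA : Real.arcsin s = θ / 2 := Real.arcsin_sin (by linarith) (by linarith)
    have himg : f '' Set.Ioo 0 (π / 2) = Set.Ioo 0 θ := by
      ext β
      constructor
      · rintro ⟨α, hα, rfl⟩
        obtain ⟨p, q⟩ := hsin α hα
        refine ⟨by simp only [hf]; have := Real.arcsin_pos.2 (mul_pos hs0 p); linarith, ?_⟩
        have : Real.arcsin (s * Real.sin α) < Real.arcsin s :=
          Real.arcsin_lt_arcsin (by nlinarith) (by nlinarith) hs1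
        simp only [hf]; linarith
      · rintro ⟨hb0, hb1⟩
        have hb : 0 < Real.sin (β / 2) := Real.sin_pos_of_pos_of_lt_pi (by linarith) (by linarith)
        have hb' : Real.sin (β / 2) < s :=
          Real.sin_lt_sin_of_lt_of_le_pi_div_two (by linarith) (by linarith) (by linarith)
        refine ⟨Real.arcsin (Real.sin (β / 2) / s), ⟨Real.arcsin_pos.2 (by positivity), ?_⟩, ?_⟩
        · rw [Real.arcsin_lt_pi_div_two, div_lt_one hs0]; exact hb'
        · simp only [hf]
          rw [Real.sin_arcsin, mul_div_cancel₀ _ hs0.ne', Real.arcsin_sin (by linarith) (by linarith)]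
          · ring
          · have : 0 < Real.sin (β / 2) / s := by positivity
            linarith
          · rw [div_le_one hs0]; exact hb'.le
    have hlt : ∀ α ∈ Set.Ioo 0 (π / 2), 0 < s * Real.sin α ∧ s * Real.sin α < 1 := by
      intro α hα
      obtain ⟨p, q⟩ := hsin α hα
      exact ⟨by positivity, by nlinarith⟩
    have hinj : Set.InjOn f (Set.Ioo 0 (π / 2)) := by
      intro a ha b hb hab
      simp only [hf] at hab
      have h2 : Real.arcsin (s * Real.sin a) = Real.arcsin (s * Real.sin b) := by linarith
      have h3 := Real.injOn_arcsin ⟨by linarith [(hlt a ha).1], (hlt a ha).2.le⟩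
        ⟨by linarith [(hlt b hb).1], (hlt b hb).2.le⟩ h2
      have h4 := mul_left_cancel₀ hs0.ne' h3
      exact Real.injOn_sin ⟨by linarith [ha.1], ha.2.le⟩ ⟨by linarith [hb.1], hb.2.le⟩ h4
    have hder : ∀ α ∈ Set.Ioo 0 (π / 2),
        HasDerivWithinAt f (2 * (1 / √(1 - (s * Real.sin α) ^ 2) * (s * Real.cos α))) (Set.Ioo 0 (π / 2)) α := by
      intro α hα
      have := (Real.hasDerivAt_arcsin (x := s * Real.sin α) (by linarith [(hlt α hα).1]) (hlt α hα).2.ne).comp α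
        ((Real.hasDerivAt_sin α).const_mul s)
      exact (this.const_mul 2).hasDerivWithinAt
    rw [← himg, integral_image_eq_integral_abs_deriv_smul measurableSet_Ioo hder hinj]
    refine setIntegral_congr_fun measurableSet_Ioo fun α hα => ?_
    obtain ⟨p, q⟩ := hlt α hα
    have hc : 0 < Real.cos α := Real.cos_pos_of_mem_Ioo ⟨by linarith [hα.1], hα.2⟩
    set A := Real.arcsin (s * Real.sin α) with hA
    have hsinA : Real.sin A = s * Real.sin α := Real.sin_arcsin (by linarith) q.le
    have hA0 : 0 < A := Real.arcsin_pos.2 p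
    have hA1 : A < π / 2 := Real.arcsin_lt_pi_div_two.2 q
    have hcA : 0 < Real.cos A := Real.cos_pos_of_mem_Ioo ⟨by linarith, hA1⟩
    have e1 : √(1 - (s * Real.sin α) ^ 2) = Real.cos A := by
      rw [← hsinA, ← Real.cos_sq', Real.sqrt_sq hcA.le]
    have e2 : f α = 2 * A := rfl
    have e3 : √(2 * (Real.cos (2 * A) - x)) = 2 * (s * Real.cos α) := by
      have hx' : x = 1 - 2 * s ^ 2 := by linarith
      have : 2 * (Real.cos (2 * A) - x) = (2 * (s * Real.cos α)) ^ 2 := by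
        rw [Real.cos_two_mul, Real.cos_sq', hsinA, hx']
        have := Real.sin_sq_add_cos_sq α
        linear_combination (-4 * s ^ 2) * this
      rw [this, Real.sqrt_sq (by positivity)]
    have e4 : (1 - x) / 2 * Real.sin α ^ 2 = Real.sin A ^ 2 := by rw [hsinA, hsx]; ring
    rw [e4, GG_sin ν A (abs_lt.2 ⟨by linarith, hA1⟩), e1, e2, e3, abs_of_pos (by positivity), Complex.real_smul]
    have e5 : (2 * ν + 1) * ((2 * A : ℝ) : ℂ) / 2 = (2 * ν + 1) * A := by push_cast; ring
    rw [e5]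
    have n1 : (Real.cos A : ℂ) ≠ 0 := by exact_mod_cast hcA.ne'
    have n2 : (Real.cos α : ℂ) ≠ 0 := by exact_mod_cast hc.ne'
    have n3 : (s : ℂ) ≠ 0 := by exact_mod_cast hs0.ne'
    push_cast
    push_cast at n1 n2
    field_simp

lemma half_int {E : Type*} [NormedAddCommGroup E] [NormedSpace ℝ E] (f : ℝ → E) (hf : Continuous f)
    (he : ∀ x, f (-x) = f x) :
    ∫ α in Set.Ioo (-(π/2)) (π/2), f α = (2:ℝ) • ∫ α in Set.Ioo 0 (π/2), f α := by
  have hpi := Real.pi_pos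
  rw [← integral_Ioc_eq_integral_Ioo, ← integral_Ioc_eq_integral_Ioo,
    ← intervalIntegral.integral_of_le (by linarith), ← intervalIntegral.integral_of_le (by linarith),
    ← intervalIntegral.integral_add_adjacent_intervals (b := 0) (hf.intervalIntegrable _ _) (hf.intervalIntegrable _ _)]
  have : ∫ α in (-(π/2))..0, f α = ∫ α in (0:ℝ)..(π/2), f α := by
    have := intervalIntegral.integral_comp_neg (a := 0) (b := π/2) f
    simp only [he, neg_zero] at this
    exact this.symm
  rw [this, two_smul]

lemma odd_int (f : ℝ → ℂ) (he : ∀ x, f (-x) = - f x) :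
    ∫ α in Set.Ioo (-(π/2)) (π/2), f α = 0 := by
  have hpi := Real.pi_pos
  rw [← integral_Ioc_eq_integral_Ioo, ← intervalIntegral.integral_of_le (by linarith)]
  have := intervalIntegral.integral_comp_neg (a := -(π/2)) (b := π/2) f
  simp only [he, neg_neg, intervalIntegral.integral_neg] at this
  exact self_eq_neg.1 this.symm

end Hob

namespace Hob

noncomputable def AA (θ α : ℝ) : ℝ := Real.arcsin (Real.sin (θ / 2) * Real.sin α)

lemma AA_cont (θ : ℝ) : Continuous (AA θ) := by
  unfold AA
  exact Real.continuous_arcsin.comp (by fun_prop)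

lemma AA_neg (θ α : ℝ) : AA θ (-α) = - AA θ α := by
  simp [AA, Real.arcsin_neg]

lemma sin_half {θ : ℝ} (h : θ ∈ Set.Ico 0 π) : 0 ≤ Real.sin (θ / 2) ∧ Real.sin (θ / 2) < 1 := by
  refine ⟨Real.sin_nonneg_of_nonneg_of_le_pi (by linarith [h.1]) (by linarith [h.1, h.2]), ?_⟩
  rw [← Real.sin_pi_div_two]
  exact Real.sin_lt_sin_of_lt_of_le_pi_div_two (by linarith [h.1, Real.pi_pos]) le_rfl (by linarith [h.2])

lemma sin_AA (θ α : ℝ) : Real.sin (AA θ α) = Real.sin (θ / 2) * Real.sin α := by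
  have : |Real.sin (θ / 2) * Real.sin α| ≤ 1 := by
    rw [abs_mul]
    exact mul_le_one₀ (Real.abs_sin_le_one _) (abs_nonneg _) (Real.abs_sin_le_one _)
  have := abs_le.1 this
  exact Real.sin_arcsin this.1 this.2

lemma AA_le {θ : ℝ} (h : θ ∈ Set.Ico 0 π) (α : ℝ) : |AA θ α| ≤ θ / 2 := by
  have hs := sin_half h
  have e : θ / 2 = Real.arcsin (Real.sin (θ / 2)) :=
    (Real.arcsin_sin (by linarith [h.1, Real.pi_pos]) (by linarith [h.2])).symm
  have h1 := Real.sin_le_one α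
  have h2 := Real.neg_one_le_sin α
  rw [abs_le]
  constructor
  · rw [e, ← Real.arcsin_neg]; exact Real.monotone_arcsin (by nlinarith)
  · conv_rhs => rw [e]
    exact Real.monotone_arcsin (by nlinarith)

lemma AA_lt_pi {θ : ℝ} (h : θ ∈ Set.Ico 0 π) (α : ℝ) : |AA θ α| < π / 2 :=
  lt_of_le_of_lt (AA_le h α) (by linarith [h.2])

lemma AA_lt {θ : ℝ} (h : θ ∈ Set.Ico 0 π) (h0 : 0 < θ) {α : ℝ} (hα : α ∈ Set.Ioo (-(π/2)) (π/2)) :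
    |AA θ α| < θ / 2 := by
  have hs := sin_half h
  have hs0 : 0 < Real.sin (θ / 2) := Real.sin_pos_of_pos_of_lt_pi (by linarith) (by linarith [h.2])
  have e : θ / 2 = Real.arcsin (Real.sin (θ / 2)) :=
    (Real.arcsin_sin (by linarith [h.1, Real.pi_pos]) (by linarith [h.2])).symm
  have h1 : Real.sin α < 1 := by
    rw [← Real.sin_pi_div_two]
    exact Real.sin_lt_sin_of_lt_of_le_pi_div_two hα.1.le le_rfl hα.2
  have h2 : -1 < Real.sin α := by
    rw [← Real.sin_pi_div_two, ← Real.sin_neg]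
    exact Real.sin_lt_sin_of_lt_of_le_pi_div_two le_rfl hα.2.le hα.1
  rw [abs_lt]
  constructor
  · rw [e, ← Real.arcsin_neg]
    exact Real.arcsin_lt_arcsin (by linarith) (by nlinarith) (by nlinarith)
  · conv_rhs => rw [e]
    exact Real.arcsin_lt_arcsin (by nlinarith) (by nlinarith) (by linarith)

lemma cos_AA_pos {θ : ℝ} (h : θ ∈ Set.Ico 0 π) (α : ℝ) : 0 < Real.cos (AA θ α) := by
  have := abs_lt.1 (AA_lt_pi h α)
  exact Real.cos_pos_of_mem_Ioo ⟨this.1, this.2⟩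

lemma AA_add_lt {θ₁ θ₂ : ℝ} (h₁ : θ₁ ∈ Set.Ico 0 π) (h₂ : θ₂ ∈ Set.Ico 0 π) (hs : θ₁ + θ₂ ≤ π)
    {α : ℝ} (hα : α ∈ Set.Ioo (-(π/2)) (π/2)) (β : ℝ) :
    |AA θ₁ α + AA θ₂ β| < π / 2 := by
  have t := abs_add_le (AA θ₁ α) (AA θ₂ β)
  have b := AA_le h₂ β
  rcases eq_or_lt_of_le h₁.1 with h0 | h0
  · have a := AA_le h₁ α
    have := h₂.2
    linarith
  · have a := AA_lt h₁ h0 hα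
    linarith

noncomputable abbrev μI : Measure ℝ := volume.restrict (Set.Ioo (-(π/2)) (π/2))

lemma cont_integrable {E : Type*} [NormedAddCommGroup E] (f : ℝ × ℝ → E) (hf : Continuous f) :
    Integrable f (μI.prod μI) := by
  rw [Measure.prod_restrict]
  have : IntegrableOn f (Set.Icc (-(π/2)) (π/2) ×ˢ Set.Icc (-(π/2)) (π/2)) (volume.prod volume) :=
    hf.continuousOn.integrableOn_compact (isCompact_Icc.prod isCompact_Icc)
  exact this.mono_set (Set.prod_mono Set.Ioo_subset_Icc_self Set.Ioo_subset_Icc_self)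

lemma ae_mem : ∀ᵐ p ∂(μI.prod μI), p.1 ∈ Set.Ioo (-(π/2)) (π/2) ∧ p.2 ∈ Set.Ioo (-(π/2)) (π/2) := by
  rw [Measure.prod_restrict]
  exact ae_restrict_mem (measurableSet_Ioo.prod measurableSet_Ioo)

noncomputable def rho (θ₁ θ₂ : ℝ) (p : ℝ × ℝ) : ℝ :=
  Real.cos (AA θ₁ p.1 + AA θ₂ p.2) / (Real.cos (AA θ₁ p.1) * Real.cos (AA θ₂ p.2))

lemma rho_cont {θ₁ θ₂ : ℝ} (h₁ : θ₁ ∈ Set.Ico 0 π) (h₂ : θ₂ ∈ Set.Ico 0 π) :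
    Continuous (rho θ₁ θ₂) := by
  have a1 := AA_cont θ₁
  have a2 := AA_cont θ₂
  unfold rho
  refine Continuous.div (by fun_prop) (by fun_prop) fun p => ?_
  exact (mul_pos (cos_AA_pos h₁ _) (cos_AA_pos h₂ _)).ne'

noncomputable def ww (θ₁ θ₂ : ℝ) (p : ℝ × ℝ) : ℝ := Real.sin (AA θ₁ p.1 + AA θ₂ p.2) ^ 2

lemma ww_cont (θ₁ θ₂ : ℝ) : Continuous (ww θ₁ θ₂) := by
  have a1 := AA_cont θ₁
  have a2 := AA_cont θ₂
  unfold ww; fun_prop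

lemma GG_AA {θ : ℝ} (h : θ ∈ Set.Ico 0 π) (ν : ℂ) (α : ℝ) :
    GG ν (Real.sin (θ / 2) ^ 2 * Real.sin α ^ 2)
      = Complex.cos ((2 * ν + 1) * AA θ α) / ((Real.cos (AA θ α) : ℝ) : ℂ) := by
  rw [← mul_pow, ← sin_AA, GG_sin ν _ (AA_lt_pi h α)]

lemma cont_div {θ : ℝ} (h : θ ∈ Set.Ico 0 π) (f : ℂ → ℂ) (hf : Continuous f) (ν : ℂ) :
    Continuous fun α : ℝ => f ((2 * ν + 1) * AA θ α) / ((Real.cos (AA θ α) : ℝ) : ℂ) := by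
  have a1 := AA_cont θ
  refine Continuous.div (hf.comp (by fun_prop)) (by fun_prop) fun p => ?_
  exact_mod_cast (cos_AA_pos h _).ne'

lemma core {θ₁ θ₂ : ℝ} (h₁ : θ₁ ∈ Set.Ico 0 π) (h₂ : θ₂ ∈ Set.Ico 0 π) (hs : θ₁ + θ₂ ≤ π) (ν : ℂ) :
    Integrable (fun p => rho θ₁ θ₂ p • GG ν (ww θ₁ θ₂ p)) (μI.prod μI) ∧
    ∫ p, rho θ₁ θ₂ p • GG ν (ww θ₁ θ₂ p) ∂(μI.prod μI)
      = (∫ α in Set.Ioo (-(π/2)) (π/2), GG ν (Real.sin (θ₁ / 2) ^ 2 * Real.sin α ^ 2)) *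
        (∫ α in Set.Ioo (-(π/2)) (π/2), GG ν (Real.sin (θ₂ / 2) ^ 2 * Real.sin α ^ 2)) := by
  set F : ℝ → ℝ → ℂ := fun θ α => Complex.cos ((2 * ν + 1) * AA θ α) / ((Real.cos (AA θ α) : ℝ) : ℂ) with hF
  set S : ℝ → ℝ → ℂ := fun θ α => Complex.sin ((2 * ν + 1) * AA θ α) / ((Real.cos (AA θ α) : ℝ) : ℂ) with hS
  have F1 : Continuous (F θ₁) := cont_div h₁ _ Complex.continuous_cos ν
  have F2 : Continuous (F θ₂) := cont_div h₂ _ Complex.continuous_cos ν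
  have S1 : Continuous (S θ₁) := cont_div h₁ _ Complex.continuous_sin ν
  have S2 : Continuous (S θ₂) := cont_div h₂ _ Complex.continuous_sin ν
  have hae : (fun p : ℝ × ℝ => rho θ₁ θ₂ p • GG ν (ww θ₁ θ₂ p)) =ᵐ[μI.prod μI]
      fun p => F θ₁ p.1 * F θ₂ p.2 - S θ₁ p.1 * S θ₂ p.2 := by
    filter_upwards [ae_mem] with p hp
    have hlt := AA_add_lt h₁ h₂ hs hp.1 p.2
    have hc : 0 < Real.cos (AA θ₁ p.1 + AA θ₂ p.2) := by
      have := abs_lt.1 hlt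
      exact Real.cos_pos_of_mem_Ioo ⟨this.1, this.2⟩
    have n1 : ((Real.cos (AA θ₁ p.1) : ℝ) : ℂ) ≠ 0 := by exact_mod_cast (cos_AA_pos h₁ _).ne'
    have n2 : ((Real.cos (AA θ₂ p.2) : ℝ) : ℂ) ≠ 0 := by exact_mod_cast (cos_AA_pos h₂ _).ne'
    have n3 : ((Real.cos (AA θ₁ p.1 + AA θ₂ p.2) : ℝ) : ℂ) ≠ 0 := by exact_mod_cast hc.ne'
    rw [ww, GG_sin ν _ hlt, rho, Complex.real_smul, hF, hS]
    have e : (2 * ν + 1) * ((AA θ₁ p.1 + AA θ₂ p.2 : ℝ) : ℂ) = (2 * ν + 1) * AA θ₁ p.1 + (2 * ν + 1) * AA θ₂ p.2 := by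
      push_cast; ring
    rw [e, Complex.cos_add, Complex.ofReal_div, Complex.ofReal_mul]
    field_simp
  have iF : Integrable (fun p : ℝ × ℝ => F θ₁ p.1 * F θ₂ p.2) (μI.prod μI) := cont_integrable _ (by fun_prop)
  have iS : Integrable (fun p : ℝ × ℝ => S θ₁ p.1 * S θ₂ p.2) (μI.prod μI) := cont_integrable _ (by fun_prop)
  refine ⟨(integrable_congr hae).2 (iF.sub iS), ?_⟩
  rw [integral_congr_ae hae, MeasureTheory.integral_sub iF iS, integral_prod_mul, integral_prod_mul]
  have z : ∫ α, S θ₁ α ∂μI = 0 := odd_int _ fun x => by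
    simp only [hS, AA_neg]; push_cast; rw [mul_neg, Complex.sin_neg, Complex.cos_neg]; ring
  rw [z, zero_mul, sub_zero]
  simp only [GG_AA h₁, GG_AA h₂, hF]

lemma GG_half {θ : ℝ} (h : θ ∈ Set.Ico 0 π) (ν : ℂ) :
    ∫ α in Set.Ioo (-(π/2)) (π/2), GG ν (Real.sin (θ / 2) ^ 2 * Real.sin α ^ 2)
     = 2 * ∫ α in Set.Ioo 0 (π/2), GG ν (Real.sin (θ / 2) ^ 2 * Real.sin α ^ 2) := by
  rw [half_int]
  · simp
  · simp only [GG_AA h]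
    exact cont_div h _ Complex.continuous_cos ν
  · intro x; simp

noncomputable def muR (θ₁ θ₂ : ℝ) : Measure ℝ :=
  ((μI.prod μI).withDensity (fun p => ENNReal.ofReal (rho θ₁ θ₂ p))).map (ww θ₁ θ₂)

lemma muR_finite {θ₁ θ₂ : ℝ} (h₁ : θ₁ ∈ Set.Ico 0 π) (h₂ : θ₂ ∈ Set.Ico 0 π) :
    IsFiniteMeasure (muR θ₁ θ₂) := by
  have := isFiniteMeasure_withDensity_ofReal (cont_integrable _ (rho_cont h₁ h₂)).2
  unfold muR
  infer_instance

lemma muR_supp (θ₁ θ₂ : ℝ) : ∀ᵐ x ∂(muR θ₁ θ₂), x ∈ Set.Icc (0:ℝ) 1 := by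
  unfold muR
  refine (ae_map_iff (p := fun x => x ∈ Set.Icc (0:ℝ) 1) (ww_cont _ _).aemeasurable measurableSet_Icc).2 ?_
  exact ae_of_all _ fun p => ⟨sq_nonneg _, Real.sin_sq_le_one _⟩

lemma rho_nonneg {θ₁ θ₂ : ℝ} (h₁ : θ₁ ∈ Set.Ico 0 π) (h₂ : θ₂ ∈ Set.Ico 0 π) (hs : θ₁ + θ₂ ≤ π) :
    ∀ᵐ p ∂(μI.prod μI), 0 ≤ rho θ₁ θ₂ p := by
  filter_upwards [ae_mem] with p hp
  have := abs_lt.1 (AA_add_lt h₁ h₂ hs hp.1 p.2)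
  have hc := Real.cos_pos_of_mem_Ioo ⟨this.1, this.2⟩
  have a := cos_AA_pos h₁ p.1
  have b := cos_AA_pos h₂ p.2
  unfold rho; positivity

lemma muR_int {E : Type*} [NormedAddCommGroup E] [NormedSpace ℝ E] [MeasurableSpace E] [BorelSpace E]
    [SecondCountableTopology E] {θ₁ θ₂ : ℝ} (h₁ : θ₁ ∈ Set.Ico 0 π) (h₂ : θ₂ ∈ Set.Ico 0 π)
    (hs : θ₁ + θ₂ ≤ π) (g : ℝ → E) (hg : Measurable g) :
    ((Integrable g (muR θ₁ θ₂)) ↔ Integrable (fun p => rho θ₁ θ₂ p • g (ww θ₁ θ₂ p)) (μI.prod μI)) ∧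
    ∫ x, g x ∂(muR θ₁ θ₂) = ∫ p, rho θ₁ θ₂ p • g (ww θ₁ θ₂ p) ∂(μI.prod μI) := by
  have hm : Measurable (fun p => ENNReal.ofReal (rho θ₁ θ₂ p)) :=
    ENNReal.measurable_ofReal.comp (rho_cont h₁ h₂).measurable
  have hae : (fun p => (ENNReal.ofReal (rho θ₁ θ₂ p)).toReal • g (ww θ₁ θ₂ p)) =ᵐ[μI.prod μI]
      fun p => rho θ₁ θ₂ p • g (ww θ₁ θ₂ p) := by
    filter_upwards [rho_nonneg h₁ h₂ hs] with p hp
    rw [ENNReal.toReal_ofReal hp]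
  constructor
  · unfold muR
    rw [integrable_map_measure hg.aestronglyMeasurable (ww_cont _ _).aemeasurable,
      integrable_withDensity_iff_integrable_smul' hm (ae_of_all _ fun p => ENNReal.ofReal_lt_top)]
    exact integrable_congr hae
  · unfold muR
    rw [integral_map (ww_cont _ _).aemeasurable hg.aestronglyMeasurable,
      integral_withDensity_eq_integral_toReal_smul hm (ae_of_all _ fun p => ENNReal.ofReal_lt_top)]
    exact integral_congr_ae hae

/-- For integer degree `GG` is a polynomial. -/
lemma GG_nat (N : ℕ) (z : ℝ) (h0 : 0 ≤ z) (h1 : z < 1) : GG N z = (((VV N).eval z : ℝ) : ℂ) := by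
  have hz : √z < 1 := by rw [Real.sqrt_lt' one_pos]; simpa
  have hz0 := Real.sqrt_nonneg z
  set t := Real.arcsin (√z) with ht
  have hs : Real.sin t = √z := Real.sin_arcsin (by linarith) hz.le
  have e : z = Real.sin t ^ 2 := by rw [hs, Real.sq_sqrt h0]
  have t0 : 0 ≤ t := Real.arcsin_nonneg.2 hz0
  have t1 : t < π / 2 := Real.arcsin_lt_pi_div_two.2 hz
  have hc : 0 < Real.cos t := Real.cos_pos_of_mem_Ioo ⟨by linarith, t1⟩
  have n1 : ((Real.cos t : ℝ) : ℂ) ≠ 0 := by exact_mod_cast hc.ne'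
  rw [e, GG_sin _ _ (abs_lt.2 ⟨by linarith, t1⟩)]
  have := congrArg (fun x : ℝ => (x : ℂ)) (cos_VV t N)
  simp only [Complex.ofReal_mul] at this
  rw [div_eq_iff n1]
  refine Eq.trans ?_ (this.trans (mul_comm _ _))
  push_cast; rfl

end Hob

namespace Hob
open Finset in
lemma eval_VV (N : ℕ) (z : ℝ) : (VV N).eval z = ∑ k ∈ range (N + 1), vc N k * z ^ k := by
  simp [VV, Polynomial.eval_finsetSum]

lemma int_pow (ρ : Measure ℝ) [IsFiniteMeasure ρ] (hρ : ∀ᵐ x ∂ρ, x ∈ Set.Icc (0:ℝ) 1) (n : ℕ) :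
    Integrable (fun x => x ^ n) ρ := by
  refine Integrable.of_bound (by fun_prop) 1 ?_
  filter_upwards [hρ] with x hx
  rw [norm_pow, Real.norm_eq_abs, abs_of_nonneg hx.1]
  exact pow_le_one₀ hx.1 hx.2

noncomputable abbrev μJ : Measure ℝ := volume.restrict (Set.Ioc 0 (2 * π))
noncomputable abbrev μH : Measure ℝ := volume.restrict (Set.Ioo 0 (π / 2))

noncomputable def zz (θ₁ θ₂ φ : ℝ) : ℝ :=
  (1 - (Real.cos θ₁ * Real.cos θ₂ + Real.sin θ₁ * Real.sin θ₂ * Real.cos φ)) / 2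

lemma zz_eq (θ₁ θ₂ φ : ℝ) : zz θ₁ θ₂ φ = (Real.sin (θ₁ / 2) * Real.cos (θ₂ / 2)) ^ 2
    + (Real.sin (θ₂ / 2) * Real.cos (θ₁ / 2)) ^ 2
    - 2 * (Real.sin (θ₁ / 2) * Real.cos (θ₂ / 2)) * (Real.sin (θ₂ / 2) * Real.cos (θ₁ / 2)) * Real.cos φ := by
  obtain ⟨a, rfl⟩ : ∃ a, θ₁ = 2 * a := ⟨θ₁ / 2, by ring⟩
  obtain ⟨b, rfl⟩ : ∃ a, θ₂ = 2 * a := ⟨θ₂ / 2, by ring⟩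
  have ha := Real.sin_sq_add_cos_sq a
  have hb := Real.sin_sq_add_cos_sq b
  rw [zz, mul_div_cancel_left₀ _ (two_ne_zero' ℝ), mul_div_cancel_left₀ _ (two_ne_zero' ℝ), Real.cos_two_mul,
    Real.cos_two_mul, Real.sin_two_mul, Real.sin_two_mul, mul_pow, mul_pow, Real.sin_sq, Real.sin_sq]
  ring

lemma arg_mem (θ₁ θ₂ φ : ℝ) :
    Real.cos θ₁ * Real.cos θ₂ + Real.sin θ₁ * Real.sin θ₂ * Real.cos φ ∈ Set.Icc (-1:ℝ) 1 := by
  have a := Real.sin_sq_add_cos_sq θ₁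
  have b := Real.sin_sq_add_cos_sq θ₂
  have c := Real.sin_sq_add_cos_sq φ
  set C1 := Real.cos θ₁
  set C2 := Real.cos θ₂
  set S1 := Real.sin θ₁
  set S2 := Real.sin θ₂
  set c1 := Real.cos φ
  set s1 := Real.sin φ
  have key : (C1 * C2 + S1 * S2 * c1) ^ 2 ≤ 1 := by
    have h1 : (C1 * C2 + S1 * (S2 * c1)) ^ 2 ≤ (C1 ^ 2 + S1 ^ 2) * (C2 ^ 2 + (S2 * c1) ^ 2) := by
      nlinarith [sq_nonneg (C1 * (S2 * c1) - S1 * C2)]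
    have h2 : (S2 * c1) ^ 2 ≤ S2 ^ 2 := by
      rw [mul_pow]; nlinarith [sq_nonneg S2, sq_nonneg s1, mul_nonneg (sq_nonneg S2) (sq_nonneg s1)]
    have h3 : C1 ^ 2 + S1 ^ 2 = 1 := by linarith
    rw [h3] at h1
    calc _ = (C1 * C2 + S1 * (S2 * c1)) ^ 2 := by ring
      _ ≤ _ := by linarith
  exact abs_le.1 ((sq_le_one_iff_abs_le_one _).1 key)

lemma zz_mem (θ₁ θ₂ φ : ℝ) : zz θ₁ θ₂ φ ∈ Set.Icc (0:ℝ) 1 := by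
  have := arg_mem θ₁ θ₂ φ
  unfold zz
  constructor <;> linarith [this.1, this.2]

lemma zz_cont (θ₁ θ₂ : ℝ) : Continuous (zz θ₁ θ₂) := by unfold zz; fun_prop

noncomputable def zs (θ₁ θ₂ : ℝ) (p : ℝ × ℝ) : ℝ := zz θ₁ θ₂ p.1 * Real.sin p.2 ^ 2

lemma zs_cont (θ₁ θ₂ : ℝ) : Continuous (zs θ₁ θ₂) := by
  have := zz_cont θ₁ θ₂
  unfold zs; fun_prop

noncomputable def muL (θ₁ θ₂ : ℝ) : Measure ℝ := (μJ.prod μH).map (zs θ₁ θ₂)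

instance (θ₁ θ₂ : ℝ) : IsFiniteMeasure (muL θ₁ θ₂) := by unfold muL; infer_instance

lemma muL_supp (θ₁ θ₂ : ℝ) : ∀ᵐ x ∂(muL θ₁ θ₂), x ∈ Set.Icc (0:ℝ) 1 := by
  unfold muL
  refine (ae_map_iff (p := fun x => x ∈ Set.Icc (0:ℝ) 1) (zs_cont _ _).aemeasurable measurableSet_Icc).2 ?_
  refine ae_of_all _ fun p => ?_
  have := zz_mem θ₁ θ₂ p.1
  exact ⟨mul_nonneg this.1 (sq_nonneg _), mul_le_one₀ this.2 (sq_nonneg _) (Real.sin_sq_le_one _)⟩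

lemma muL_pow (θ₁ θ₂ : ℝ) (n : ℕ) : ∫ x, x ^ n ∂(muL θ₁ θ₂)
    = π ^ 2 * (cc n * QQ n (Real.sin (θ₁ / 2) ^ 2) (Real.sin (θ₂ / 2) ^ 2)) := by
  unfold muL
  rw [integral_map (zs_cont _ _).aemeasurable (by fun_prop)]
  simp only [zs, mul_pow]
  rw [integral_prod_mul (fun φ => zz θ₁ θ₂ φ ^ n) (fun α => (Real.sin α ^ 2) ^ n)]
  have h1 : ∫ φ, zz θ₁ θ₂ φ ^ n ∂μJ = 2 * π * QQ n (Real.sin (θ₁ / 2) ^ 2) (Real.sin (θ₂ / 2) ^ 2) := by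
    rw [← intervalIntegral.integral_of_le (by positivity)]
    simp only [zz_eq]
    rw [int_phi, QQ]
    simp only [mul_pow, Real.cos_sq']
  have h2 : ∫ α, (Real.sin α ^ 2) ^ n ∂μH = π / 2 * cc n := by
    have := int_sin_pow n
    rw [half_int _ (by fun_prop) (by intro x; simp [pow_mul])] at this
    simp only [← pow_mul]
    rw [smul_eq_mul] at this
    linarith
  rw [h1, h2]; ring

open Finset in
lemma muL_VV (θ₁ θ₂ : ℝ) (N : ℕ) : ∫ x, (VV N).eval x ∂(muL θ₁ θ₂)
    = π ^ 2 * ((∑ k ∈ range (N + 1), pc N k * (Real.sin (θ₁ / 2) ^ 2) ^ k) *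
        (∑ k ∈ range (N + 1), pc N k * (Real.sin (θ₂ / 2) ^ 2) ^ k)) := by
  simp only [eval_VV]
  rw [MeasureTheory.integral_finsetSum _ fun k _ => (int_pow _ (muL_supp θ₁ θ₂) k).const_mul _, ← key_poly, mul_sum]
  refine sum_congr rfl fun k _ => ?_
  rw [MeasureTheory.integral_const_mul, muL_pow, ← cc_vc]; ring

open Finset in
lemma int_GG_nat {θ : ℝ} (h : θ ∈ Set.Ico 0 π) (N : ℕ) :
    ∫ α in Set.Ioo (-(π/2)) (π/2), GG N (Real.sin (θ / 2) ^ 2 * Real.sin α ^ 2)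
      = ((π * ∑ k ∈ range (N + 1), pc N k * (Real.sin (θ / 2) ^ 2) ^ k : ℝ) : ℂ) := by
  have hs := sin_half h
  have e : ∀ α, GG N (Real.sin (θ / 2) ^ 2 * Real.sin α ^ 2)
      = ((∑ k ∈ range (N + 1), vc N k * (Real.sin (θ / 2) ^ 2) ^ k * Real.sin α ^ (2 * k) : ℝ) : ℂ) := by
    intro α
    have : Real.sin (θ / 2) ^ 2 * Real.sin α ^ 2 < 1 := by
      have := Real.sin_sq_le_one α
      nlinarith [sq_nonneg (Real.sin α)]
    rw [GG_nat N _ (by positivity) this, eval_VV]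
    congr 1
    refine sum_congr rfl fun k _ => by rw [mul_pow, pow_mul (Real.sin α)]; ring
  simp only [e]
  rw [integral_complex_ofReal]
  congr 1
  rw [MeasureTheory.integral_finsetSum, mul_sum]
  · refine sum_congr rfl fun k _ => ?_
    rw [MeasureTheory.integral_const_mul, int_sin_pow, ← cc_vc]; ring
  · intro k _
    have : IntegrableOn (fun α => vc N k * (Real.sin (θ / 2) ^ 2) ^ k * Real.sin α ^ (2 * k))
        (Set.Icc (-(π/2)) (π/2)) := by
      apply Continuous.integrableOn_Icc; fun_prop
    exact this.mono_set Set.Ioo_subset_Icc_self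

open Finset in
lemma muR_VV {θ₁ θ₂ : ℝ} (h₁ : θ₁ ∈ Set.Ico 0 π) (h₂ : θ₂ ∈ Set.Ico 0 π) (hs : θ₁ + θ₂ ≤ π) (N : ℕ) :
    ∫ x, (VV N).eval x ∂(muR θ₁ θ₂)
    = π ^ 2 * ((∑ k ∈ range (N + 1), pc N k * (Real.sin (θ₁ / 2) ^ 2) ^ k) *
        (∑ k ∈ range (N + 1), pc N k * (Real.sin (θ₂ / 2) ^ 2) ^ k)) := by
  rw [(muR_int h₁ h₂ hs _ (VV N).continuous.measurable).2]
  apply Complex.ofReal_injective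
  rw [← integral_complex_ofReal]
  have hae : (fun p : ℝ × ℝ => ((rho θ₁ θ₂ p • (VV N).eval (ww θ₁ θ₂ p) : ℝ) : ℂ)) =ᵐ[μI.prod μI]
      fun p => rho θ₁ θ₂ p • GG N (ww θ₁ θ₂ p) := by
    filter_upwards [ae_mem] with p hp
    have := abs_lt.1 (AA_add_lt h₁ h₂ hs hp.1 p.2)
    have hc := Real.cos_pos_of_mem_Ioo ⟨this.1, this.2⟩
    have hlt : ww θ₁ θ₂ p < 1 := by
      rw [ww, Real.sin_sq]
      nlinarith
    rw [GG_nat N (ww θ₁ θ₂ p) (by unfold ww; positivity) hlt, smul_eq_mul, Complex.real_smul, Complex.ofReal_mul]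
  rw [integral_congr_ae hae, (core h₁ h₂ hs N).2, int_GG_nat h₁, int_GG_nat h₂, ← Complex.ofReal_mul]
  congr 1; ring

open Finset in
lemma moments_eq {θ₁ θ₂ : ℝ} (h₁ : θ₁ ∈ Set.Ico 0 π) (h₂ : θ₂ ∈ Set.Ico 0 π) (hs : θ₁ + θ₂ ≤ π) (n : ℕ) :
    ∫ x, x ^ n ∂(muL θ₁ θ₂) = ∫ x, x ^ n ∂(muR θ₁ θ₂) := by
  have := muR_finite h₁ h₂
  induction n using Nat.strong_induction_on with
  | _ n ih =>
    have h := (muL_VV θ₁ θ₂ n).trans (muR_VV h₁ h₂ hs n).symm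
    simp only [eval_VV] at h
    rw [MeasureTheory.integral_finsetSum _ fun k _ => (int_pow _ (muL_supp θ₁ θ₂) k).const_mul _,
      MeasureTheory.integral_finsetSum _ fun k _ => (int_pow _ (muR_supp θ₁ θ₂) k).const_mul _,
      sum_range_succ, sum_range_succ] at h
    simp only [MeasureTheory.integral_const_mul] at h
    rw [sum_congr rfl (fun k hk => by rw [ih k (mem_range.1 hk)])] at h
    have hv : vc n n ≠ 0 := by
      rw [vc, ← two_mul, Nat.choose_self]; simp
    exact mul_left_cancel₀ hv (add_left_cancel h)

lemma mu_eq {θ₁ θ₂ : ℝ} (h₁ : θ₁ ∈ Set.Ico 0 π) (h₂ : θ₂ ∈ Set.Ico 0 π) (hs : θ₁ + θ₂ ≤ π) :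
    muL θ₁ θ₂ = muR θ₁ θ₂ := by
  have := muR_finite h₁ h₂
  exact measure_ext_moments _ _ (muL_supp _ _) (muR_supp _ _) (moments_eq h₁ h₂ hs)

lemma legendreP_cos {θ : ℝ} (h : θ ∈ Set.Ico 0 π) (ν : ℂ) :
    legendreP ν (Real.cos θ) = ((1 / π : ℝ) : ℂ) *
      ∫ α in Set.Ioo (-(π/2)) (π/2), GG ν (Real.sin (θ / 2) ^ 2 * Real.sin α ^ 2) := by
  rw [legendreP_eq ν _ ⟨Real.neg_one_le_cos _, Real.cos_le_one _⟩, GG_half h]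
  have : (1 - Real.cos θ) / 2 = Real.sin (θ / 2) ^ 2 := by
    rw [Real.sin_sq, Real.cos_sq, mul_div_cancel₀ _ (two_ne_zero' ℝ)]; ring
  rw [this]
  push_cast; ring

theorem first (ν : ℂ) (θ₁ θ₂ : ℝ) (h₁ : θ₁ ∈ Set.Ico 0 π) (h₂ : θ₂ ∈ Set.Ico 0 π) (hs : θ₁ + θ₂ ≤ π) :
    ((1 / (2*π) : ℝ) : ℂ) *
        ∫ φ in (0:ℝ)..(2*π),
          legendreP ν (Real.cos θ₁ * Real.cos θ₂ + Real.sin θ₁ * Real.sin θ₂ * Real.cos φ)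
      = legendreP ν (Real.cos θ₁) * legendreP ν (Real.cos θ₂) := by
  have hR := muR_int h₁ h₂ hs (GG ν) (measurable_GG ν)
  obtain ⟨ic, ec⟩ := core h₁ h₂ hs ν
  have iL : Integrable (GG ν) (muL θ₁ θ₂) := by rw [mu_eq h₁ h₂ hs]; exact hR.1.2 ic
  have eL : ∫ x, GG ν x ∂(muL θ₁ θ₂) = ∫ φ, ∫ α, GG ν (zz θ₁ θ₂ φ * Real.sin α ^ 2) ∂μH ∂μJ := by
    unfold muL at iL ⊢
    rw [integrable_map_measure (measurable_GG ν).aestronglyMeasurable (zs_cont _ _).aemeasurable] at iL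
    rw [integral_map (zs_cont _ _).aemeasurable (measurable_GG ν).aestronglyMeasurable]
    exact integral_prod _ iL
  rw [mu_eq h₁ h₂ hs, hR.2, ec] at eL
  rw [intervalIntegral.integral_of_le (by positivity)]
  have e : ∀ φ, legendreP ν (Real.cos θ₁ * Real.cos θ₂ + Real.sin θ₁ * Real.sin θ₂ * Real.cos φ)
     = ((2 / π : ℝ) : ℂ) * ∫ α, GG ν (zz θ₁ θ₂ φ * Real.sin α ^ 2) ∂μH := fun φ =>
    legendreP_eq ν _ (arg_mem θ₁ θ₂ φ)
  simp only [e]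
  rw [MeasureTheory.integral_const_mul, ← eL, legendreP_cos h₁, legendreP_cos h₂]
  have : (π : ℂ) ≠ 0 := by exact_mod_cast Real.pi_ne_zero
  push_cast
  field_simp

end Hob

/-- Hobson coupling formula. -/
theorem stmt_1 (ν : ℂ) (θ₁ θ₂ : ℝ) (h₁ : θ₁ ∈ Set.Ico 0 π) (h₂ : θ₂ ∈ Set.Ico 0 π) :
    (θ₁ + θ₂ ≤ π →
      ((1 / (2*π) : ℝ) : ℂ) *
        ∫ φ in (0:ℝ)..(2*π),
          legendreP ν (Real.cos θ₁ * Real.cos θ₂ + Real.sin θ₁ * Real.sin θ₂ * Real.cos φ)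
      = legendreP ν (Real.cos θ₁) * legendreP ν (Real.cos θ₂)) ∧
    (π ≤ θ₁ + θ₂ →
      ((1 / (2*π) : ℝ) : ℂ) *
        ∫ φ in (0:ℝ)..(2*π),
          legendreP ν (Real.cos θ₁ * Real.cos θ₂ + Real.sin θ₁ * Real.sin θ₂ * Real.cos φ)
      = legendreP ν (-Real.cos θ₁) * legendreP ν (-Real.cos θ₂)) := by
  refine ⟨Hob.first ν θ₁ θ₂ h₁ h₂, fun hs => ?_⟩
  have h := Hob.first ν (π - θ₁) (π - θ₂) ⟨by linarith [h₁.2], by linarith [h₂.2]⟩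
    ⟨by linarith [h₂.2], by linarith [h₁.2]⟩ (by linarith)
  simpa only [Real.cos_pi_sub, Real.sin_pi_sub, neg_mul_neg] using h
end

section
/- For every θ ∈ [0, π/2], one has [K(sin(θ/2))]² = ∫_0^{π/2} K(sin θ cos φ) dφ. -/
open Real MeasureTheory intervalIntegral

/-- Complete elliptic integral of the first kind. -/
noncomputable def ellipticK (k : ℝ) : ℝ :=
  ∫ θ in (0:ℝ)..(π/2), 1 / Real.sqrt (1 - k^2 * Real.sin θ ^ 2)

open Filter Topology

noncomputable def pS (a : ℕ → ℝ) (x : ℝ) : ℝ := ∑' n, a n * x ^ n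

def tS (a : ℕ → ℝ) : ℕ → ℝ := fun n => n * a n

def PolyBdd (a : ℕ → ℝ) : Prop := ∃ (k : ℕ) (C : ℝ), ∀ n : ℕ, |a n| ≤ C * ((n : ℝ) + 1) ^ k

lemma PolyBdd.tS {a : ℕ → ℝ} (h : PolyBdd a) : PolyBdd (tS a) := by
  obtain ⟨k, C, h⟩ := h
  refine ⟨k + 1, C, fun n => ?_⟩
  have h0 : (0:ℝ) ≤ n := Nat.cast_nonneg n
  have := h n
  have h2 := abs_nonneg (a n)
  rw [_root_.tS, abs_mul, abs_of_nonneg h0, pow_succ, ← mul_assoc]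
  nlinarith

lemma PolyBdd.summable_abs {a : ℕ → ℝ} (h : PolyBdd a) {x : ℝ} (hx : |x| < 1) :
    Summable fun n => |a n| * |x| ^ n := by
  obtain ⟨k, C, h⟩ := h
  obtain ⟨r, hxr, hr1⟩ := exists_between hx
  have hr0 : 0 < r := (abs_nonneg x).trans_lt hxr
  have h1 : Summable fun n : ℕ => (n : ℝ) ^ k * r ^ n :=
    summable_pow_mul_geometric_of_norm_lt_one k (by rw [Real.norm_eq_abs, abs_of_pos hr0]; exact hr1)
  have h2 := ((summable_nat_add_iff 1).2 h1).mul_left (C / r)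
  refine Summable.of_nonneg_of_le (fun n => by positivity) (fun n => ?_) h2
  have : C / r * ((((n + 1 : ℕ) : ℝ)) ^ k * r ^ (n + 1)) = C * ((n : ℝ) + 1) ^ k * r ^ n := by
    push_cast; field_simp; ring
  rw [this]
  have hn := h n
  gcongr
  exact (abs_nonneg _).trans hn

lemma PolyBdd.summable {a : ℕ → ℝ} (h : PolyBdd a) {x : ℝ} (hx : |x| < 1) :
    Summable fun n => a n * x ^ n := by
  refine Summable.of_norm ?_
  simpa [abs_mul, abs_pow] using h.summable_abs hx

lemma PolyBdd.hasDerivAt {a : ℕ → ℝ} (h : PolyBdd a) {x : ℝ} (hx : |x| < 1) :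
    ∃ d, HasDerivAt (pS a) d x ∧ x * d = pS (_root_.tS a) x := by
  obtain ⟨r, hxr, hr1⟩ := exists_between hx
  have hr0 : 0 < r := (abs_nonneg x).trans_lt hxr
  have hra : |r| = r := abs_of_pos hr0
  have hu := (h.tS.summable_abs (x := r) (by rwa [hra])).mul_left (1 / r)
  refine ⟨_, hasDerivAt_tsum_of_isPreconnected (g := fun n y => a n * y ^ n)
    (g' := fun n y => a n * (n * y ^ (n - 1))) (t := Set.Ioo (-r) r) (y₀ := 0) hu isOpen_Ioo
    isPreconnected_Ioo ?_ ?_ ?_ ?_ ?_, ?_⟩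
  · intro n y _
    exact (hasDerivAt_pow n y).const_mul _
  · intro n y hy
    rcases n with _ | n
    · simp [_root_.tS]
    · have : |y| ≤ r := abs_le.2 ⟨hy.1.le, hy.2.le⟩
      rw [hra]
      simp only [_root_.tS, Real.norm_eq_abs, abs_mul, abs_pow, Nat.add_sub_cancel]
      have e : 1 / r * (|((n + 1 : ℕ) : ℝ)| * |a (n + 1)| * r ^ (n + 1)) =
        |a (n + 1)| * (|((n + 1 : ℕ) : ℝ)| * r ^ n) := by field_simp; ring
      rw [e]
      gcongr
  · exact ⟨by linarith, hr0⟩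
  · exact h.summable (by simp)
  · exact abs_lt.1 hxr
  · rw [← tsum_mul_left]
    refine tsum_congr fun n => ?_
    rcases n with _ | n
    · simp [_root_.tS]
    · simp only [_root_.tS, Nat.add_sub_cancel]; ring

lemma PolyBdd.analyticAt {a : ℕ → ℝ} (h : PolyBdd a) {x : ℝ} (hx : |x| < 1) :
    AnalyticAt ℝ (pS a) x := by
  have hr : 1 ≤ (FormalMultilinearSeries.ofScalars ℝ a).radius := by
    refine ENNReal.le_of_forall_nnreal_lt fun r hr => ?_
    apply FormalMultilinearSeries.le_radius_of_summable
    have := h.summable_abs (x := r) (by simpa using hr)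
    simpa [FormalMultilinearSeries.ofScalars_norm] using this
  have e : pS a = (FormalMultilinearSeries.ofScalars ℝ a).sum := by
    have := FormalMultilinearSeries.ofScalarsSum_eq_tsum (E := ℝ) a
    rw [FormalMultilinearSeries.ofScalarsSum] at this
    rw [this]
    ext y; simp [pS]
  have hb := (FormalMultilinearSeries.ofScalars ℝ a).hasFPowerSeriesOnBall
    (lt_of_lt_of_le one_pos hr)
  rw [e]
  refine hb.analyticAt_of_mem ?_
  have : x ∈ Metric.eball (0:ℝ) 1 := by
    simpa [Metric.mem_eball, edist_zero_right, ← ofReal_norm] using hx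
  exact Metric.eball_subset_eball hr this

lemma pS_shift {b : ℕ → ℝ} (h : PolyBdd b) (h0 : b 0 = 0) {x : ℝ} (hx : |x| < 1) :
    pS b x = x * pS (fun n => b (n + 1)) x := by
  rw [pS, (h.summable hx).tsum_eq_zero_add, pS, ← tsum_mul_left]
  simp only [h0, zero_mul, zero_add]
  exact tsum_congr fun n => by ring

/-! uniqueness -/

lemma step_lemma {m : ℕ} {g E : ℝ → ℝ} (hg : AnalyticAt ℝ g 0)
    (hE : ∀ᶠ x in 𝓝 0, E x = x ^ m * g x) :
    ∃ g', AnalyticAt ℝ g' 0 ∧ g' 0 = m * g 0 ∧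
      ∀ᶠ x in 𝓝 0, x * (1 - x) * deriv E x = x ^ m * g' x := by
  refine ⟨fun x => (1 - x) * (m * g x + x * deriv g x), ?_, by simp, ?_⟩
  · have := hg.deriv
    fun_prop
  · have h1 : deriv E =ᶠ[𝓝 0] deriv (fun x => x ^ m * g x) := EventuallyEq.deriv hE
    filter_upwards [h1, hg.eventually_analyticAt] with x hx hgx
    rw [hx, ((hasDerivAt_pow m x).fun_mul hgx.differentiableAt.hasDerivAt).deriv]
    rcases m with _ | m
    · simp; ring
    · simp only [Nat.add_sub_cancel]; ring

lemma uniq {D0 D1 D2 D3 a b : ℝ → ℝ} (hD : AnalyticAt ℝ D0 0) (h0 : D0 0 = 0)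
    (ha : ContinuousAt a 0) (ha0 : a 0 = 0) (hb : ContinuousAt b 0) (hb0 : b 0 = 0)
    (h1 : ∀ᶠ x in 𝓝 0, x * (1 - x) * deriv D0 x = D1 x)
    (h2 : ∀ᶠ x in 𝓝 0, x * (1 - x) * deriv D1 x = D2 x)
    (h3 : ∀ᶠ x in 𝓝 0, x * (1 - x) * deriv D2 x = D3 x)
    (h : ∀ᶠ x in 𝓝 0, D3 x = a x * D1 x + b x * D0 x) :
    ∀ᶠ x in 𝓝 0, D0 x = 0 := by
  by_contra hne
  obtain ⟨m, g, hg, hgne, hgE⟩ := hD.exists_eventuallyEq_pow_smul_nonzero_iff.2 hne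
  simp only [sub_zero, smul_eq_mul] at hgE
  have hm : m ≠ 0 := by
    rintro rfl
    have := hgE.self_of_nhds
    simp [h0] at this
    exact hgne this.symm
  obtain ⟨g1, hg1, e1, hE1⟩ := step_lemma hg hgE
  have hE1 : ∀ᶠ x in 𝓝 0, D1 x = x ^ m * g1 x := by
    filter_upwards [h1, hE1] with x p q using p.symm.trans q
  obtain ⟨g2, hg2, e2, hE2⟩ := step_lemma hg1 hE1
  have hE2 : ∀ᶠ x in 𝓝 0, D2 x = x ^ m * g2 x := by
    filter_upwards [h2, hE2] with x p q using p.symm.trans q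
  obtain ⟨g3, hg3, e3, hE3⟩ := step_lemma hg2 hE2
  have hE3 : ∀ᶠ x in 𝓝 0, D3 x = x ^ m * g3 x := by
    filter_upwards [h3, hE3] with x p q using p.symm.trans q
  have hz : ∀ᶠ x in 𝓝[≠] (0:ℝ), g3 x - (a x * g1 x + b x * g x) = 0 := by
    filter_upwards [h.filter_mono nhdsWithin_le_nhds, hE1.filter_mono nhdsWithin_le_nhds,
      hE3.filter_mono nhdsWithin_le_nhds, hgE.filter_mono nhdsWithin_le_nhds,
      self_mem_nhdsWithin] with x p q r s hx
    have hx : x ^ m ≠ 0 := pow_ne_zero _ hx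
    rw [q, r, s] at p
    apply mul_left_cancel₀ hx
    linear_combination p
  have hc : ContinuousAt (fun x => g3 x - (a x * g1 x + b x * g x)) 0 :=
    hg3.continuousAt.sub ((ha.mul hg1.continuousAt).add (hb.mul hg.continuousAt))
  have hl := hc.tendsto.mono_left (nhdsWithin_le_nhds (s := {0}ᶜ))
  have hl2 : Tendsto (fun x => g3 x - (a x * g1 x + b x * g x)) (𝓝[≠] 0) (𝓝 0) :=
    tendsto_const_nhds.congr' (hz.mono fun x hx => hx.symm)
  have := tendsto_nhds_unique hl hl2
  simp [ha0, hb0, e3, e2, e1, hm] at this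
  exact hgne this

noncomputable def cc (n : ℕ) : ℝ := ∏ i ∈ Finset.range n, (2 * (i : ℝ) + 1) / (2 * i + 2)

lemma cc_zero : cc 0 = 1 := by simp [cc]

lemma cc_succ (n : ℕ) : cc (n + 1) = cc n * ((2 * (n : ℝ) + 1) / (2 * n + 2)) := by
  rw [cc, cc, Finset.prod_range_succ]

lemma cc_succ' (n : ℕ) : ((n : ℝ) + 1) * cc (n + 1) = (n + 1 / 2) * cc n := by
  rw [cc_succ]; field_simp

lemma cc_nonneg (n : ℕ) : 0 ≤ cc n := Finset.prod_nonneg fun i _ => by positivity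

lemma cc_sq_le (n : ℕ) : cc n ^ 2 * (2 * n + 1) ≤ 1 := by
  induction n with
  | zero => simp [cc_zero]
  | succ n ih =>
    refine le_trans ?_ ih
    rw [cc_succ, mul_pow, mul_assoc]
    refine mul_le_mul_of_nonneg_left ?_ (sq_nonneg _)
    push_cast
    rw [div_pow, div_mul_eq_mul_div, div_le_iff₀ (by positivity)]
    have : (0:ℝ) ≤ n := Nat.cast_nonneg n
    nlinarith

lemma cc_le_one (n : ℕ) : cc n ≤ 1 := by
  have h := cc_sq_le n
  have : (0:ℝ) ≤ n := Nat.cast_nonneg n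
  have h2 := cc_nonneg n
  nlinarith [mul_nonneg (sq_nonneg (cc n)) this]

lemma polyBdd_cc_pow (k : ℕ) : PolyBdd fun n => cc n ^ k := by
  refine ⟨0, 1, fun n => ?_⟩
  rw [abs_of_nonneg (pow_nonneg (cc_nonneg n) k)]
  simpa using pow_le_one₀ (cc_nonneg n) (cc_le_one n)

lemma summable_cc_cube : Summable fun n => cc n ^ 3 := by
  have h1 : Summable fun n : ℕ => 1 / (n : ℝ) ^ (3 / 2 : ℝ) :=
    Real.summable_one_div_nat_rpow.2 (by norm_num)
  refine Summable.of_nonneg_of_le (fun n => pow_nonneg (cc_nonneg n) 3) (fun n => ?_)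
    ((summable_nat_add_iff 1).2 h1)
  have hn : (0:ℝ) ≤ n := Nat.cast_nonneg n
  have hp : (0:ℝ) < ((n + 1 : ℕ) : ℝ) := by positivity
  have h2 : cc n ^ 2 ≤ 1 / ((n + 1 : ℕ) : ℝ) := by
    rw [le_div_iff₀ hp]
    have := cc_sq_le n
    push_cast
    nlinarith [mul_nonneg (sq_nonneg (cc n)) hn]
  have h3 : cc n ^ 3 = (cc n ^ 2) ^ (3 / 2 : ℝ) := by
    rw [← Real.rpow_natCast (cc n) 2, ← Real.rpow_mul (cc_nonneg n), ← Real.rpow_natCast]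
    norm_num
  rw [h3, show (1:ℝ) / ((n + 1 : ℕ) : ℝ) ^ (3 / 2 : ℝ) = (1 / ((n + 1 : ℕ) : ℝ)) ^ (3 / 2 : ℝ) by
    rw [Real.div_rpow zero_le_one hp.le, Real.one_rpow]]
  exact Real.rpow_le_rpow (sq_nonneg _) h2 (by norm_num)

/-! ODEs -/

lemma ode1 {x : ℝ} (hx : |x| < 1) :
    pS (tS fun n => cc n ^ 1) x =
      x * (pS (tS fun n => cc n ^ 1) x + 1 / 2 * pS (fun n => cc n ^ 1) x) := by
  have h0 := polyBdd_cc_pow 1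
  have h1 := h0.tS
  conv_lhs => rw [pS_shift h1 (by simp [tS]) hx]
  congr 1
  simp only [pS]
  rw [← tsum_mul_left, ← Summable.tsum_add (h1.summable hx) ((h0.summable hx).mul_left _)]
  refine tsum_congr fun n => ?_
  have := cc_succ' n
  simp only [tS]
  push_cast
  linear_combination x ^ n * this

lemma ode2 {x : ℝ} (hx : |x| < 1) :
    pS (tS (tS fun n => cc n ^ 2)) x =
      x * (pS (tS (tS fun n => cc n ^ 2)) x + (pS (tS fun n => cc n ^ 2) x +
        1 / 4 * pS (fun n => cc n ^ 2) x)) := by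
  have h0 := polyBdd_cc_pow 2
  have h1 := h0.tS
  have h2 := h1.tS
  conv_lhs => rw [pS_shift h2 (by simp [tS]) hx]
  congr 1
  simp only [pS]
  rw [← tsum_mul_left, ← Summable.tsum_add (h1.summable hx) ((h0.summable hx).mul_left _),
    ← Summable.tsum_add (h2.summable hx) ((h1.summable hx).add ((h0.summable hx).mul_left _))]
  refine tsum_congr fun n => ?_
  have := congrArg (· ^ 2) (cc_succ' n)
  simp only [tS] at this ⊢
  push_cast
  linear_combination x ^ n * this

lemma ode3 {x : ℝ} (hx : |x| < 1) :
    pS (tS (tS (tS fun n => cc n ^ 3))) x =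
      x * (pS (tS (tS (tS fun n => cc n ^ 3))) x + (3 / 2 * pS (tS (tS fun n => cc n ^ 3)) x +
      (3 / 4 * pS (tS fun n => cc n ^ 3) x + 1 / 8 * pS (fun n => cc n ^ 3) x))) := by
  have h0 := polyBdd_cc_pow 3
  have h1 := h0.tS
  have h2 := h1.tS
  have h3 := h2.tS
  have s0 := (h0.summable hx).mul_left (1 / 8)
  have s1 := (h1.summable hx).mul_left (3 / 4)
  have s2 := (h2.summable hx).mul_left (3 / 2)
  have s3 := h3.summable hx
  conv_lhs => rw [pS_shift h3 (by simp [tS]) hx]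
  congr 1
  simp only [pS]
  rw [← tsum_mul_left, ← tsum_mul_left, ← tsum_mul_left, ← Summable.tsum_add s1 s0,
    ← Summable.tsum_add s2 (s1.add s0), ← Summable.tsum_add s3 (s2.add (s1.add s0))]
  refine tsum_congr fun n => ?_
  have := congrArg (· ^ 3) (cc_succ' n)
  simp only [tS] at this ⊢
  push_cast
  linear_combination x ^ n * this

lemma pS_zero (a : ℕ → ℝ) : pS a 0 = a 0 := by
  rw [pS, tsum_eq_single 0]
  · simp
  · intro n hn; simp [hn]

lemma pS_cc {u : ℝ} (h0 : 0 ≤ u) (h1 : u < 1) : pS cc u = 1 / √(1 - u) := by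
  have hc1 : (fun n => cc n ^ 1) = cc := by ext n; simp
  have hb : PolyBdd cc := hc1 ▸ polyBdd_cc_pow 1
  have hs : 0 < √(1 - u) := Real.sqrt_pos.2 (by linarith)
  rw [eq_div_iff hs.ne']
  rcases h0.eq_or_lt with rfl | hu
  · simp [pS_zero, cc_zero]
  have key : ∀ x ∈ Set.Ico 0 1, ∃ d, HasDerivAt (fun x => pS cc x * √(1 - x)) d x ∧
      (x ≠ 0 → d = 0) := by
    intro x hx
    have hx1 : |x| < 1 := abs_lt.2 ⟨by linarith [hx.1], hx.2⟩
    obtain ⟨d, hd, e⟩ := hb.hasDerivAt hx1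
    have hp : 0 < 1 - x := by linarith [hx.2]
    refine ⟨_, hd.mul (((hasDerivAt_id x).const_sub 1).sqrt hp.ne'), fun hx0 => ?_⟩
    have o := ode1 hx1
    rw [hc1, ← e] at o
    have o2 : d = x * d + 1 / 2 * pS cc x := mul_left_cancel₀ hx0 o
    have hq := Real.sqrt_pos.2 hp
    have hq2 := Real.sq_sqrt hp.le
    simp only [id]
    field_simp
    rw [hq2]
    linear_combination 2 * o2
  obtain ⟨c, hc, e⟩ := exists_deriv_eq_slope (fun x => pS cc x * √(1 - x)) hu
    (fun x hx => by
      obtain ⟨d, hd, -⟩ := key x ⟨hx.1, hx.2.trans_lt h1⟩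
      exact hd.continuousAt.continuousWithinAt)
    (fun x hx => by
      obtain ⟨d, hd, -⟩ := key x ⟨hx.1.le, hx.2.trans h1⟩
      exact hd.differentiableAt.differentiableWithinAt)
  obtain ⟨d, hd, hd0⟩ := key c ⟨hc.1.le, hc.2.trans h1⟩
  rw [hd.deriv, hd0 hc.1.ne', eq_comm, div_eq_zero_iff] at e
  rcases e with e | e
  · simp [pS_zero, cc_zero] at e
    linarith
  · linarith

/-! Clausen -/

lemma clausen_near : ∀ᶠ x in 𝓝 (0:ℝ),
    pS (fun n => cc n ^ 2) x ^ 2 - pS (fun n => cc n ^ 3) (4 * x * (1 - x)) = 0 := by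
  set F0 := pS (fun n => cc n ^ 2) with hF0
  set F1 := pS (tS fun n => cc n ^ 2) with hF1
  set F2 := pS (tS (tS fun n => cc n ^ 2)) with hF2
  set f0 := pS (fun n => cc n ^ 3) with hf0
  set f1 := pS (tS fun n => cc n ^ 3) with hf1
  set f2 := pS (tS (tS fun n => cc n ^ 3)) with hf2
  set f3 := pS (tS (tS (tS fun n => cc n ^ 3))) with hf3
  have p2 := polyBdd_cc_pow 2
  have p3 := polyBdd_cc_pow 3
  have hU : ∀ᶠ x in 𝓝 (0:ℝ), x ∈ Set.Ioo (-1/5 : ℝ) (1/5) :=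
    Ioo_mem_nhds (by norm_num) (by norm_num)
  have hw : ∀ x ∈ Set.Ioo (-1/5 : ℝ) (1/5), |x| < 1 ∧ |4 * x * (1 - x)| < 1 := by
    rintro x ⟨h1, h2⟩
    constructor <;> rw [abs_lt] <;> constructor <;> nlinarith
  have hW : ∀ x : ℝ, HasDerivAt (fun x : ℝ => 4 * x * (1 - x)) (4 * (1 - 2 * x)) x := by
    intro x
    have := ((hasDerivAt_id' x).const_mul 4).fun_mul ((hasDerivAt_id' x).const_sub 1)
    exact this.congr_deriv (by ring)
  have hs : ∀ x : ℝ, HasDerivAt (fun x : ℝ => 1 - 2 * x) (-2) x := by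
    intro x
    have := ((hasDerivAt_id' x).const_mul 2).const_sub 1
    exact this.congr_deriv (by ring)
  have hs1 : ∀ x : ℝ, HasDerivAt (fun x : ℝ => 1 - x) (-1) x := by
    intro x
    exact (hasDerivAt_id x).const_sub 1
  have comp : ∀ {a : ℕ → ℝ}, PolyBdd a → ∀ x ∈ Set.Ioo (-1/5 : ℝ) (1/5), ∃ d,
      HasDerivAt (fun x => pS a (4 * x * (1 - x))) d x ∧
        x * (1 - x) * d = (1 - 2 * x) * pS (tS a) (4 * x * (1 - x)) := by
    intro a ha x hx
    obtain ⟨d, hd, e⟩ := ha.hasDerivAt (hw x hx).2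
    refine ⟨_, HasDerivAt.comp (h₂ := pS a) x hd (hW x), ?_⟩
    rw [← e]; ring
  refine uniq (D0 := fun x => F0 x ^ 2 - f0 (4 * x * (1 - x)))
    (D1 := fun x => 2 * F0 x * ((1 - x) * F1 x) - (1 - 2 * x) * f1 (4 * x * (1 - x)))
    (D2 := fun x => (2 * ((1 - x) * F1 x) ^ 2 + (4 * x * (1 - x)) * (1 / 8) * F0 x ^ 2) -
      ((4 * x * (1 - x)) * (-1 / 2) * f1 (4 * x * (1 - x)) +
        (1 - (4 * x * (1 - x))) * f2 (4 * x * (1 - x))))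
    (D3 := fun x => ((4 * x * (1 - x)) / 4 * (2 * F0 x * ((1 - x) * F1 x)) +
        (4 * x * (1 - x)) * (1 - 2 * x) / 8 * F0 x ^ 2) -
        (1 - 2 * x) * (-(4 * x * (1 - x)) / 2 * f1 (4 * x * (1 - x))
          - 3 / 2 * (4 * x * (1 - x)) * f2 (4 * x * (1 - x))
          + (1 - (4 * x * (1 - x))) * f3 (4 * x * (1 - x))))
    (a := fun x => (4 * x * (1 - x)) / 4)
    (b := fun x => (4 * x * (1 - x)) * (1 - 2 * x) / 8) ?_ ?_ ?_ ?_ ?_ ?_ ?_ ?_ ?_ ?_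
  · have a1 : AnalyticAt ℝ F0 0 := p2.analyticAt (by simp)
    have a2 : AnalyticAt ℝ f0 (4 * 0 * (1 - 0)) := p3.analyticAt (by simp)
    have a3 : AnalyticAt ℝ (fun x : ℝ => 4 * x * (1 - x)) 0 := by fun_prop
    exact (a1.pow 2).sub (AnalyticAt.comp (g := f0) (f := fun x : ℝ => 4 * x * (1 - x)) a2 a3)
  · simp [hF0, hf0, pS_zero, cc_zero]
  · fun_prop
  · simp
  · fun_prop
  · simp
  · filter_upwards [hU] with x hx
    obtain ⟨d, hd, e⟩ := p2.hasDerivAt (hw x hx).1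
    obtain ⟨d', hd', e'⟩ := comp p3 x hx
    rw [((hd.fun_pow 2).fun_sub hd').deriv]
    simp only [hF1, hf1, hF0]
    rw [← e]
    push_cast
    linear_combination -e'
  · filter_upwards [hU] with x hx
    obtain ⟨d, hd, e⟩ := p2.hasDerivAt (hw x hx).1
    obtain ⟨d1, hd1, e1⟩ := p2.tS.hasDerivAt (hw x hx).1
    obtain ⟨d', hd', e'⟩ := comp p3.tS x hx
    have o := ode2 (hw x hx).1
    rw [(((hd.const_mul 2).fun_mul ((hs1 x).fun_mul hd1)).fun_sub ((hs x).fun_mul hd')).deriv]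
    simp only [hF1, hf1, hF0, hf2]
    rw [← e1] at o
    rw [← e] at o ⊢
    linear_combination (-(1 - 2 * x)) * e' + 2 * pS (fun n => cc n ^ 2) x * (1 - x) * o
  · filter_upwards [hU] with x hx
    obtain ⟨d, hd, e⟩ := p2.hasDerivAt (hw x hx).1
    obtain ⟨d1, hd1, e1⟩ := p2.tS.hasDerivAt (hw x hx).1
    obtain ⟨d', hd', e'⟩ := comp p3.tS x hx
    obtain ⟨d2, hd2, e2⟩ := comp p3.tS.tS x hx
    have o := ode2 (hw x hx).1
    rw [((((((hs1 x).fun_mul hd1).fun_pow 2).const_mul 2).fun_add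
      (((hW x).mul_const (1 / 8)).fun_mul (hd.fun_pow 2))).fun_sub
      ((((hW x).mul_const (-1 / 2)).fun_mul hd').fun_add
        (((hW x).const_sub 1).fun_mul hd2))).deriv]
    simp only [hF1, hf1, hF0, hf2, hf3]
    rw [← e1] at o
    rw [← e] at o ⊢
    push_cast
    linear_combination 2 * x * (1 - x) * e' - (1 - 4 * x * (1 - x)) * e2 + 4 * (1 - x) ^ 2 * x * d * o
  · filter_upwards [hU] with x hx
    have o := ode3 (hw x hx).2
    simp only [← hf0, ← hf1, ← hf2, ← hf3] at o
    linear_combination (-(1 - 2 * x)) * o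

lemma continuousOn_f : ContinuousOn (pS fun n => cc n ^ 3) (Set.Icc (-1) 1) := by
  refine continuousOn_tsum (fun n => by fun_prop) summable_cc_cube fun n x hx => ?_
  rw [norm_mul, Real.norm_of_nonneg (pow_nonneg (cc_nonneg n) 3), norm_pow]
  exact mul_le_of_le_one_right (pow_nonneg (cc_nonneg n) 3)
    (pow_le_one₀ (norm_nonneg _) (abs_le.2 hx))

lemma clausen {x : ℝ} (hx : x ∈ Set.Icc (0:ℝ) (1 / 2)) :
    pS (fun n => cc n ^ 2) x ^ 2 = pS (fun n => cc n ^ 3) (4 * x * (1 - x)) := by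
  have p2 := polyBdd_cc_pow 2
  have p3 := polyBdd_cc_pow 3
  have h1 : Set.EqOn (fun x => pS (fun n => cc n ^ 2) x ^ 2)
      (fun x => pS (fun n => cc n ^ 3) (4 * x * (1 - x))) (Set.Ico 0 (1 / 2)) := by
    refine AnalyticOnNhd.eqOn_of_preconnected_of_eventuallyEq (𝕜 := ℝ) ?_ ?_
      isPreconnected_Ico (z₀ := 0) ⟨le_rfl, by norm_num⟩ ?_
    · intro x hx
      exact (p2.analyticAt (abs_lt.2 ⟨by linarith [hx.1], by linarith [hx.2]⟩)).pow 2
    · intro x hx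
      have a3 : AnalyticAt ℝ (fun x : ℝ => 4 * x * (1 - x)) x := by fun_prop
      refine AnalyticAt.comp (g := pS fun n => cc n ^ 3) (f := fun x : ℝ => 4 * x * (1 - x))
        (p3.analyticAt ?_) a3
      rw [abs_lt]
      constructor <;> nlinarith [hx.1, hx.2]
    · filter_upwards [clausen_near] with x hx
      linarith
  have h2 := h1.of_subset_closure (t := Set.Icc 0 (1 / 2)) ?_ ?_ Set.Ico_subset_Icc_self ?_
  · exact h2 hx
  · intro x hx
    exact ((p2.analyticAt (abs_lt.2 ⟨by linarith [hx.1], by linarith [hx.2]⟩)).pow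
      2).continuousAt.continuousWithinAt
  · refine continuousOn_f.comp (by fun_prop) ?_
    intro x hx
    constructor <;> nlinarith [hx.1, hx.2]
  · rw [closure_Ico (by norm_num)]

/-! integrals -/

lemma int_cos (n : ℕ) : ∫ t in (0:ℝ)..(π / 2), (Real.cos t ^ 2) ^ n = π / 2 * cc n := by
  simp_rw [← pow_mul]
  rw [EulerSine.integral_cos_pow_eq, integral_sin_pow_even, cc]
  ring

lemma int_sin (n : ℕ) : ∫ t in (0:ℝ)..(π / 2), (Real.sin t ^ 2) ^ n = π / 2 * cc n := by
  rw [← int_cos]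
  have := intervalIntegral.integral_comp_sub_left (a := 0) (b := π / 2)
    (fun t => (Real.cos t ^ 2) ^ n) (π / 2)
  simpa [Real.cos_pi_div_two_sub] using this

lemma termwise {b : ℕ → ℝ} (hb : ∀ n, 0 ≤ b n) {y g : ℝ → ℝ} (hy : Continuous y)
    (hy0 : ∀ t, 0 ≤ y t)
    (hA : ∀ n, ∫ t in (0:ℝ)..(π / 2), y t ^ n = π / 2 * cc n)
    (hs : Summable fun n => b n * cc n)
    (hg : ∀ t ∈ Set.Ioo 0 (π / 2), g t = pS b (y t)) :
    ∫ t in (0:ℝ)..(π / 2), g t = π / 2 * ∑' n, b n * cc n := by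
  have hpi : (0:ℝ) ≤ π / 2 := by positivity
  have hI : ∀ n, ∫ t in Set.Ioo 0 (π / 2), b n * y t ^ n = π / 2 * (b n * cc n) := by
    intro n
    rw [← integral_Ioc_eq_integral_Ioo, ← intervalIntegral.integral_of_le hpi,
      intervalIntegral.integral_const_mul, hA]
    ring
  rw [intervalIntegral.integral_of_le hpi, integral_Ioc_eq_integral_Ioo,
    setIntegral_congr_fun measurableSet_Ioo (fun t ht => hg t ht)]
  simp only [pS]
  rw [← integral_tsum_of_summable_integral_norm, ← tsum_mul_left]
  · exact tsum_congr hI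
  · intro n
    have : Continuous fun t => b n * y t ^ n := by fun_prop
    exact (this.integrableOn_Icc (a := 0) (b := π / 2)).mono_set Set.Ioo_subset_Icc_self
  · have : ∀ n t, ‖b n * y t ^ n‖ = b n * y t ^ n := fun n t =>
      Real.norm_of_nonneg (mul_nonneg (hb n) (pow_nonneg (hy0 t) n))
    simp only [this, hI]
    exact hs.mul_left _

lemma ellipticK_eq {k : ℝ} (hk : k ^ 2 < 1) :
    ellipticK k = π / 2 * pS (fun n => cc n ^ 2) (k ^ 2) := by
  have hka : |k ^ 2| < 1 := by rwa [abs_of_nonneg (sq_nonneg k)]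
  have e : ∀ n, cc n * (k ^ 2) ^ n * cc n = cc n ^ 2 * (k ^ 2) ^ n := fun n => by ring
  rw [ellipticK, termwise (b := fun n => cc n * (k ^ 2) ^ n) (y := fun t => Real.sin t ^ 2)
    (fun n => mul_nonneg (cc_nonneg n) (by positivity)) (by fun_prop) (fun t => sq_nonneg _)
    int_sin ?_ ?_]
  · simp only [e, pS]
  · simp only [e]
    exact (polyBdd_cc_pow 2).summable hka
  · intro t _
    have h1 := Real.sin_sq_le_one t
    rw [← pS_cc (by positivity) (by nlinarith [sq_nonneg k, sq_nonneg (Real.sin t)])]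
    exact tsum_congr fun n => by ring

theorem stmt_2 (θ : ℝ) (hθ : θ ∈ Set.Icc 0 (π/2)) :
    (ellipticK (Real.sin (θ/2)))^2
      = ∫ φ in (0:ℝ)..(π/2), ellipticK (Real.sin θ * Real.cos φ) := by
  obtain ⟨h0, h1⟩ := hθ
  have hc : 0 ≤ Real.cos θ := Real.cos_nonneg_of_mem_Icc ⟨by linarith, h1⟩
  have hd : Real.cos θ = 1 - 2 * Real.sin (θ / 2) ^ 2 := by
    have := Real.cos_two_mul (θ / 2)
    rw [show 2 * (θ / 2) = θ by ring] at this
    have h2 := Real.sin_sq_add_cos_sq (θ / 2)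
    linarith
  have hx : Real.sin (θ / 2) ^ 2 ∈ Set.Icc (0:ℝ) (1 / 2) := ⟨sq_nonneg _, by linarith⟩
  have hw : 4 * Real.sin (θ / 2) ^ 2 * (1 - Real.sin (θ / 2) ^ 2) = Real.sin θ ^ 2 := by
    rw [Real.sin_sq θ, hd]; ring
  rw [ellipticK_eq (by linarith [hx.2]), mul_pow, clausen hx, hw]
  have e : ∀ n, π / 2 * cc n ^ 2 * (Real.sin θ ^ 2) ^ n * cc n =
    π / 2 * (cc n ^ 3 * (Real.sin θ ^ 2) ^ n) := fun n => by ring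
  rw [termwise (b := fun n => π / 2 * cc n ^ 2 * (Real.sin θ ^ 2) ^ n)
    (y := fun t => Real.cos t ^ 2)
    (fun n => mul_nonneg (mul_nonneg (by positivity) (sq_nonneg _)) (by positivity))
    (by fun_prop) (fun t => sq_nonneg _) int_cos ?_ ?_]
  · simp only [e, pS]
    rw [tsum_mul_left]; ring
  · simp only [e]
    refine Summable.mul_left _ (Summable.of_nonneg_of_le
      (fun n => mul_nonneg (pow_nonneg (cc_nonneg n) 3) (by positivity)) (fun n => ?_)
      summable_cc_cube)
    exact mul_le_of_le_one_right (pow_nonneg (cc_nonneg n) 3)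
      (pow_le_one₀ (sq_nonneg _) (Real.sin_sq_le_one θ))
  · intro t ht
    have h3 : 0 < Real.sin t := Real.sin_pos_of_pos_of_lt_pi ht.1 (by linarith [ht.2, Real.pi_pos])
    have h4 := Real.sin_sq_add_cos_sq t
    have h5 := Real.sin_sq_le_one θ
    rw [ellipticK_eq, mul_pow]
    · simp only [pS]
      rw [← tsum_mul_left]
      exact tsum_congr fun n => by ring
    · rw [mul_pow]
      nlinarith [sq_nonneg (Real.cos t), pow_pos h3 2]
end

section
/- Recursion for generalized Clebsch–Gordan integrals: for all μ, ν ∈ ℂ, (μ+1)² [(μ+1)² − (2ν+1)²] T_{μ+1,ν} − μ² [μ² − (2ν+1)²] T_{μ−1,ν} = 4 (2μ+1) sin(μπ) sin(νπ) / π². -/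
open Real MeasureTheory intervalIntegral

/-- The generalized Clebsch–Gordan integral `T μ ν = ∫_{-1}^1 P_μ(x) P_ν(x) P_ν(-x) dx`. -/
noncomputable def T (μ ν : ℂ) : ℂ :=
  ∫ x in (-1:ℝ)..1, legendreP μ x * legendreP ν x * legendreP ν (-x)


noncomputable def legF (ν : ℂ) (t : ℝ) : ℂ :=
  Complex.cos ((2*ν+1) * (Real.arcsin t : ℝ)) / ((√(1 - t^2) : ℝ) : ℂ)

noncomputable def legS (ν : ℂ) (t : ℝ) : ℂ :=
  Complex.sin ((2*ν+1) * (Real.arcsin t : ℝ))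

noncomputable def legF' (ν : ℂ) (t : ℝ) : ℂ :=
  (-(2*ν+1) * legS ν t + t * legF ν t) / ((1 - t^2 : ℝ) : ℂ)

noncomputable def legJ (ν : ℂ) (k : ℝ) : ℂ :=
  ((2 / π : ℝ) : ℂ) * ∫ φ in (0:ℝ)..(π/2), legF ν (k * Real.sin φ)

lemma leg_aux {t : ℝ} (ht : t ∈ Set.Ioo (-1:ℝ) 1) : 0 < 1 - t^2 := by
  nlinarith [ht.1, ht.2]

lemma hasDerivAt_legS (ν : ℂ) {t : ℝ} (ht : t ∈ Set.Ioo (-1:ℝ) 1) :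
    HasDerivAt (legS ν) ((2*ν+1) * legF ν t) t := by
  have h1 := (Real.hasDerivAt_arcsin ht.1.ne' ht.2.ne).ofReal_comp
  have h2 := (Complex.hasDerivAt_sin _).scomp t (h1.const_mul (2*ν+1))
  refine h2.congr_deriv ?_
  unfold legF
  simp only [smul_eq_mul]
  push_cast
  ring

lemma hasDerivAt_legF (ν : ℂ) {t : ℝ} (ht : t ∈ Set.Ioo (-1:ℝ) 1) :
    HasDerivAt (legF ν) (legF' ν t) t := by
  have h0 := leg_aux ht
  have h1 := (Real.hasDerivAt_arcsin ht.1.ne' ht.2.ne).ofReal_comp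
  have h2 := (Complex.hasDerivAt_cos _).scomp t (h1.const_mul (2*ν+1))
  have hs : √(1 - t^2) ≠ 0 := (Real.sqrt_pos.2 h0).ne'
  have hs' : ((√(1 - t^2) : ℝ) : ℂ) ≠ 0 := by exact_mod_cast hs
  have h3 : HasDerivAt (fun t : ℝ => √(1 - t^2)) (-(2*t) / (2 * √(1 - t^2))) t := by
    have := ((hasDerivAt_pow 2 t).const_sub 1).sqrt h0.ne'
    simpa using this
  have h4 := h2.div h3.ofReal_comp hs'
  refine h4.congr_deriv ?_
  unfold legF' legF legS
  have hq : ((1 - t^2 : ℝ) : ℂ) = ((√(1 - t^2) : ℝ) : ℂ)^2 := by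
    rw [← Complex.ofReal_pow, Real.sq_sqrt h0.le]
  rw [hq]
  simp only [smul_eq_mul, Function.comp]
  push_cast
  field_simp
  ring

lemma leg_mem {k : ℝ} (hk : k ∈ Set.Ioo (-1:ℝ) 1) (φ : ℝ) :
    k * Real.sin φ ∈ Set.Ioo (-1:ℝ) 1 := by
  rw [Set.mem_Ioo, ← abs_lt] at *
  rw [abs_mul]
  calc |k| * |Real.sin φ| ≤ |k| * 1 := by gcongr; exact Real.abs_sin_le_one φ
    _ < 1 := by simpa using hk

lemma continuousOn_legF (ν : ℂ) : ContinuousOn (legF ν) (Set.Ioo (-1) 1) :=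
  fun _ ht => (hasDerivAt_legF ν ht).continuousAt.continuousWithinAt

lemma continuousOn_legS (ν : ℂ) : ContinuousOn (legS ν) (Set.Ioo (-1) 1) :=
  fun _ ht => (hasDerivAt_legS ν ht).continuousAt.continuousWithinAt

lemma continuousOn_legF' (ν : ℂ) : ContinuousOn (legF' ν) (Set.Ioo (-1) 1) := by
  unfold legF'
  refine ContinuousOn.div ?_ (by fun_prop) ?_
  · exact (continuousOn_const.mul (continuousOn_legS ν)).add
      ((by fun_prop : ContinuousOn (fun t : ℝ => (t:ℂ)) _).mul (continuousOn_legF ν))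
  · intro t ht
    exact_mod_cast (leg_aux ht).ne'

lemma continuous_comp_leg {f : ℝ → ℂ} (hf : ContinuousOn f (Set.Ioo (-1) 1))
    {k : ℝ} (hk : k ∈ Set.Ioo (-1:ℝ) 1) : Continuous (fun φ => f (k * Real.sin φ)) :=
  hf.comp_continuous (by fun_prop) (fun φ => leg_mem hk φ)

lemma hasDerivAt_legJ (ν : ℂ) {k : ℝ} (hk : k ∈ Set.Ioo (-1:ℝ) 1) :
    HasDerivAt (legJ ν)
      (((2 / π : ℝ) : ℂ) * ∫ φ in (0:ℝ)..(π/2), (Real.sin φ : ℂ) * legF' ν (k * Real.sin φ)) k := by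
  unfold legJ
  refine HasDerivAt.const_mul _ ?_
  obtain ⟨r, hr1, hr2⟩ := exists_between (abs_lt.2 hk)
  have hr0 : 0 < r := lt_of_le_of_lt (abs_nonneg k) hr1
  have hsub : Set.Icc (-r) r ⊆ Set.Ioo (-1:ℝ) 1 := fun x hx => ⟨by linarith [hx.1], by linarith [hx.2]⟩
  obtain ⟨C, hC⟩ := isCompact_Icc.exists_bound_of_continuousOn ((continuousOn_legF' ν).mono hsub)
  have hs : Set.Ioo (-r) r ∈ nhds k := Ioo_mem_nhds (abs_lt.1 hr1).1 (abs_lt.1 hr1).2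
  have hs2 : ∀ x ∈ Set.Ioo (-r) r, x ∈ Set.Ioo (-1:ℝ) 1 := fun x hx => hsub (Set.Ioo_subset_Icc_self hx)
  refine (intervalIntegral.hasDerivAt_integral_of_dominated_loc_of_deriv_le (bound := fun _ => C)
    (F := fun k φ => legF ν (k * Real.sin φ))
    (F' := fun k φ => (Real.sin φ : ℂ) * legF' ν (k * Real.sin φ)) hs ?_ ?_ ?_ ?_ ?_ ?_).2
  · filter_upwards [hs] with x hx
    exact (continuous_comp_leg (continuousOn_legF ν) (hs2 x hx)).aestronglyMeasurable
  · exact (continuous_comp_leg (continuousOn_legF ν) hk).intervalIntegrable _ _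
  · have := (continuous_comp_leg (continuousOn_legF' ν) hk)
    exact Continuous.aestronglyMeasurable (by fun_prop)
  · refine Filter.Eventually.of_forall fun φ _ x hx => ?_
    rw [norm_mul]
    have h1 : ‖(Real.sin φ : ℂ)‖ ≤ 1 := by
      rw [Complex.norm_real]; exact Real.abs_sin_le_one φ
    have h2 : x * Real.sin φ ∈ Set.Icc (-r) r := by
      rw [Set.mem_Icc, ← abs_le, abs_mul]
      calc |x| * |Real.sin φ| ≤ |x| * 1 := by gcongr; exact Real.abs_sin_le_one φ
        _ ≤ r := by simpa using (abs_lt.2 hx).le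
    have h3 := hC _ h2
    calc _ ≤ 1 * C := by gcongr
      _ = C := one_mul C
  · exact intervalIntegrable_const
  · refine Filter.Eventually.of_forall fun φ _ x hx => ?_
    have h1 := hasDerivAt_legF ν (leg_mem (hs2 x hx) φ)
    have h2 : HasDerivAt (fun x : ℝ => x * Real.sin φ) (Real.sin φ) x := by
      simpa using (hasDerivAt_id x).mul_const (Real.sin φ)
    have := h1.scomp x h2
    simpa [Function.comp_def] using this

lemma legF_pred (ν : ℂ) {t : ℝ} (ht : t ∈ Set.Ioo (-1:ℝ) 1) :
    legF (ν-1) t = (1 - 2*(t:ℂ)^2) * legF ν t + 2 * t * legS ν t := by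
  have h0 := leg_aux ht
  have hs' : ((√(1 - t^2) : ℝ) : ℂ) ≠ 0 := by exact_mod_cast (Real.sqrt_pos.2 h0).ne'
  have e1 : (2*(ν-1)+1) * ((Real.arcsin t : ℝ):ℂ) = (2*ν+1) * (Real.arcsin t : ℝ) - 2 * (Real.arcsin t : ℝ) := by ring
  have e2 : Complex.sin (Real.arcsin t : ℝ) = t := by
    rw [← Complex.ofReal_sin, Real.sin_arcsin ht.1.le ht.2.le]
  have e3 : Complex.cos (Real.arcsin t : ℝ) = (√(1 - t^2) : ℝ) := by
    rw [← Complex.ofReal_cos, Real.cos_arcsin]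
  have hq : ((√(1 - t^2) : ℝ) : ℂ)^2 = 1 - (t:ℂ)^2 := by
    rw [← Complex.ofReal_pow, Real.sq_sqrt h0.le]; push_cast; rfl
  unfold legF legS
  rw [e1, Complex.cos_sub, Complex.cos_two_mul, Complex.sin_two_mul, e2, e3, hq]
  field_simp
  ring

lemma legJ_ladder (ν : ℂ) {k : ℝ} (hk : k ∈ Set.Ioo (-1:ℝ) 1) :
    -(k * (1 - k^2) : ℂ) * (((2 / π : ℝ) : ℂ) * ∫ φ in (0:ℝ)..(π/2), (Real.sin φ : ℂ) * legF' ν (k * Real.sin φ))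
      = ν * (legJ (ν-1) k - (1 - 2*k^2) * legJ ν k) := by
  have cF := continuous_comp_leg (continuousOn_legF ν) hk
  have cG := continuous_comp_leg (continuousOn_legF (ν-1)) hk
  have cF' := continuous_comp_leg (continuousOn_legF' ν) hk
  have cS := continuous_comp_leg (continuousOn_legS ν) hk
  have key : ∫ φ in (0:ℝ)..(π/2), (-(k * (1 - k^2) : ℂ) * ((Real.sin φ : ℂ) * legF' ν (k * Real.sin φ))
      - ν * (legF (ν-1) (k * Real.sin φ) - (1 - 2*k^2) * legF ν (k * Real.sin φ))) = 0 := by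
    have hd : ∀ φ ∈ Set.uIcc (0:ℝ) (π/2), HasDerivAt
        (fun φ : ℝ => (k:ℂ) * (Real.cos φ : ℝ) * (((k * Real.sin φ : ℝ) : ℂ) * legF ν (k * Real.sin φ) - legS ν (k * Real.sin φ)))
        (-(k * (1 - k^2) : ℂ) * ((Real.sin φ : ℂ) * legF' ν (k * Real.sin φ))
      - ν * (legF (ν-1) (k * Real.sin φ) - (1 - 2*k^2) * legF ν (k * Real.sin φ))) φ := by
      intro φ _
      have hm := leg_mem hk φ
      have d1 : HasDerivAt (fun φ : ℝ => k * Real.sin φ) (k * Real.cos φ) φ := (Real.hasDerivAt_sin φ).const_mul k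
      have d2 := (hasDerivAt_legF ν hm).scomp φ d1
      have d3 := (hasDerivAt_legS ν hm).scomp φ d1
      have d4 := ((Real.hasDerivAt_cos φ).ofReal_comp).const_mul (k:ℂ)
      have d5 := d4.mul ((d1.ofReal_comp.mul d2).sub d3)
      refine d5.congr_deriv ?_
      rw [legF_pred ν hm]
      have h0 := leg_aux hm
      have hne : (1 - (k * Real.sin φ : ℂ)^2) ≠ 0 := by exact_mod_cast h0.ne'
      have hcs : ((Real.cos φ : ℝ) : ℂ)^2 = 1 - ((Real.sin φ : ℝ) : ℂ)^2 := by
        have := Real.sin_sq_add_cos_sq φ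
        rw [← Complex.ofReal_pow, ← Complex.ofReal_pow]
        have h : Real.cos φ ^ 2 = 1 - Real.sin φ ^ 2 := by linarith
        rw [h]; push_cast; rfl
      have hF : (1 - (k * Real.sin φ : ℂ)^2) * legF' ν (k * Real.sin φ)
        = -(2*ν+1) * legS ν (k * Real.sin φ) + (k * Real.sin φ : ℂ) * legF ν (k * Real.sin φ) := by
        unfold legF'
        rw [Complex.ofReal_sub, Complex.ofReal_pow, Complex.ofReal_mul, Complex.ofReal_one, mul_div_cancel₀ _ hne]
      simp only [Function.comp, Complex.real_smul, Complex.ofReal_mul, Complex.ofReal_neg,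
        Pi.mul_apply, Pi.sub_apply]
      generalize legF' ν (k * Real.sin φ) = X at *
      generalize legF ν (k * Real.sin φ) = Y at *
      generalize legS ν (k * Real.sin φ) = Z at *
      generalize ((Real.sin φ : ℝ) : ℂ) = s at *
      generalize ((Real.cos φ : ℝ) : ℂ) = c at *
      linear_combination ((k:ℂ)^2 * (Y + k*s*X - (2*ν+1)*Y)) * hcs + ((k:ℂ)*s) * hF
    have := intervalIntegral.integral_eq_sub_of_hasDerivAt hd
      (Continuous.intervalIntegrable (by fun_prop) _ _)
    rw [this]
    simp [legS]
  rw [intervalIntegral.integral_sub (Continuous.intervalIntegrable (by fun_prop) _ _)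
    (Continuous.intervalIntegrable (by fun_prop) _ _),
    intervalIntegral.integral_const_mul, intervalIntegral.integral_const_mul,
    intervalIntegral.integral_sub (Continuous.intervalIntegrable (by fun_prop) _ _)
    (Continuous.intervalIntegrable (by fun_prop) _ _),
    intervalIntegral.integral_const_mul] at key
  unfold legJ
  linear_combination ((2 / π : ℝ) : ℂ) * key

lemma legJ_zero (ν : ℂ) : legJ ν 0 = 1 := by
  have : (π:ℂ) ≠ 0 := by exact_mod_cast Real.pi_ne_zero
  simp [legJ, legF]

lemma legJ_symm (ν : ℂ) (k : ℝ) : legJ (-1-ν) k = legJ ν k := by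
  unfold legJ legF
  congr 2
  ext φ
  rw [← Complex.cos_neg]
  congr 2
  ring

lemma leg_k {x : ℝ} (hx : x ∈ Set.Ioo (-1:ℝ) 1) :
    0 < √((1-x)/2) ∧ √((1-x)/2) < 1 ∧ √((1-x)/2)^2 = (1-x)/2 := by
  refine ⟨Real.sqrt_pos.2 (by linarith [hx.2]), ?_, Real.sq_sqrt (by linarith [hx.2])⟩
  rw [Real.sqrt_lt' one_pos]; linarith [hx.1]

lemma legendreP_eq (ν : ℂ) {x : ℝ} (hx : x ∈ Set.Ioo (-1:ℝ) 1) :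
    legendreP ν x = legJ ν (√((1-x)/2)) := by
  obtain ⟨hk0, hk1, hk2⟩ := leg_k hx
  set k := √((1-x)/2) with hk
  have hxk : x = 1 - 2*k^2 := by linarith
  have hkm : k ∈ Set.Ioo (-1:ℝ) 1 := ⟨by linarith, hk1⟩
  have hpi := Real.pi_pos
  have has0 : 0 < Real.arcsin k := Real.arcsin_pos.2 hk0
  have has1 : Real.arcsin k < π/2 := Real.arcsin_lt_pi_div_two.2 hk1
  have hcos2 : ∀ t ∈ Set.Ioo (-1:ℝ) 1, Real.cos (2 * Real.arcsin t) = 1 - 2*t^2 := by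
    intro t ht
    rw [Real.cos_two_mul, Real.cos_arcsin, Real.sq_sqrt (leg_aux ht).le]; ring
  have harc : Real.arccos x = 2 * Real.arcsin k := by
    rw [hxk, ← hcos2 k hkm, Real.arccos_cos (by linarith) (by linarith)]
  unfold legendreP legJ
  rw [if_neg hx.2.ne, harc]
  congr 1
  rw [intervalIntegral.integral_of_le (by linarith), intervalIntegral.integral_of_le (by linarith),
    MeasureTheory.integral_Ioc_eq_integral_Ioo, MeasureTheory.integral_Ioc_eq_integral_Ioo]
  have himg : (fun φ => 2 * Real.arcsin (k * Real.sin φ)) '' Set.Ioo 0 (π/2) = Set.Ioo 0 (2 * Real.arcsin k) := by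
    ext β
    constructor
    · rintro ⟨φ, ⟨h1, h2⟩, rfl⟩
      have hs0 : 0 < Real.sin φ := Real.sin_pos_of_pos_of_lt_pi h1 (by linarith)
      have hs1 : Real.sin φ < 1 := by
        rw [← Real.sin_pi_div_two]
        exact Real.sin_lt_sin_of_lt_of_le_pi_div_two (by linarith) le_rfl h2
      have a1 : 0 < Real.arcsin (k * Real.sin φ) := Real.arcsin_pos.2 (by positivity)
      have a2 : Real.arcsin (k * Real.sin φ) < Real.arcsin k :=
        Real.arcsin_lt_arcsin (by nlinarith) (by nlinarith) hk1.le
      exact ⟨by simpa using a1, by simpa using a2⟩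
    · rintro ⟨h1, h2⟩
      have b0 : 0 < Real.sin (β/2) := Real.sin_pos_of_pos_of_lt_pi (by linarith) (by linarith)
      have b1 : Real.sin (β/2) < k := by
        have : Real.sin (β/2) < Real.sin (Real.arcsin k) :=
          Real.sin_lt_sin_of_lt_of_le_pi_div_two (by linarith) has1.le (by linarith)
        rwa [Real.sin_arcsin hkm.1.le hkm.2.le] at this
      have b2 : Real.sin (β/2) / k < 1 := by rw [div_lt_one hk0]; exact b1
      have b3 : 0 < Real.sin (β/2) / k := by positivity
      refine ⟨Real.arcsin (Real.sin (β/2) / k), ⟨Real.arcsin_pos.2 b3, Real.arcsin_lt_pi_div_two.2 b2⟩, ?_⟩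
      simp only
      rw [Real.sin_arcsin (by linarith) b2.le, mul_div_cancel₀ _ hk0.ne', Real.arcsin_sin (by linarith) (by linarith)]
      ring
  rw [← himg, MeasureTheory.integral_image_eq_integral_deriv_smul_of_monotoneOn
    (f' := fun φ => 2 * (1 / √(1 - (k * Real.sin φ)^2) * (k * Real.cos φ))) measurableSet_Ioo]
  · refine MeasureTheory.setIntegral_congr_fun measurableSet_Ioo ?_
    intro φ hφ
    have hm := leg_mem hkm φ
    have hc : 0 < Real.cos φ := Real.cos_pos_of_mem_Ioo ⟨by linarith [hφ.1], hφ.2⟩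
    have e1 : √(2 * (Real.cos (2 * Real.arcsin (k * Real.sin φ)) - x)) = 2 * (k * Real.cos φ) := by
      rw [hcos2 _ hm, hxk]
      have : 2 * (1 - 2 * (k * Real.sin φ)^2 - (1 - 2*k^2)) = (2 * (k * Real.cos φ))^2 := by
        have := Real.sin_sq_add_cos_sq φ
        have h : Real.cos φ ^ 2 = 1 - Real.sin φ ^ 2 := by linarith
        linear_combination (-4*k^2) * h
      rw [this, Real.sqrt_sq (by positivity)]
    have e2 : (2*ν+1) * ((2 * Real.arcsin (k * Real.sin φ) : ℝ) : ℂ) / 2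
      = (2*ν+1) * ((Real.arcsin (k * Real.sin φ) : ℝ) : ℂ) := by push_cast; ring
    simp only []
    rw [e1, e2]
    unfold legF
    have n1 : (k:ℂ) ≠ 0 := by exact_mod_cast hk0.ne'
    have n2 : ((Real.cos φ : ℝ):ℂ) ≠ 0 := by exact_mod_cast hc.ne'
    rw [Complex.real_smul]
    simp only [Complex.ofReal_mul, Complex.ofReal_div, Complex.ofReal_one, Complex.ofReal_ofNat]
    field_simp
  · intro φ hφ
    have hm := leg_mem hkm φ
    have d1 : HasDerivAt (fun φ : ℝ => k * Real.sin φ) (k * Real.cos φ) φ := (Real.hasDerivAt_sin φ).const_mul k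
    exact (((Real.hasDerivAt_arcsin hm.1.ne' hm.2.ne).comp φ d1).const_mul 2).hasDerivWithinAt
  · intro a ha b hb hab
    have : Real.sin a ≤ Real.sin b := Real.sin_le_sin_of_le_of_le_pi_div_two (by linarith [ha.1]) hb.2.le hab
    have := Real.monotone_arcsin (mul_le_mul_of_nonneg_left this hk0.le)
    simpa using this

lemma legJ_bound (ν : ℂ) : ∃ C : ℝ, 0 ≤ C ∧ ∀ k ∈ Set.Ico (0:ℝ) 1, ‖legJ ν k‖ ≤ C * (1 - k^2)^(-(1/4) : ℝ) := by
  have hpi := Real.pi_pos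
  obtain ⟨M, hM⟩ := (isCompact_Icc (a := -(π/2)) (b := π/2)).exists_bound_of_continuousOn
    (f := fun a : ℝ => Complex.cos ((2*ν+1) * (a:ℂ))) (by fun_prop)
  have hM0 : 0 ≤ M := le_trans (norm_nonneg _) (hM 0 ⟨by linarith, by linarith⟩)
  have hIntegrable : IntervalIntegrable (fun φ : ℝ => (1 - 2/π*φ)^(-(1/2):ℝ)) volume 0 (π/2) := by
    have h := (intervalIntegral.intervalIntegrable_rpow' (a := 1) (b := 0) (r := -(1/2)) (by norm_num))
    have h2 := (h.comp_sub_left 1).comp_mul_left (c := 2/π)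
    refine h2.congr_ae ?_ |>.mono_set ?_
    · exact Filter.EventuallyEq.rfl
    · simp
  refine ⟨2/π * (M * ∫ φ in (0:ℝ)..(π/2), (1 - 2/π*φ)^(-(1/2):ℝ)), ?_, ?_⟩
  · refine mul_nonneg (by positivity) (mul_nonneg hM0 (intervalIntegral.integral_nonneg (by linarith) ?_))
    intro φ hφ
    apply Real.rpow_nonneg
    have : 2/π*φ ≤ 2/π*(π/2) := by gcongr; exact hφ.2
    have e : 2/π*(π/2) = 1 := by field_simp
    linarith
  intro k hk
  have hkm : k ∈ Set.Ioo (-1:ℝ) 1 := ⟨by linarith [hk.1], hk.2⟩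
  have hk2 := leg_aux hkm
  unfold legJ
  rw [norm_mul, Complex.norm_real, Real.norm_of_nonneg (by positivity), mul_assoc]
  refine mul_le_mul_of_nonneg_left ?_ (by positivity)
  have : M * (∫ φ in (0:ℝ)..(π/2), (1 - 2/π*φ)^(-(1/2):ℝ)) * (1-k^2)^(-(1/4):ℝ)
     = ∫ φ in (0:ℝ)..(π/2), (M * (1-k^2)^(-(1/4):ℝ)) * (1 - 2/π*φ)^(-(1/2):ℝ) := by
    rw [intervalIntegral.integral_const_mul]; ring
  rw [this]
  refine intervalIntegral.norm_integral_le_of_norm_le (by linarith) ?_ (hIntegrable.const_mul _)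
  have hne : ∀ᵐ φ : ℝ ∂volume, φ ≠ π/2 := by
    simp [MeasureTheory.ae_iff]
  filter_upwards [hne] with φ hφ hφ2
  have hlt : φ < π/2 := lt_of_le_of_ne hφ2.2 hφ
  have hy : 0 < 1 - 2/π*φ := by
    have : 2/π*φ < 2/π*(π/2) := by gcongr
    have e : 2/π*(π/2) = 1 := by field_simp
    linarith
  have hc := Real.one_sub_mul_le_cos hφ2.1.le hφ2.2
  have hm := leg_mem hkm φ
  have hq := leg_aux hm
  have hsc := Real.sin_sq_add_cos_sq φ
  have q1 : 1 - k^2 ≤ 1 - (k * Real.sin φ)^2 := by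
    rw [mul_pow]; nlinarith [sq_nonneg k, sq_nonneg (Real.cos φ)]
  have q2 : (1 - 2/π*φ)^2 ≤ 1 - (k * Real.sin φ)^2 := by
    have : (1 - 2/π*φ)^2 ≤ Real.cos φ ^2 := by gcongr
    rw [mul_pow]; nlinarith [sq_nonneg (Real.sin φ)]
  unfold legF
  rw [norm_div, Complex.norm_real, Real.norm_of_nonneg (Real.sqrt_nonneg _), div_eq_mul_inv, mul_assoc]
  refine mul_le_mul (hM _ ⟨Real.neg_pi_div_two_le_arcsin _, Real.arcsin_le_pi_div_two _⟩) ?_ (by positivity) hM0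
  generalize 1 - (k * Real.sin φ)^2 = q at *
  have e1 : (√q)⁻¹ = q^(-(1/4):ℝ) * q^(-(1/4):ℝ) := by
    rw [← Real.rpow_add hq, Real.sqrt_eq_rpow, ← Real.rpow_neg hq.le]; norm_num
  have e2 : (1 - 2/π*φ)^(-(1/2):ℝ) = ((1 - 2/π*φ)^2)^(-(1/4):ℝ) := by
    rw [← Real.rpow_natCast, ← Real.rpow_mul hy.le]; norm_num
  rw [e1, e2]
  refine mul_le_mul ?_ ?_ (by positivity) (by positivity)
  · exact Real.rpow_le_rpow_of_nonpos hk2 q1 (by norm_num)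
  · exact Real.rpow_le_rpow_of_nonpos (by positivity) q2 (by norm_num)

lemma legJ_add (ν : ℂ) {k : ℝ} (hk : k ∈ Set.Ioo (-1:ℝ) 1) :
    legJ (ν-1) k + legJ ν k = ((2 / π : ℝ) : ℂ) *
      ∫ φ in (0:ℝ)..(π/2), 2 * Complex.cos (2 * ν * (Real.arcsin (k * Real.sin φ) : ℝ)) := by
  have cF := continuous_comp_leg (continuousOn_legF ν) hk
  have cG := continuous_comp_leg (continuousOn_legF (ν-1)) hk
  unfold legJ
  rw [← mul_add, ← intervalIntegral.integral_add (cG.intervalIntegrable _ _) (cF.intervalIntegrable _ _)]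
  congr 1
  refine intervalIntegral.integral_congr fun φ _ => ?_
  have hm := leg_mem hk φ
  have h0 := leg_aux hm
  generalize k * Real.sin φ = t at *
  have hs' : ((√(1 - t^2) : ℝ) : ℂ) ≠ 0 := by exact_mod_cast (Real.sqrt_pos.2 h0).ne'
  have e1 : (2*(ν-1)+1) * ((Real.arcsin t : ℝ):ℂ) = 2 * ν * (Real.arcsin t : ℝ) - (Real.arcsin t : ℝ) := by ring
  have e2 : (2*ν+1) * ((Real.arcsin t : ℝ):ℂ) = 2 * ν * (Real.arcsin t : ℝ) + (Real.arcsin t : ℝ) := by ring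
  have e3 : Complex.cos (Real.arcsin t : ℝ) = (√(1 - t^2) : ℝ) := by
    rw [← Complex.ofReal_cos, Real.cos_arcsin]
  unfold legF
  rw [e1, e2, Complex.cos_sub, Complex.cos_add, e3]
  field_simp
  ring

lemma legJ_add_lim (ν : ℂ) : Filter.Tendsto (fun k => ν * (legJ (ν-1) k + legJ ν k)) (nhdsWithin 1 (Set.Iio 1))
    (nhds (2 * Complex.sin (ν * π) / π)) := by
  have hpi := Real.pi_pos
  have hpc : (π:ℂ) ≠ 0 := by exact_mod_cast Real.pi_ne_zero
  have hc : Continuous (fun k : ℝ => ν * (((2 / π : ℝ) : ℂ) *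
      ∫ φ in (0:ℝ)..(π/2), 2 * Complex.cos (2 * ν * (Real.arcsin (k * Real.sin φ) : ℝ)))) := by
    refine continuous_const.mul (continuous_const.mul ?_)
    refine intervalIntegral.continuous_parametric_intervalIntegral_of_continuous' ?_ _ _
    have : Continuous Real.arcsin := Real.continuous_arcsin
    unfold Function.uncurry
    fun_prop
  have h1 := (hc.tendsto 1).mono_left (nhdsWithin_le_nhds (s := Set.Iio 1))
  have hv : ν * (((2 / π : ℝ) : ℂ) *
      ∫ φ in (0:ℝ)..(π/2), 2 * Complex.cos (2 * ν * (Real.arcsin (1 * Real.sin φ) : ℝ))) = 2 * Complex.sin (ν * π) / π := by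
    have : ∫ φ in (0:ℝ)..(π/2), 2 * Complex.cos (2 * ν * (Real.arcsin (1 * Real.sin φ) : ℝ))
       = ∫ φ in (0:ℝ)..(π/2), 2 * Complex.cos (2 * ν * (φ:ℂ)) := by
      refine intervalIntegral.integral_congr fun φ hφ => ?_
      rw [Set.uIcc_of_le (by linarith)] at hφ
      rw [one_mul, Real.arcsin_sin (by linarith [hφ.1]) hφ.2]
    rw [this]
    by_cases hν : ν = 0
    · simp [hν]
    · rw [intervalIntegral.integral_const_mul, integral_cos_mul_complex (mul_ne_zero two_ne_zero hν)]
      have : 2 * ν * ((π/2 : ℝ) : ℂ) = ν * π := by push_cast; ring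
      rw [this]
      push_cast
      simp
      field_simp
  rw [hv] at h1
  refine h1.congr' ?_
  filter_upwards [Ioo_mem_nhdsLT (show (-1:ℝ) < 1 by norm_num)] with k hk
  rw [legJ_add ν hk]

noncomputable def legD (ν : ℂ) (x : ℝ) : ℂ := ν * (legendreP (ν-1) x - x * legendreP ν x)

lemma hasDerivAt_legendreP (ν : ℂ) {x : ℝ} (hx : x ∈ Set.Ioo (-1:ℝ) 1) :
    HasDerivAt (legendreP ν) (legD ν x / (1 - (x:ℂ)^2)) x := by
  obtain ⟨hk0, hk1, hk2⟩ := leg_k hx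
  have hkm : √((1-x)/2) ∈ Set.Ioo (-1:ℝ) 1 := ⟨by linarith, hk1⟩
  have d1 : HasDerivAt (fun x : ℝ => √((1-x)/2)) (-(1/2) / (2 * √((1-x)/2))) x := by
    have h : HasDerivAt (fun x : ℝ => (1-x)/2) (-(1/2)) x := by
      have := ((hasDerivAt_id x).const_sub 1).div_const 2
      refine this.congr_deriv (by norm_num)
    exact h.sqrt (by linarith [hx.2])
  have d2 := (hasDerivAt_legJ ν hkm).scomp x d1
  have hev : legendreP ν =ᶠ[nhds x] (legJ ν ∘ fun x : ℝ => √((1-x)/2)) := by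
    filter_upwards [Ioo_mem_nhds hx.1 hx.2] with y hy
    exact legendreP_eq ν hy
  refine (d2.congr_of_eventuallyEq hev).congr_deriv ?_
  have hl := legJ_ladder ν hkm
  unfold legD
  rw [legendreP_eq _ hx, legendreP_eq _ hx]
  have hxk : x = 1 - 2*√((1-x)/2)^2 := by linarith
  have hxc : (x:ℂ) = 1 - 2*(√((1-x)/2) : ℂ)^2 := by
    conv_lhs => rw [hxk]
    push_cast; ring
  have hkne : ((√((1-x)/2) : ℝ):ℂ) ≠ 0 := by exact_mod_cast hk0.ne'
  have hk1ne : (1 - (√((1-x)/2) : ℂ)^2) ≠ 0 := by exact_mod_cast (leg_aux hkm).ne'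
  rw [Complex.real_smul]
  have hcoef : (1 - (x:ℂ)^2) = 4 * (√((1-x)/2) : ℂ)^2 * (1 - (√((1-x)/2) : ℂ)^2) := by rw [hxc]; ring
  rw [hcoef, show ν * (legJ (ν-1) √((1-x)/2) - x * legJ ν √((1-x)/2)) = ν * (legJ (ν-1) √((1-x)/2) - (1 - 2*(√((1-x)/2) : ℂ)^2) * legJ ν √((1-x)/2)) by rw [← hxc], ← hl]
  generalize (((2 / π : ℝ) : ℂ) * ∫ φ in (0:ℝ)..(π/2), (Real.sin φ : ℂ) * legF' ν (√((1-x)/2) * Real.sin φ)) = X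
  generalize √((1-x)/2) = k at *
  push_cast
  field_simp
  ring

lemma legendreP_symm (ν : ℂ) (x : ℝ) : legendreP (-1-ν) x = legendreP ν x := by
  unfold legendreP
  congr 2
  refine intervalIntegral.integral_congr fun φ _ => ?_
  rw [← Complex.cos_neg]
  congr 2
  ring

/-- second ladder -/
lemma legD_eq (ν : ℂ) {x : ℝ} (hx : x ∈ Set.Ioo (-1:ℝ) 1) :
    legD ν x = (ν+1) * (x * legendreP ν x - legendreP (ν+1) x) := by
  have h1 := hasDerivAt_legendreP ν hx
  have h2 := hasDerivAt_legendreP (-1-ν) hx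
  have e : legendreP (-1-ν) = legendreP ν := funext (legendreP_symm ν)
  rw [e] at h2
  have h3 := h1.unique h2
  have hne : (1 - (x:ℂ)^2) ≠ 0 := by exact_mod_cast (leg_aux hx).ne'
  rw [div_left_inj' hne] at h3
  rw [h3]
  unfold legD
  rw [legendreP_symm, show -1 - ν - 1 = -1 - (ν+1) by ring, legendreP_symm]
  ring

lemma hasDerivAt_legD (ν : ℂ) {x : ℝ} (hx : x ∈ Set.Ioo (-1:ℝ) 1) :
    HasDerivAt (legD ν) (-(ν*(ν+1)) * legendreP ν x) x := by
  have hne : (1 - (x:ℂ)^2) ≠ 0 := by exact_mod_cast (leg_aux hx).ne'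
  have h1 := hasDerivAt_legendreP ν hx
  have h2 := hasDerivAt_legendreP (ν-1) hx
  have h3 := ((h2.sub ((hasDerivAt_id x).ofReal_comp.mul h1))).const_mul ν
  refine h3.congr_deriv ?_
  rw [legD_eq (ν-1) hx]
  unfold legD
  rw [show ν - 1 + 1 = ν by ring]
  simp only [id, Complex.ofReal_one]
  field_simp
  ring

noncomputable def legB (μ ν : ℂ) (x : ℝ) : ℂ :=
  -2 * legendreP μ x * legD ν x * legD ν (-x)
  + (2*(ν*(ν+1)) - μ*(μ+1)) * (1 - (x:ℂ)^2) * legendreP μ x * legendreP ν x * legendreP ν (-x)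
  - legD μ x * legD ν x * legendreP ν (-x)
  + legD μ x * legendreP ν x * legD ν (-x)

lemma hasDerivAt_legB (μ ν : ℂ) {x : ℝ} (hx : x ∈ Set.Ioo (-1:ℝ) 1) :
    HasDerivAt (fun x => (2*μ+1) * legB μ ν x)
      ((μ+1)^2 * ((μ+1)^2 - (2*ν+1)^2) * (legendreP (μ+1) x * legendreP ν x * legendreP ν (-x))
      - μ^2 * (μ^2 - (2*ν+1)^2) * (legendreP (μ-1) x * legendreP ν x * legendreP ν (-x))) x := by
  have hne : (1 - (x:ℂ)^2) ≠ 0 := by exact_mod_cast (leg_aux hx).ne'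
  have hx' : -x ∈ Set.Ioo (-1:ℝ) 1 := ⟨by linarith [hx.2], by linarith [hx.1]⟩
  have g := hasDerivAt_legendreP μ hx
  have gD := hasDerivAt_legD μ hx
  have u := hasDerivAt_legendreP ν hx
  have uD := hasDerivAt_legD ν hx
  have v := (hasDerivAt_legendreP ν hx').scomp x (hasDerivAt_neg x)
  have vD := (hasDerivAt_legD ν hx').scomp x (hasDerivAt_neg x)
  have q := (((hasDerivAt_id x).ofReal_comp.pow 2).const_sub 1).const_mul (2*(ν*(ν+1)) - μ*(μ+1))
  have tot := ((((((g.const_mul (-2)).mul uD).mul vD).add (((q.mul g).mul u).mul v)).sub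
    ((gD.mul uD).mul v)).add ((gD.mul u).mul vD)).const_mul (2*μ+1)
  refine tot.congr_deriv ?_
  have e1 : (μ+1) * legendreP (μ+1) x = (μ+1) * x * legendreP μ x - legD μ x := by
    rw [legD_eq μ hx]; ring
  have e2 : μ * legendreP (μ-1) x = legD μ x + μ * x * legendreP μ x := by
    unfold legD; ring
  have e3 : (μ+1)^2 * ((μ+1)^2 - (2*ν+1)^2) * (legendreP (μ+1) x * legendreP ν x * legendreP ν (-x))
      - μ^2 * (μ^2 - (2*ν+1)^2) * (legendreP (μ-1) x * legendreP ν x * legendreP ν (-x))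
      = legendreP ν x * legendreP ν (-x) * ((μ+1) * ((μ+1)^2 - (2*ν+1)^2) * ((μ+1) * x * legendreP μ x - legD μ x)
        - μ * (μ^2 - (2*ν+1)^2) * (legD μ x + μ * x * legendreP μ x)) := by
    rw [← e1, ← e2]; ring
  rw [e3]
  simp only [Function.comp, Pi.mul_apply, Pi.pow_apply, id, Complex.ofReal_one, Complex.ofReal_neg,
    neg_smul, one_smul, neg_sq]
  generalize legD μ x = a
  generalize legD ν x = b
  generalize legD ν (-x) = c
  generalize legendreP μ x = A
  generalize legendreP ν x = B
  generalize legendreP ν (-x) = D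
  push_cast
  field_simp
  ring

lemma legendreP_bound (ν : ℂ) : ∃ C : ℝ, 0 ≤ C ∧ ∀ x ∈ Set.Ioo (-1:ℝ) 1,
    ‖legendreP ν x‖ ≤ C * ((1+x)/2)^(-(1/4) : ℝ) := by
  obtain ⟨C, hC0, hC⟩ := legJ_bound ν
  refine ⟨C, hC0, fun x hx => ?_⟩
  obtain ⟨hk0, hk1, hk2⟩ := leg_k hx
  have := hC _ ⟨hk0.le, hk1⟩
  rw [legendreP_eq ν hx]
  rwa [hk2, show 1 - (1-x)/2 = (1+x)/2 by ring] at this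

lemma leg_tend_zero {f : ℝ → ℂ} {p : ℝ} (hp : 0 < p)
    (hf : f =O[nhdsWithin 1 (Set.Iio 1)] (fun y : ℝ => ((1-y)/2)^p)) :
    Filter.Tendsto f (nhdsWithin 1 (Set.Iio 1)) (nhds 0) := by
  refine hf.trans_tendsto ?_
  have h : Continuous (fun y : ℝ => ((1-y)/2)^p) :=
    Continuous.rpow_const (by fun_prop) (fun _ => Or.inr hp.le)
  have h2 := (h.tendsto 1).mono_left (nhdsWithin_le_nhds (s := Set.Iio 1))
  simpa [Real.zero_rpow hp.ne'] using h2

lemma leg_bigO_mul {f g : ℝ → ℂ} {p q r : ℝ} (hr : p + q = r)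
    (hf : f =O[nhdsWithin 1 (Set.Iio 1)] (fun y : ℝ => ((1-y)/2)^p))
    (hg : g =O[nhdsWithin 1 (Set.Iio 1)] (fun y : ℝ => ((1-y)/2)^q)) :
    (fun y => f y * g y) =O[nhdsWithin 1 (Set.Iio 1)] (fun y : ℝ => ((1-y)/2)^r) := by
  refine (hf.mul hg).congr' Filter.EventuallyEq.rfl ?_
  filter_upwards [self_mem_nhdsWithin] with y hy
  have : 0 < (1-y)/2 := by have : y < 1 := hy; linarith
  rw [← hr, Real.rpow_add this]

lemma leg_bigO_neg (ν : ℂ) : (fun y => legendreP ν (-y)) =O[nhdsWithin 1 (Set.Iio 1)]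
    (fun y : ℝ => ((1-y)/2)^(-(1/4):ℝ)) := by
  obtain ⟨C, hC0, hC⟩ := legendreP_bound ν
  refine Asymptotics.IsBigO.of_bound C ?_
  filter_upwards [Ioo_mem_nhdsLT (show (-1:ℝ) < 1 by norm_num)] with y hy
  have h := hC (-y) ⟨by linarith [hy.2], by linarith [hy.1]⟩
  have : 0 < (1-y)/2 := by linarith [hy.2]
  rwa [Real.norm_of_nonneg (by positivity), show (1-y)/2 = (1 + -y)/2 by ring]

lemma leg_bigO_one_sub : (fun y : ℝ => (1 - (y:ℂ))) =O[nhdsWithin 1 (Set.Iio 1)]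
    (fun y : ℝ => ((1-y)/2)^(1:ℝ)) := by
  refine Asymptotics.IsBigO.of_bound 2 ?_
  filter_upwards [self_mem_nhdsWithin] with y hy
  have : 0 < 1-y := by have : y < 1 := hy; linarith
  rw [Real.rpow_one, Real.norm_of_nonneg (by positivity), ← Complex.ofReal_one, ← Complex.ofReal_sub,
    Complex.norm_real, Real.norm_of_nonneg this.le]
  linarith

lemma leg_bigO_one (ν : ℂ) : (fun y => legendreP ν y - 1) =O[nhdsWithin 1 (Set.Iio 1)]
    (fun y : ℝ => ((1-y)/2)^(1/2:ℝ)) := by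
  have h0 := (hasDerivAt_legJ ν (k := 0) (by norm_num)).isBigO_sub
  have ht : Filter.Tendsto (fun y : ℝ => √((1-y)/2)) (nhdsWithin 1 (Set.Iio 1)) (nhds 0) := by
    have hc : Continuous (fun y : ℝ => √((1-y)/2)) := by fun_prop
    simpa using (hc.tendsto 1).mono_left (nhdsWithin_le_nhds (s := Set.Iio 1))
  have h1 := h0.comp_tendsto ht
  refine h1.congr' ?_ ?_
  · filter_upwards [Ioo_mem_nhdsLT (show (-1:ℝ) < 1 by norm_num)] with y hy
    simp only [Function.comp]
    rw [legendreP_eq ν hy, legJ_zero]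
  · filter_upwards with y
    simp [Real.sqrt_eq_rpow]

lemma leg_tend_one (ν : ℂ) : Filter.Tendsto (legendreP ν) (nhdsWithin 1 (Set.Iio 1)) (nhds 1) := by
  have := (leg_tend_zero (by norm_num) (leg_bigO_one ν)).add_const 1
  simpa using this

lemma leg_cast_tend : Filter.Tendsto (fun y : ℝ => (y:ℂ)) (nhdsWithin 1 (Set.Iio 1)) (nhds 1) := by
  have := (Complex.continuous_ofReal.tendsto 1).mono_left (nhdsWithin_le_nhds (s := Set.Iio 1))
  simpa using this

lemma legD_bigO (ν : ℂ) : (legD ν) =O[nhdsWithin 1 (Set.Iio 1)]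
    (fun y : ℝ => ((1-y)/2)^(1/2:ℝ)) := by
  have h1 := leg_bigO_one (ν-1)
  have h2 := leg_cast_tend.isBigO_one ℝ |>.mul (leg_bigO_one ν)
  have h3 : (fun y : ℝ => (1 - (y:ℂ))) =O[nhdsWithin 1 (Set.Iio 1)]
      (fun y : ℝ => ((1-y)/2)^(1/2:ℝ)) := by
    refine leg_bigO_one_sub.trans (Asymptotics.IsBigO.of_bound 1 ?_)
    filter_upwards [Ioo_mem_nhdsLT (show (-1:ℝ) < 1 by norm_num)] with y hy
    have : 0 < (1-y)/2 := by linarith [hy.2]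
    rw [Real.norm_of_nonneg (by positivity), Real.norm_of_nonneg (by positivity), one_mul]
    exact Real.rpow_le_rpow_of_exponent_ge this (by linarith [hy.1]) (by norm_num)
  simp only [one_mul] at h2
  have h4 := ((h1.add h3).sub h2).const_mul_left ν
  refine h4.congr_left fun y => ?_
  unfold legD
  ring

lemma legD_tend_zero (ν : ℂ) : Filter.Tendsto (legD ν) (nhdsWithin 1 (Set.Iio 1)) (nhds 0) :=
  leg_tend_zero (by norm_num) (legD_bigO ν)

lemma leg_P_D (μ ν : ℂ) : Filter.Tendsto (fun y => legendreP μ (-y) * legD ν y)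
    (nhdsWithin 1 (Set.Iio 1)) (nhds 0) :=
  leg_tend_zero (p := 1/4) (by norm_num) (leg_bigO_mul (by norm_num) (leg_bigO_neg μ) (legD_bigO ν))

lemma leg_one_P (ν : ℂ) : Filter.Tendsto (fun y : ℝ => (1 - (y:ℂ)) * legendreP ν (-y))
    (nhdsWithin 1 (Set.Iio 1)) (nhds 0) :=
  leg_tend_zero (p := 3/4) (by norm_num) (leg_bigO_mul (by norm_num) leg_bigO_one_sub (leg_bigO_neg ν))

lemma leg_one_P_P (μ ν : ℂ) : Filter.Tendsto (fun y : ℝ => (1 - (y:ℂ)) * legendreP μ (-y) * legendreP ν (-y))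
    (nhdsWithin 1 (Set.Iio 1)) (nhds 0) :=
  leg_tend_zero (p := 1/2) (by norm_num) (leg_bigO_mul (p := 3/4) (by norm_num)
    (leg_bigO_mul (by norm_num) leg_bigO_one_sub (leg_bigO_neg μ)) (leg_bigO_neg ν))

lemma legD_neg_tend (ν : ℂ) : Filter.Tendsto (fun y => legD ν (-y)) (nhdsWithin 1 (Set.Iio 1))
    (nhds (2 * Complex.sin (ν * π) / π)) := by
  have ht : Filter.Tendsto (fun y : ℝ => √((1- -y)/2)) (nhdsWithin 1 (Set.Iio 1)) (nhdsWithin 1 (Set.Iio 1)) := by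
    refine tendsto_nhdsWithin_iff.2 ⟨?_, ?_⟩
    · have hc : Continuous (fun y : ℝ => √((1- -y)/2)) := by fun_prop
      have := (hc.tendsto 1).mono_left (nhdsWithin_le_nhds (s := Set.Iio 1))
      norm_num at this
      simpa using this
    · filter_upwards [Ioo_mem_nhdsLT (show (-1:ℝ) < 1 by norm_num)] with y hy
      exact (leg_k (x := -y) ⟨by linarith [hy.2], by linarith [hy.1]⟩).2.1
  have h1 := ((legJ_add_lim ν).comp ht).sub ((leg_one_P ν).const_mul ν)
  rw [mul_zero, sub_zero] at h1
  refine h1.congr' ?_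
  filter_upwards [Ioo_mem_nhdsLT (show (-1:ℝ) < 1 by norm_num)] with y hy
  have hy' : -y ∈ Set.Ioo (-1:ℝ) 1 := ⟨by linarith [hy.2], by linarith [hy.1]⟩
  unfold legD
  simp only [Function.comp]
  rw [← legendreP_eq _ hy', ← legendreP_eq _ hy']
  push_cast
  ring

lemma legB_right (μ ν : ℂ) : Filter.Tendsto (legB μ ν) (nhdsWithin 1 (Set.Iio 1)) (nhds 0) := by
  have t1 := (((leg_tend_one μ).const_mul (-2)).mul (legD_tend_zero ν)).mul (legD_neg_tend ν)
  have t2 := ((((leg_cast_tend.const_add 1).const_mul (2*(ν*(ν+1)) - μ*(μ+1))).mul (leg_tend_one μ)).mul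
    (leg_tend_one ν)).mul (leg_one_P ν)
  have t3 := (legD_tend_zero μ).mul (leg_P_D ν ν)
  have t4 := ((legD_tend_zero μ).mul (leg_tend_one ν)).mul (legD_neg_tend ν)
  have t := ((t1.add t2).sub t3).add t4
  simp only [mul_zero, zero_mul, add_zero, sub_zero] at t
  refine t.congr fun y => ?_
  unfold legB
  ring

lemma legB_left_aux (μ ν : ℂ) : Filter.Tendsto (fun y => legB μ ν (-y)) (nhdsWithin 1 (Set.Iio 1))
    (nhds (-((2 * Complex.sin (μ * π) / π) * (2 * Complex.sin (ν * π) / π)))) := by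
  have t1 := (((leg_P_D μ ν).const_mul (-2)).mul (legD_neg_tend ν))
  have t2 := ((((leg_cast_tend.const_add 1).const_mul (2*(ν*(ν+1)) - μ*(μ+1)))).mul
    (leg_tend_one ν)).mul (leg_one_P_P μ ν)
  have t3 := ((legD_neg_tend μ).mul (legD_neg_tend ν)).mul (leg_tend_one ν)
  have t4 := (legD_neg_tend μ).mul (leg_P_D ν ν)
  have t := ((t1.add t2).sub t3).add t4
  simp only [mul_zero, zero_mul, add_zero, zero_sub, mul_one] at t
  refine t.congr fun y => ?_
  unfold legB
  simp only [neg_neg]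
  push_cast
  ring

lemma legB_left (μ ν : ℂ) : Filter.Tendsto (legB μ ν) (nhdsWithin (-1) (Set.Ioi (-1)))
    (nhds (-((2 * Complex.sin (μ * π) / π) * (2 * Complex.sin (ν * π) / π)))) := by
  have ht : Filter.Tendsto (fun x : ℝ => -x) (nhdsWithin (-1) (Set.Ioi (-1))) (nhdsWithin 1 (Set.Iio 1)) := by
    refine tendsto_nhdsWithin_iff.2 ⟨?_, ?_⟩
    · have := (continuous_neg.tendsto (-1:ℝ)).mono_left (nhdsWithin_le_nhds (s := Set.Ioi (-1)))
      simpa using this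
    · filter_upwards [self_mem_nhdsWithin] with x hx
      have : -1 < x := hx
      show -x < 1
      linarith
  refine ((legB_left_aux μ ν).comp ht).congr fun x => ?_
  simp

lemma leg_integrable (μ ν : ℂ) : IntervalIntegrable
    (fun x => legendreP μ x * legendreP ν x * legendreP ν (-x)) volume (-1) 1 := by
  obtain ⟨C1, hC1, h1⟩ := legendreP_bound μ
  obtain ⟨C2, hC2, h2⟩ := legendreP_bound ν
  have i0 : IntervalIntegrable (fun x : ℝ => x^(-(1/2):ℝ)) volume 0 1 :=
    intervalIntegral.intervalIntegrable_rpow' (by norm_num)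
  have ia : IntervalIntegrable (fun x : ℝ => ((1+x)/2)^(-(1/2):ℝ)) volume (-1) 1 := by
    have := ((i0.comp_mul_left (c := 1/2)).comp_add_left 1)
    norm_num at this
    refine this.congr_ae (Filter.Eventually.of_forall fun x => ?_)
    simp only
    congr 1; ring
  have ib : IntervalIntegrable (fun x : ℝ => ((1-x)/2)^(-(1/2):ℝ)) volume (-1) 1 := by
    have := ((i0.comp_mul_left (c := 1/2)).comp_sub_left 1)
    norm_num at this
    refine this.symm.congr_ae (Filter.Eventually.of_forall fun x => ?_)
    simp only
    congr 1; ring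
  have hio : ∀ᵐ x ∂(volume.restrict (Set.uIoc (-1:ℝ) 1)), x ∈ Set.Ioo (-1:ℝ) 1 := by
    rw [Set.uIoc_of_le (by norm_num), ← MeasureTheory.restrict_Ioo_eq_restrict_Ioc]
    exact MeasureTheory.ae_restrict_mem measurableSet_Ioo
  refine ((ia.add ib).const_mul (2 * (C1 * C2 * C2))).mono_fun' ?_ ?_
  · rw [Set.uIoc_of_le (by norm_num), ← MeasureTheory.restrict_Ioo_eq_restrict_Ioc]
    refine ContinuousOn.aestronglyMeasurable ?_ measurableSet_Ioo
    have hc : ∀ ν, ContinuousOn (legendreP ν) (Set.Ioo (-1) 1) :=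
      fun ν x hx => (hasDerivAt_legendreP ν hx).continuousAt.continuousWithinAt
    refine ((hc μ).mul (hc ν)).mul ((hc ν).comp (by fun_prop) ?_)
    intro x hx
    exact ⟨by linarith [hx.2], by linarith [hx.1]⟩
  · filter_upwards [hio] with x hx
    have b1 := h1 x hx
    have b2 := h2 x hx
    have b3 := h2 (-x) ⟨by linarith [hx.2], by linarith [hx.1]⟩
    have pa : 0 < (1+x)/2 := by linarith [hx.1]
    have pb : 0 < (1-x)/2 := by linarith [hx.2]
    have hab : (1+x)/2 + (1-x)/2 = 1 := by ring
    rw [show 1 + -x = 1 - x by ring] at b3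
    generalize (1+x)/2 = a at *
    generalize (1-x)/2 = b at *
    have key : ∀ a b : ℝ, 0 < a → 0 < b → a ≤ 1 → 1/2 ≤ b → b^(-(1/2):ℝ) ≤ 2 ∧ b^(-(1/4):ℝ) ≤ 2 ∧ a^(-(1/4):ℝ) ≤ a^(-(1/2):ℝ) := by
      intro a b ha hb ha1 hb2
      have hb1 : ∀ p : ℝ, -1 ≤ p → p ≤ 0 → b^p ≤ 2 := by
        intro p hp hp0
        calc b^p ≤ (1/2:ℝ)^p := Real.rpow_le_rpow_of_nonpos (by norm_num) hb2 hp0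
          _ ≤ (1/2:ℝ)^(-1:ℝ) := Real.rpow_le_rpow_of_exponent_ge (by norm_num) (by norm_num) hp
          _ = 2 := by rw [Real.rpow_neg_one]; norm_num
      exact ⟨hb1 _ (by norm_num) (by norm_num), hb1 _ (by norm_num) (by norm_num),
        Real.rpow_le_rpow_of_exponent_ge ha ha1 (by norm_num)⟩
    have e : a^(-(1/2):ℝ) = a^(-(1/4):ℝ) * a^(-(1/4):ℝ) := by
      rw [← Real.rpow_add pa]; norm_num
    have main : a^(-(1/4):ℝ) * a^(-(1/4):ℝ) * b^(-(1/4):ℝ) ≤ 2 * (a^(-(1/2):ℝ) + b^(-(1/2):ℝ)) := by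
      rw [← e]
      have A0 : 0 ≤ a^(-(1/2):ℝ) := by positivity
      have B0 : 0 ≤ b^(-(1/2):ℝ) := by positivity
      have B1 : 0 ≤ b^(-(1/4):ℝ) := by positivity
      rcases le_total (1/2) b with hb | hb
      · obtain ⟨_, k2, _⟩ := key a b pa pb (by linarith) hb
        nlinarith
      · obtain ⟨k1, _, k3⟩ := key b a pb pa (by linarith) (by linarith)
        nlinarith
    rw [norm_mul, norm_mul]
    calc ‖legendreP μ x‖ * ‖legendreP ν x‖ * ‖legendreP ν (-x)‖
        ≤ (C1 * a^(-(1/4):ℝ)) * (C2 * a^(-(1/4):ℝ)) * (C2 * b^(-(1/4):ℝ)) := by gcongr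
      _ = (C1 * C2 * C2) * (a^(-(1/4):ℝ) * a^(-(1/4):ℝ) * b^(-(1/4):ℝ)) := by ring
      _ ≤ (C1 * C2 * C2) * (2 * (a^(-(1/2):ℝ) + b^(-(1/2):ℝ))) := by gcongr
      _ = _ := by ring

/-- Recursion for generalized Clebsch–Gordan integrals. -/
theorem stmt_4 (μ ν : ℂ) :
    (μ+1)^2 * ((μ+1)^2 - (2*ν+1)^2) * T (μ+1) ν
      - μ^2 * (μ^2 - (2*ν+1)^2) * T (μ-1) ν
    = 4 * (2*μ+1) * Complex.sin (μ * (π:ℂ)) * Complex.sin (ν * (π:ℂ)) / (π:ℂ)^2 := by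
  have i1 := (leg_integrable (μ+1) ν).const_mul ((μ+1)^2 * ((μ+1)^2 - (2*ν+1)^2))
  have i2 := (leg_integrable (μ-1) ν).const_mul (μ^2 * (μ^2 - (2*ν+1)^2))
  have h := intervalIntegral.integral_eq_sub_of_hasDerivAt_of_tendsto (by norm_num : (-1:ℝ) < 1)
    (fun x hx => hasDerivAt_legB μ ν hx) (i1.sub i2)
    ((legB_left μ ν).const_mul (2*μ+1)) ((legB_right μ ν).const_mul (2*μ+1))
  rw [intervalIntegral.integral_sub i1 i2, intervalIntegral.integral_const_mul,
    intervalIntegral.integral_const_mul] at h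
  unfold T
  rw [h]
  ring
end

section
/- For every μ ∈ ℂ∖ℤ and every integer n ≥ 0, T_{μ,n} = (−1)^n · π Γ((2n+1−μ)/2) Γ((2n+2+μ)/2) / ( [Γ((1−μ)/2)]² [Γ((μ+2)/2)]² Γ((2n+2−μ)/2) Γ((2n+3+μ)/2) ). -/
open Real MeasureTheory intervalIntegral

open Polynomial in
noncomputable def legPoly : ℕ → ℂ[X]
  | 0 => 1
  | 1 => X
  | (n+2) => C (1/((n:ℂ)+2)) * (C (2*(n:ℂ)+3) * X * legPoly (n+1) - C ((n:ℂ)+1) * legPoly n)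

open Polynomial in
lemma C_two' : (C 2 : ℂ[X]) = 2 := rfl

open Polynomial in
lemma C_three' : (C 3 : ℂ[X]) = 3 := rfl

open Polynomial in
lemma legPoly_rec (n : ℕ) : ((n:ℂ[X])+2) * legPoly (n+2) = (2*(n:ℂ[X])+3) * X * legPoly (n+1) - ((n:ℂ[X])+1) * legPoly n := by
  rw [legPoly]
  have h : ((n:ℂ)+2) ≠ 0 := by exact_mod_cast (by omega : n+2 ≠ 0)
  have : ((n:ℂ[X])+2) * C (1/((n:ℂ)+2)) = 1 := by
    have : ((n:ℂ[X])+2) = C ((n:ℂ)+2) := by simp [C_two']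
    rw [this, ← C_mul, mul_one_div_cancel h, C_1]
  rw [← mul_assoc, this, one_mul]
  simp [C_two', C_three']

open Polynomial in
lemma legPoly_deriv (m : ℕ) :
    (1 - X^2) * derivative (legPoly (m+1)) = ((m:ℂ[X])+1) * (legPoly m - X * legPoly (m+1)) ∧
    (1 - X^2) * derivative (legPoly m) = ((m:ℂ[X])+1) * (X * legPoly m - legPoly (m+1)) := by
  induction m with
  | zero => constructor <;> simp [legPoly]; ring
  | succ m ih =>
    obtain ⟨h1, h2⟩ := ih
    have hr := legPoly_rec m
    have hd := congrArg derivative hr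
    simp only [derivative_mul, derivative_sub, derivative_add, derivative_X, derivative_natCast, derivative_ofNat, derivative_one] at hd
    have h0 : ((m:ℂ[X])+2) ≠ 0 := by exact_mod_cast (by omega : m+2 ≠ 0)
    constructor
    · apply mul_left_cancel₀ h0
      push_cast
      linear_combination (1-X^2)*hd + (2*(m:ℂ[X])+3)*X*h1 - ((m:ℂ[X])+1)*h2 + X*((m:ℂ[X])+2)*hr
    · push_cast
      linear_combination h1 + hr

open Polynomial in
lemma one_sub_X_sq_ne : (1 - X^2 : ℂ[X]) ≠ 0 := by
  intro h
  have := congrArg (eval 0) h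
  simp at this

open Polynomial in
/-- The Legendre operator. -/
noncomputable def legL (p : ℂ[X]) : ℂ[X] := derivative ((1 - X^2) * derivative p)

open Polynomial in
lemma legL_add (p q : ℂ[X]) : legL (p+q) = legL p + legL q := by
  simp only [legL, derivative_add, mul_add]

open Polynomial in
lemma legL_smul (a : ℂ) (q : ℂ[X]) : legL (C a * q) = C a * legL q := by
  simp only [legL, derivative_C_mul]
  rw [mul_left_comm, derivative_C_mul]

open Polynomial in
lemma legPoly_sq (n : ℕ) :
   legL (legPoly (n+1)^2 - legPoly n^2) + (2*(n:ℂ[X])+2)*(2*n+3)*legPoly (n+1)^2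
     = (2*(n:ℂ[X])+1)*(2*n+2)*legPoly n^2 := by
  obtain ⟨h1, h2⟩ := legPoly_deriv n
  have hW : (1 - X^2) * derivative (legPoly (n+1)^2 - legPoly n^2)
     = 2*((n:ℂ[X])+1)*(2*legPoly (n+1)*legPoly n - X*(legPoly (n+1)^2+legPoly n^2)) := by
    simp only [derivative_sub, derivative_pow]
    simp [C_two']
    linear_combination (2*legPoly (n+1))*h1 - 2*legPoly n*h2
  rw [legL, hW]
  apply mul_left_cancel₀ one_sub_X_sq_ne
  simp only [derivative_mul, derivative_sub, derivative_add, derivative_pow, derivative_X, derivative_natCast, derivative_ofNat, derivative_one]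
  simp only [Nat.cast_ofNat, C_two', Nat.add_one_sub_one, pow_one]
  linear_combination (2*((n:ℂ[X])+1)*(2*legPoly n - 2*X*legPoly (n+1)))*h1 + (2*((n:ℂ[X])+1)*(2*legPoly (n+1) - 2*X*legPoly n))*h2

open Polynomial in
lemma legPoly_neg_one (n : ℕ) : (legPoly (n+1)).eval (-1) = - (legPoly n).eval (-1) := by
  have := congrArg (eval (-1)) (legPoly_deriv n).2
  simp at this
  have h : ((n:ℂ)+1) ≠ 0 := by exact_mod_cast (by omega : n+1 ≠ 0)
  rcases this with h' | h'
  · exact absurd h' h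
  · linear_combination -h'

open Polynomial in
lemma legPoly_eval_rec (n : ℕ) (x : ℂ) : ((n:ℂ)+2) * (legPoly (n+2)).eval x = (2*(n:ℂ)+3) * x * (legPoly (n+1)).eval x - ((n:ℂ)+1) * (legPoly n).eval x := by
  have := congrArg (eval x) (legPoly_rec n)
  simpa using this

open Polynomial in
lemma legPoly_parity (n : ℕ) (x : ℂ) : (legPoly n).eval (-x) = (-1)^n * (legPoly n).eval x ∧
   (legPoly (n+1)).eval (-x) = (-1)^(n+1) * (legPoly (n+1)).eval x := by
  induction n with
  | zero => simp [legPoly]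
  | succ n ih =>
    refine ⟨ih.2, ?_⟩
    have h0 : ((n:ℂ)+2) ≠ 0 := by exact_mod_cast (by omega : n+2 ≠ 0)
    apply mul_left_cancel₀ h0
    rw [legPoly_eval_rec, ih.1, ih.2]
    linear_combination (-(-1)^(n+1+1)) * legPoly_eval_rec n x

open Polynomial in
/-- abstract reduction: a functional satisfying the moment recursion. -/
lemma functional_L (Λ : ℂ[X] →ₗ[ℂ] ℂ) (lam : ℂ)
    (h : ∀ k : ℕ, 2*((k:ℂ)+1)^2 * Λ ((1+X)^k) = (((k:ℂ)+1)*(k+2) - lam) * Λ ((1+X)^(k+1)))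
    (p : ℂ[X]) (hp : p.eval (-1) = 0) : Λ (legL p) + lam * Λ p = 0 := by
  have key : ∀ r : ℂ[X], Λ (legL ((1+X) * r.comp (1+X))) + lam * Λ ((1+X) * r.comp (1+X)) = 0 := by
    intro r
    induction r using Polynomial.induction_on' with
    | add p q hp hq =>
      rw [add_comp, mul_add, legL_add, map_add, map_add]
      linear_combination hp + hq
    | monomial k a =>
      have e : (1+X) * (monomial k a).comp (1+X) = C a * (1+X : ℂ[X])^(k+1) := by
        rw [← C_mul_X_pow_eq_monomial]; simp; ring
      rw [e, legL_smul, ← smul_eq_C_mul, ← smul_eq_C_mul, map_smul, map_smul]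
      have e2 : legL ((1+X)^(k+1)) = (2*((k:ℂ)+1)^2) • (1+X)^k - (((k:ℂ)+1)*(k+2)) • (1+X)^(k+1) := by
        rw [legL, derivative_pow]
        have : (1 - X^2) * (C (((k+1:ℕ)):ℂ) * (1+X)^(k+1-1) * derivative (1+X))
            = C ((k:ℂ)+1) * (2 * (1+X)^(k+1) - (1+X)^(k+2)) := by
          simp; ring
        rw [this]
        simp only [derivative_mul, derivative_C, derivative_sub, derivative_pow, smul_eq_C_mul]
        simp [C_two']
        ring
      rw [e2, map_sub, map_smul, map_smul]
      simp only [smul_eq_mul]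
      linear_combination a * h k
  obtain ⟨q, hq⟩ := (dvd_iff_isRoot (p := p) (a := -1)).2 hp
  have e : p = (1+X) * (q.comp (X-1)).comp (1+X) := by
    rw [comp_assoc, hq]; simp [add_comm]
  rw [e]; exact key _
lemma sqrt_deriv_aux (c x : ℝ) (hx : x < c) :
    HasDerivAt (fun x => √(2*(c-x))) (-(1/√(2*(c-x)))) x := by
  have h1 : HasDerivAt (fun x : ℝ => 2*(c-x)) (-2) x := by
    have := ((hasDerivAt_id x).const_sub c).const_mul 2
    exact this.congr_deriv (by norm_num)
  convert h1.sqrt (by nlinarith) using 1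
  have : √(2*(c-x)) ≠ 0 := (Real.sqrt_pos.2 (by linarith)).ne'
  field_simp

lemma kint_c (c : ℝ) (hc : -1 ≤ c) :
    IntervalIntegrable (fun x => 1/√(2*(c-x))) volume (-1) c := by
  refine intervalIntegrable_deriv_of_nonneg (g := fun x => -√(2*(c-x))) (by fun_prop) ?_ ?_
  · intro x hx
    rw [min_eq_left hc, max_eq_right hc] at hx
    exact ((sqrt_deriv_aux c x hx.2).neg).congr_deriv (by simp)
  · intro x hx; positivity

lemma kint_k_c (c : ℝ) (hc : -1 ≤ c) (k : ℕ) :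
    IntervalIntegrable (fun x => (1+x)^k * (1/√(2*(c-x)))) volume (-1) c := by
  have := (kint_c c hc).mul_continuousOn (g := fun x => (1+x)^k) (by fun_prop)
  convert this using 2; ring

lemma kzero (c x : ℝ) (hx : c ≤ x) : 1/√(2*(c-x)) = 0 := by
  rw [Real.sqrt_eq_zero_of_nonpos (by linarith)]; simp

lemma kint_k_1 (c : ℝ) (hc' : c ≤ 1) (k : ℕ) :
    IntervalIntegrable (fun x => (1+x)^k * (1/√(2*(c-x)))) volume c 1 := by
  refine (_root_.intervalIntegrable_const (c := (0:ℝ))).congr ?_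
  intro x hx
  rw [Set.uIoc_of_le hc'] at hx
  simp only [kzero c x hx.1.le, mul_zero]

lemma kint_k (c : ℝ) (hc : -1 ≤ c) (hc' : c ≤ 1) (k : ℕ) :
    IntervalIntegrable (fun x => (1+x)^k * (1/√(2*(c-x)))) volume (-1) 1 :=
  (kint_k_c c hc k).trans (kint_k_1 c hc' k)

lemma kmom_c (c : ℝ) (hc : -1 ≤ c) (hc' : c ≤ 1) (k : ℕ) :
    ∫ x in (-1:ℝ)..1, (1+x)^k * (1/√(2*(c-x))) = ∫ x in (-1:ℝ)..c, (1+x)^k * (1/√(2*(c-x))) := by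
  rw [← integral_add_adjacent_intervals (kint_k_c c hc k) (kint_k_1 c hc' k)]
  have : ∫ x in c..1, (1+x)^k * (1/√(2*(c-x))) = ∫ x in c..1, 0 := by
    apply integral_congr
    intro x hx
    rw [Set.uIcc_of_le hc'] at hx
    simp only [kzero c x hx.1, mul_zero]
  rw [this]; simp

lemma kmom_zero (c : ℝ) (hc : -1 ≤ c) (hc' : c ≤ 1) :
    ∫ x in (-1:ℝ)..1, (1+x)^0 * (1/√(2*(c-x))) = √(2*(1+c)) := by
  rw [kmom_c c hc hc']
  rw [integral_eq_sub_of_hasDerivAt_of_le hc (f := fun x => -√(2*(c-x))) (by fun_prop) ?_ (kint_k_c c hc 0)]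
  · simp; ring_nf
  · intro x hx
    exact ((sqrt_deriv_aux c x hx.2).neg).congr_deriv (by simp)

lemma kmom_succ (c : ℝ) (hc : -1 ≤ c) (hc' : c ≤ 1) (k : ℕ) :
    (2*(k:ℝ)+3) * ∫ x in (-1:ℝ)..1, (1+x)^(k+1) * (1/√(2*(c-x))) =
     2*((k:ℝ)+1)*(1+c) * ∫ x in (-1:ℝ)..1, (1+x)^k * (1/√(2*(c-x))) := by
  rw [kmom_c c hc hc', kmom_c c hc hc']
  have hi : IntervalIntegrable (fun x => 2*((k:ℝ)+1)*(1+c) * ((1+x)^k * (1/√(2*(c-x)))) - (2*(k:ℝ)+3)*((1+x)^(k+1) * (1/√(2*(c-x))))) volume (-1) c :=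
    ((kint_k_c c hc k).const_mul _).sub ((kint_k_c c hc (k+1)).const_mul _)
  have := integral_eq_sub_of_hasDerivAt_of_le hc (f := fun x => (1+x)^(k+1) * √(2*(c-x))) (by fun_prop) ?_ hi
  · rw [intervalIntegral.integral_sub ((kint_k_c c hc k).const_mul _) ((kint_k_c c hc (k+1)).const_mul _), 
      intervalIntegral.integral_const_mul, intervalIntegral.integral_const_mul] at this
    simp at this
    simp
    linarith
  · intro x hx
    have h1 : HasDerivAt (fun x : ℝ => (1+x)^(k+1)) (((k:ℝ)+1)*(1+x)^k) x := by
      have := ((hasDerivAt_id x).const_add 1).pow (k+1)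
      exact this.congr_deriv (by simp)
    refine (h1.mul (sqrt_deriv_aux c x hx.2)).congr_deriv ?_
    have h2 : √(2*(c-x)) ≠ 0 := (Real.sqrt_pos.2 (by linarith [hx.2])).ne'
    have h3 : √(2*(c-x)) ^2 = 2*(c-x) := Real.sq_sqrt (by linarith [hx.2])
    have h4 : 2*((k:ℝ)+1)*(1+c) * ((1+x)^k * (1/√(2*(c-x)))) - (2*(k:ℝ)+3)*((1+x)^(k+1) * (1/√(2*(c-x))))
       = ((k:ℝ)+1)*(1+x)^k * ((2*(c-x)) /√(2*(c-x))) + (1+x)^(k+1) * (-(1/√(2*(c-x)))) := by ring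
    rw [h4, Real.div_sqrt]

lemma legendreP_eq_s5 (ν : ℂ) (x : ℝ) (h1 : -1 ≤ x) (h2 : x < 1) :
    legendreP ν x = ((2 / π : ℝ) : ℂ) * ∫ β in (0:ℝ)..π,
      Complex.cos ((2*ν + 1) * (β:ℂ) / 2) * ((1 / √(2 * (Real.cos β - x)) : ℝ) : ℂ) := by
  rw [legendreP, if_neg h2.ne, integral_of_le (arccos_nonneg x), integral_of_le pi_pos.le]
  congr 1
  rw [eq_comm]
  rw [setIntegral_eq_of_subset_of_forall_sdiff_eq_zero (s := Set.Ioc 0 (arccos x)) measurableSet_Ioc]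
  · apply setIntegral_congr_fun measurableSet_Ioc
    intro β hβ
    simp [div_eq_mul_inv]
  · exact Set.Ioc_subset_Ioc_right (arccos_le_pi x)
  · rintro β ⟨h3, h4⟩
    have h5 : arccos x ≤ β := by
      by_contra h
      exact h4 ⟨h3.1, (not_le.1 h).le⟩
    have : cos β ≤ x := by
      rw [← Real.cos_arccos h1 h2.le]
      exact cos_le_cos_of_nonneg_of_le_pi (arccos_nonneg x) h3.2 h5
    rw [kzero _ _ this]; simp

lemma K_integrable : Integrable (fun z : ℝ × ℝ => 1 / √(2 * (Real.cos z.2 - z.1)))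
    ((volume.restrict (Set.Ioc (-1) 1)).prod (volume.restrict (Set.Ioc 0 π))) := by
  rw [integrable_prod_iff']
  · constructor
    · refine Filter.Eventually.of_forall fun β => ?_
      have := kint_k (cos β) (neg_one_le_cos β) (cos_le_one β) 0
      rw [intervalIntegrable_iff_integrableOn_Ioc_of_le (by norm_num)] at this
      simpa [IntegrableOn] using this
    · have : ∀ β : ℝ, ∫ x in Set.Ioc (-1:ℝ) 1, ‖1 / √(2 * (Real.cos β - x))‖ = √(2*(1+cos β)) := by
        intro β
        rw [← kmom_zero (cos β) (neg_one_le_cos β) (cos_le_one β), integral_of_le (by norm_num)]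
        apply setIntegral_congr_fun measurableSet_Ioc
        intro x hx
        simp only [pow_zero, one_mul]
        exact Real.norm_of_nonneg (by positivity)
      simp only [this]
      have hc : Continuous (fun β : ℝ => √(2*(1+cos β))) := by fun_prop
      exact (hc.integrableOn_Icc (a := 0) (b := π)).mono_set Set.Ioc_subset_Icc_self
  · apply Measurable.aestronglyMeasurable
    fun_prop

lemma G_integrable (s : ℂ) (p : ℝ → ℂ) (hp : Continuous p) :
   Integrable (fun z : ℝ × ℝ => p z.1 * Complex.cos (s * (z.2:ℂ) / 2) * ((1 / √(2 * (Real.cos z.2 - z.1)) : ℝ):ℂ))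
    ((volume.restrict (Set.Ioc (-1) 1)).prod (volume.restrict (Set.Ioc 0 π))) := by
  have hc : Continuous (fun z : ℝ × ℝ => p z.1 * Complex.cos (s * (z.2:ℂ) / 2)) := by fun_prop
  obtain ⟨C, hC⟩ := ((isCompact_Icc (a := (-1:ℝ)) (b := 1)).prod (isCompact_Icc (a := (0:ℝ)) (b := π))).exists_bound_of_continuousOn hc.continuousOn
  refine K_integrable.ofReal.bdd_mul (c := C) hc.aestronglyMeasurable ?_
  rw [Measure.prod_restrict]
  filter_upwards [ae_restrict_mem (measurableSet_Ioc.prod measurableSet_Ioc)] with z hz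
  exact hC z ⟨Set.Ioc_subset_Icc_self hz.1, Set.Ioc_subset_Icc_self hz.2⟩

lemma legendre_mul_eq (μ : ℂ) (p : ℝ → ℂ) :
   (fun x => legendreP μ x * p x) =ᵐ[volume.restrict (Set.Ioc (-1) 1)]
    fun x => ((2 / π : ℝ) : ℂ) * ∫ β in Set.Ioc 0 π, p x * Complex.cos ((2*μ+1) * (β:ℂ) / 2) * ((1 / √(2 * (Real.cos β - x)) : ℝ):ℂ) := by
  have h1 : ∀ᵐ x : ℝ ∂(volume.restrict (Set.Ioc (-1) 1)), x ≠ 1 :=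
    ae_restrict_of_ae (by simp [ae_iff])
  filter_upwards [ae_restrict_mem measurableSet_Ioc, h1] with x hx hx1
  rw [legendreP_eq_s5 μ x hx.1.le (lt_of_le_of_ne hx.2 hx1), integral_of_le pi_pos.le, mul_assoc]
  congr 1
  rw [← MeasureTheory.integral_mul_const]
  congr 1; ext β; ring

lemma legendre_integrable (μ : ℂ) (p : ℝ → ℂ) (hp : Continuous p) :
    IntervalIntegrable (fun x => legendreP μ x * p x) volume (-1) 1 := by
  rw [intervalIntegrable_iff_integrableOn_Ioc_of_le (by norm_num)]
  exact ((G_integrable (2*μ+1) p hp).integral_prod_left.const_mul _).congr (legendre_mul_eq μ p).symm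

lemma legendre_swap (μ : ℂ) (p : ℝ → ℂ) (hp : Continuous p) :
    ∫ x in (-1:ℝ)..1, legendreP μ x * p x = ((2 / π : ℝ) : ℂ) *
      ∫ β in (0:ℝ)..π, Complex.cos ((2*μ+1) * (β:ℂ) / 2) * ∫ x in (-1:ℝ)..1, p x * ((1 / √(2 * (Real.cos β - x)) : ℝ):ℂ) := by
  rw [integral_of_le (by norm_num), MeasureTheory.integral_congr_ae (legendre_mul_eq μ p), MeasureTheory.integral_const_mul,
    MeasureTheory.integral_integral_swap (G_integrable (2*μ+1) p hp), integral_of_le pi_pos.le]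
  congr 2; ext β
  rw [integral_of_le (by norm_num), ← MeasureTheory.integral_const_mul]
  congr 1; ext x; ring

/-- constants -/
noncomputable def bk : ℕ → ℝ
  | 0 => 2
  | (k+1) => 4*((k:ℝ)+1)/(2*k+3) * bk k

lemma inner_eq (k : ℕ) (β : ℝ) (h0 : 0 ≤ β) (h1 : β ≤ π) :
    ∫ x in (-1:ℝ)..1, (1+x)^k * (1/√(2*(cos β-x))) = bk k * cos (β/2)^(2*k+1) := by
  have hc : 1 + cos β = 2*cos (β/2)^2 := by
    have := Real.cos_sq (β/2)
    rw [this]; ring_nf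
  induction k with
  | zero =>
    rw [kmom_zero _ (neg_one_le_cos β) (cos_le_one β), hc]
    have : 2*(2*cos (β/2)^2) = (2*cos (β/2))^2 := by ring
    rw [this, Real.sqrt_sq]
    · simp [bk]
    · have := cos_nonneg_of_neg_pi_div_two_le_of_le (x := β/2) (by linarith [pi_pos]) (by linarith)
      linarith
  | succ k ih =>
    have := kmom_succ _ (neg_one_le_cos β) (cos_le_one β) k
    rw [ih, hc] at this
    have h3 : (2*(k:ℝ)+3) ≠ 0 := by positivity
    apply mul_left_cancel₀ h3
    rw [this, bk]
    field_simp
    ring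

noncomputable def Jk (μ : ℂ) (k : ℕ) : ℂ :=
  ∫ β in (0:ℝ)..π, Complex.cos ((2*μ+1) * (β:ℂ) / 2) * Complex.cos ((β:ℂ)/2)^(2*k+1)

lemma moment_eq (μ : ℂ) (k : ℕ) :
    ∫ x in (-1:ℝ)..1, legendreP μ x * (1+(x:ℂ))^k = ((2 / π : ℝ) : ℂ) * (bk k * Jk μ k) := by
  rw [legendre_swap μ _ (by fun_prop), Jk]
  congr 1
  rw [← intervalIntegral.integral_const_mul]
  apply integral_congr
  intro β hβ
  rw [Set.uIcc_of_le pi_pos.le] at hβ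
  have := congrArg (fun t : ℝ => (t:ℂ)) (inner_eq k β hβ.1 hβ.2)
  simp only [← intervalIntegral.integral_ofReal] at this
  push_cast at this ⊢
  rw [this]; ring

lemma Jk_rec (μ : ℂ) (k : ℕ) :
    (((k:ℂ)+1)*(k+2) - μ*(μ+1)) * Jk μ (k+1) = (2*(k:ℂ)+3)*(2*k+2)/4 * Jk μ k := by
  have hi : ∀ j : ℕ, IntervalIntegrable (fun β : ℝ => Complex.cos ((2*μ+1) * (β:ℂ) / 2) * Complex.cos ((β:ℂ)/2)^(2*j+1)) volume 0 π := by
    intro j; apply Continuous.intervalIntegrable; fun_prop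
  have hsub : (((k:ℂ)+1)*(k+2) - μ*(μ+1)) * Jk μ (k+1) - (2*(k:ℂ)+3)*(2*k+2)/4 * Jk μ k = 0 := by
    rw [Jk, Jk, ← intervalIntegral.integral_const_mul, ← intervalIntegral.integral_const_mul,
      ← intervalIntegral.integral_sub ((hi _).const_mul _) ((hi _).const_mul _)]
    rw [integral_eq_sub_of_hasDerivAt (f := fun β : ℝ => 
       Complex.cos ((2*μ+1) * (β:ℂ) / 2) * ((2*(k:ℂ)+3)/2 * Complex.cos ((β:ℂ)/2)^(2*k+2) * Complex.sin ((β:ℂ)/2))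
        - (2*μ+1)/2 * Complex.sin ((2*μ+1) * (β:ℂ) / 2) * Complex.cos ((β:ℂ)/2)^(2*k+3)) ?_ (((hi _).const_mul _).sub ((hi _).const_mul _))]
    · have : Complex.cos ((π:ℂ)/2) = 0 := Complex.cos_pi_div_two
      simp [this]
    · intro β _
      have hs : HasDerivAt (fun β : ℂ => (2*μ+1) * (β:ℂ) / 2) ((2*μ+1)/2) (β:ℂ) := by
        exact (((hasDerivAt_id (β:ℂ)).const_mul (2*μ+1)).div_const 2).congr_deriv (by simp)
      have h2 : HasDerivAt (fun β : ℂ => (β:ℂ) / 2) (1/2) (β:ℂ) := by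
        exact ((hasDerivAt_id (β:ℂ)).div_const 2)
      have := ((hs.ccos.mul (((h2.ccos.pow (2*k+2)).const_mul ((2*(k:ℂ)+3)/2)).mul h2.csin)).sub
        ((hs.csin.const_mul ((2*μ+1)/2)).mul (h2.ccos.pow (2*k+3)))).comp_ofReal
      refine (this.congr_deriv ?_).congr_of_eventuallyEq ?_
      · have e : Complex.sin ((β:ℂ)/2)^2 = 1 - Complex.cos ((β:ℂ)/2)^2 := Complex.sin_sq _
        simp only [Nat.cast_add, Nat.cast_mul, Nat.cast_ofNat, Pi.mul_apply, Pi.pow_apply, show 2*k+2-1 = 2*k+1 by omega, show 2*k+3-1=2*k+2 by omega,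
          show 2*(k+1)+1 = 2*k+3 by ring]
        linear_combination (-(2*(k:ℂ)+3)*(2*k+2)/4*Complex.cos ((2*μ+1) * (β:ℂ) / 2) * Complex.cos ((β:ℂ)/2)^(2*k+1)) * e
      · refine Filter.Eventually.of_forall fun t => ?_
        simp
  linear_combination hsub

lemma moment_rec (μ : ℂ) (k : ℕ) :
    2*((k:ℂ)+1)^2 * (∫ x in (-1:ℝ)..1, legendreP μ x * (1+(x:ℂ))^k)
      = (((k:ℂ)+1)*(k+2) - μ*(μ+1)) * ∫ x in (-1:ℝ)..1, legendreP μ x * (1+(x:ℂ))^(k+1) := by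
  rw [moment_eq, moment_eq]
  have h := Jk_rec μ k
  have h3 : (2*(k:ℂ)+3) ≠ 0 := by exact_mod_cast (by omega : 2*k+3 ≠ 0)
  have hb : (bk (k+1) : ℂ) * (2*(k:ℂ)+3) = 4*((k:ℂ)+1) * bk k := by
    rw [bk]; push_cast; rw [div_mul_eq_mul_div, div_mul_cancel₀ _ h3]
  apply mul_left_cancel₀ h3
  linear_combination -(((2 / π : ℝ) : ℂ)*(2*(k:ℂ)+3) * bk (k+1)) * h - (((2 / π : ℝ) : ℂ) * Jk μ k* (2*(k:ℂ)+3)*(2*k+2)/4)*hb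

lemma moment_zero (μ : ℂ) (h0 : μ ≠ 0) (h1 : μ + 1 ≠ 0) :
    ∫ x in (-1:ℝ)..1, legendreP μ x = 2 * Complex.sin (π*μ) / (π * μ * (μ+1)) := by
  have := moment_eq μ 0
  simp only [pow_zero, mul_one] at this
  rw [this]
  have hJ : Jk μ 0 = (Complex.sin ((μ+1)*π)/(μ+1) + Complex.sin (μ*π)/μ)/2 := by
    rw [Jk, integral_eq_sub_of_hasDerivAt (f := fun β : ℝ => (Complex.sin ((μ+1)*β)/(μ+1) + Complex.sin (μ*β)/μ)/2)]
    · simp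
    · intro β _
      have hs : ∀ a : ℂ, HasDerivAt (fun β : ℂ => a * (β:ℂ)) a (β:ℂ) := by
        intro a
        exact ((hasDerivAt_id (β:ℂ)).const_mul a).congr_deriv (by simp)
      have := (((((hs (μ+1)).csin).div_const (μ+1)).add (((hs μ).csin).div_const μ)).div_const 2).comp_ofReal
      refine this.congr_deriv ?_
      have e1 : (μ+1)*(β:ℂ) = (2*μ+1) * (β:ℂ) / 2 + (β:ℂ)/2 := by ring
      have e2 : μ*(β:ℂ) = (2*μ+1) * (β:ℂ) / 2 - (β:ℂ)/2 := by ring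
      rw [mul_div_cancel_right₀ _ h1, mul_div_cancel_right₀ _ h0, e1, e2, Complex.cos_add, Complex.cos_sub]
      ring
    · apply Continuous.intervalIntegrable; fun_prop
  have e : Complex.sin ((μ+1)*π) = - Complex.sin (π*μ) := by
    rw [add_mul, one_mul, Complex.sin_add_pi, mul_comm]
  rw [hJ, e, mul_comm μ (π:ℂ)]
  have hp : (π:ℂ) ≠ 0 := by exact_mod_cast pi_ne_zero
  simp only [bk]
  push_cast
  field_simp
  ring

lemma half_identity (x β : ℝ) (h1 : -1 < x) (h2 : x < 1) :
    2*(cos β - x) = (2*sin (arccos x/2))^2 * (1 - (sin (β/2)/sin (arccos x/2))^2) := by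
  have hs : 0 < sin (arccos x/2) := by
    apply sin_pos_of_pos_of_lt_pi
    · have := arccos_pos.2 h2; linarith
    · have := arccos_le_pi x; linarith [pi_pos]
  have e1 : x = 1 - 2*sin (arccos x/2)^2 := by
    have := Real.cos_sq' (arccos x/2)
    have h3 := Real.cos_two_mul (arccos x/2)
    rw [mul_div_cancel₀ _ two_ne_zero, Real.cos_arccos h1.le h2.le] at h3
    linarith
  have e2 : cos β = 1 - 2*sin (β/2)^2 := by
    have := Real.cos_sq' (β/2)
    have h3 := Real.cos_two_mul (β/2)
    rw [mul_div_cancel₀ _ two_ne_zero] at h3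
    linarith
  rw [e2]
  have e3 : (2*sin (arccos x/2))^2 * (1 - (sin (β/2)/sin (arccos x/2))^2) = 4*sin (arccos x/2)^2 - 4*sin (β/2)^2 := by
    field_simp
    ring
  rw [e3]
  linarith

lemma base_deriv (x β : ℝ) (h1 : -1 < x) (h2 : x < 1) (hβ : β ∈ Set.Ioo 0 (arccos x)) :
    HasDerivAt (fun β => arcsin (sin (β/2)/sin (arccos x/2))) (cos (β/2) * (1/√(2*(cos β - x)))) β := by
  have hp := arccos_le_pi x
  have hs : 0 < sin (arccos x/2) := by
    apply sin_pos_of_pos_of_lt_pi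
    · have := arccos_pos.2 h2; linarith
    · linarith [pi_pos]
  have hb : 0 < sin (β/2) := sin_pos_of_pos_of_lt_pi (by linarith [hβ.1]) (by linarith [hβ.2, pi_pos])
  have hlt : sin (β/2) < sin (arccos x/2) :=
    sin_lt_sin_of_lt_of_le_pi_div_two (by linarith [hβ.1, pi_pos]) (by linarith) (by linarith [hβ.2])
  have hr : sin (β/2)/sin (arccos x/2) < 1 := (div_lt_one hs).2 hlt
  have hr0 : 0 < sin (β/2)/sin (arccos x/2) := div_pos hb hs
  have hd : HasDerivAt (fun β : ℝ => sin (β/2)/sin (arccos x/2)) (cos (β/2) * (1/2)/ sin (arccos x/2)) β :=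
    (((hasDerivAt_id β).div_const 2).sin).div_const _
  have := (Real.hasDerivAt_arcsin (x := sin (β/2)/sin (arccos x/2)) (by linarith) hr.ne).comp β hd
  refine this.congr_deriv ?_
  rw [half_identity x β h1 h2, Real.sqrt_mul (by positivity), Real.sqrt_sq (by positivity)]
  have : 0 < √(1 - (sin (β/2)/sin (arccos x/2))^2) := Real.sqrt_pos.2 (by nlinarith)
  field_simp

lemma base_integrable (x : ℝ) (h1 : -1 < x) (h2 : x < 1) :
    IntervalIntegrable (fun β => cos (β/2) * (1/√(2*(cos β - x)))) volume 0 (arccos x) := by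
  have h0 := arccos_nonneg x
  refine intervalIntegrable_deriv_of_nonneg (g := fun β => arcsin (sin (β/2)/sin (arccos x/2))) ?_ ?_ ?_
  · apply Continuous.continuousOn
    exact continuous_arcsin.comp (by fun_prop)
  · intro β hβ
    rw [min_eq_left h0, max_eq_right h0] at hβ
    exact base_deriv x β h1 h2 hβ
  · intro β hβ
    rw [min_eq_left h0, max_eq_right h0] at hβ
    have := cos_nonneg_of_neg_pi_div_two_le_of_le (x := β/2) (by linarith [hβ.1, pi_pos]) (by linarith [hβ.2, arccos_le_pi x])
    positivity

lemma arccos_lt_pi' (x : ℝ) (h1 : -1 < x) : arccos x < π := by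
  refine lt_of_le_of_ne (arccos_le_pi x) fun h => ?_
  rw [arccos_eq_pi] at h; linarith

lemma base_integral (x : ℝ) (h1 : -1 < x) (h2 : x < 1) :
    ∫ β in (0:ℝ)..(arccos x), cos (β/2) * (1/√(2*(cos β - x))) = π/2 := by
  have h0 := arccos_nonneg x
  have hs : 0 < sin (arccos x/2) := by
    apply sin_pos_of_pos_of_lt_pi
    · have := arccos_pos.2 h2; linarith
    · linarith [pi_pos, arccos_le_pi x]
  rw [integral_eq_sub_of_hasDerivAt_of_le h0 (f := fun β => arcsin (sin (β/2)/sin (arccos x/2))) ?_ ?_ (base_integrable x h1 h2)]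
  · simp [div_self hs.ne']
  · apply Continuous.continuousOn
    exact continuous_arcsin.comp (by fun_prop)
  · intro β hβ
    exact base_deriv x β h1 h2 hβ

lemma ker_integrable (x : ℝ) (h1 : -1 < x) (h2 : x < 1) (g : ℝ → ℂ) (hg : Continuous g) :
    IntervalIntegrable (fun β => g β / ((√(2*(cos β - x)) : ℝ):ℂ)) volume 0 (arccos x) := by
  have h0 := arccos_nonneg x
  have hb : IntervalIntegrable (fun β => (((cos (β/2) * (1/√(2*(cos β - x))) : ℝ)) : ℂ)) volume 0 (arccos x) := by
    have := base_integrable x h1 h2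
    rw [intervalIntegrable_iff] at this ⊢
    exact this.ofReal
  have hpos : ∀ β ∈ Set.uIcc 0 (arccos x), (cos (β/2) : ℂ) ≠ 0 := by
    intro β hβ
    rw [Set.uIcc_of_le h0] at hβ
    have := cos_pos_of_mem_Ioo (x := β/2) ⟨by linarith [hβ.1, pi_pos], by linarith [hβ.2, arccos_lt_pi' x h1]⟩
    exact_mod_cast this.ne'
  have := hb.mul_continuousOn (g := fun β => g β / ((cos (β/2) : ℝ) : ℂ)) ?_
  · refine this.congr ?_
    intro β hβ
    have := hpos β (Set.uIoc_subset_uIcc hβ)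
    simp only
    push_cast at this ⊢
    field_simp
  · apply ContinuousOn.div hg.continuousOn
    · fun_prop
    · intro β hβ
      exact_mod_cast hpos β hβ

lemma legendreP_zero (x : ℝ) (h1 : -1 < x) (h2 : x < 1) : legendreP 0 x = 1 := by
  rw [legendreP, if_neg h2.ne]
  have : ∫ β in (0:ℝ)..(arccos x), Complex.cos ((2*0 + 1) * (β:ℂ) / 2) / ((√(2 * (cos β - x)) : ℝ) : ℂ)
     = ((π/2 : ℝ) : ℂ) := by
    rw [← base_integral x h1 h2, ← intervalIntegral.integral_ofReal]
    congr 1; ext β; push_cast; simp [div_eq_mul_inv]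
  rw [this, ← Complex.ofReal_mul]
  have := pi_ne_zero
  field_simp
  simp

lemma legendreP_rec (ν : ℂ) (x : ℝ) (h1 : -1 < x) (h2 : x < 1) :
    (ν+1) * legendreP (ν+1) x = (2*ν+1) * x * legendreP ν x - ν * legendreP (ν-1) x := by
  have h0 := arccos_nonneg x
  simp only [legendreP, if_neg h2.ne]
  have hi : ∀ ν : ℂ, IntervalIntegrable (fun β : ℝ => Complex.cos ((2*ν + 1) * (β:ℂ) / 2) / ((√(2 * (cos β - x)) : ℝ) : ℂ)) volume 0 (arccos x) := by
    intro ν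
    exact ker_integrable x h1 h2 _ (by fun_prop)
  have hI := ((((hi (ν+1)).const_mul (ν+1))).sub ((hi ν).const_mul ((2*ν+1)*x))).add ((hi (ν-1)).const_mul ν)
  have key : (∫ β in (0:ℝ)..(arccos x), ((ν+1) * (Complex.cos ((2*(ν+1) + 1) * (β:ℂ) / 2) / ((√(2 * (cos β - x)) : ℝ) : ℂ))
     - ((2*ν+1)*x) * (Complex.cos ((2*ν + 1) * (β:ℂ) / 2) / ((√(2 * (cos β - x)) : ℝ) : ℂ))
     + ν * (Complex.cos ((2*(ν-1) + 1) * (β:ℂ) / 2) / ((√(2 * (cos β - x)) : ℝ) : ℂ)))) = 0 := by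
    rw [integral_eq_sub_of_hasDerivAt_of_le h0 (f := fun β : ℝ => Complex.sin ((2*ν+1)*(β:ℂ)/2) * ((√(2 * (cos β - x)) : ℝ) : ℂ)) ?_ ?_ hI]
    · simp [Real.cos_arccos h1.le h2.le]
    · apply Continuous.continuousOn; fun_prop
    · intro β hβ
      have hlt : x < cos β := by
        rw [← Real.cos_arccos h1.le h2.le]
        exact cos_lt_cos_of_nonneg_of_le_pi hβ.1.le (arccos_le_pi x) hβ.2
      have hsq : 0 < √(2 * (cos β - x)) := Real.sqrt_pos.2 (by linarith)
      have hd : HasDerivAt (fun β : ℝ => √(2 * (cos β - x))) (-sin β/√(2 * (cos β - x))) β := by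
        have : HasDerivAt (fun β : ℝ => 2*(cos β - x)) (2*(-sin β)) β :=
          ((Real.hasDerivAt_cos β).sub_const x).const_mul 2
        refine (this.sqrt (by linarith)).congr_deriv ?_
        field_simp
      have hs : HasDerivAt (fun β : ℝ => Complex.sin ((2*ν+1)*(β:ℂ)/2)) (Complex.cos ((2*ν+1)*(β:ℂ)/2) * ((2*ν+1)/2)) β := by
        have : HasDerivAt (fun β : ℂ => (2*ν+1)*β/2) ((2*ν+1)/2) (β:ℂ) :=
          (((hasDerivAt_id (β:ℂ)).const_mul (2*ν+1)).div_const 2).congr_deriv (by simp)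
        exact this.csin.comp_ofReal
      refine (hs.mul hd.ofReal_comp).congr_deriv ?_
      have hne : ((√(2 * (cos β - x)) : ℝ) : ℂ) ≠ 0 := by exact_mod_cast hsq.ne'
      have hqq : ((√(2 * (cos β - x)) : ℝ) : ℂ)^2 = 2*(Complex.cos β - x) := by
        have := Real.sq_sqrt (show 0 ≤ 2 * (cos β - x) by linarith)
        exact_mod_cast congrArg (fun t : ℝ => (t:ℂ)) this
      have e1 : (2*(ν+1)+1)*(β:ℂ)/2 = (2*ν+1)*(β:ℂ)/2 + β := by ring
      have e2 : (2*(ν-1)+1)*(β:ℂ)/2 = (2*ν+1)*(β:ℂ)/2 - β := by ring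
      rw [e1, e2, Complex.cos_add, Complex.cos_sub]
      push_cast
      generalize ((√(2 * (cos β - x)) : ℝ) : ℂ) = q at *
      field_simp
      rw [hqq]
      ring
  rw [intervalIntegral.integral_add ((((hi (ν+1)).const_mul (ν+1))).sub ((hi ν).const_mul ((2*ν+1)*x))) ((hi (ν-1)).const_mul ν),
    intervalIntegral.integral_sub ((hi (ν+1)).const_mul (ν+1)) ((hi ν).const_mul ((2*ν+1)*x)),
    intervalIntegral.integral_const_mul, intervalIntegral.integral_const_mul, intervalIntegral.integral_const_mul] at key
  linear_combination ((2 / π : ℝ) : ℂ) * key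

lemma legendreP_nat (n : ℕ) (x : ℝ) (h1 : -1 < x) (h2 : x < 1) :
    legendreP n x = (legPoly n).eval (x:ℂ) ∧ legendreP ((n+1 : ℕ):ℂ) x = (legPoly (n+1)).eval (x:ℂ) := by
  induction n with
  | zero =>
    have h := legendreP_rec 0 x h1 h2
    have h3 := legendreP_zero x h1 h2
    simp [legPoly, h3] at h ⊢
    exact h
  | succ n ih =>
    refine ⟨ih.2, ?_⟩
    have h := legendreP_rec ((n+1 : ℕ):ℂ) x h1 h2
    have e1 : (((n+1:ℕ):ℂ) + 1) = ((n+1+1 : ℕ):ℂ) := by push_cast; ring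
    have e2 : (((n+1:ℕ):ℂ) - 1) = (n:ℂ) := by push_cast; ring
    rw [e1, e2, ih.1, ih.2] at h
    have h0 : ((n:ℂ)+2) ≠ 0 := by exact_mod_cast (by omega : n+2 ≠ 0)
    apply mul_left_cancel₀ h0
    rw [legPoly_eval_rec]
    push_cast at h ⊢
    linear_combination h

/-- Integration of polynomials against `P_μ`. -/
noncomputable def legFun (μ : ℂ) : Polynomial ℂ →ₗ[ℂ] ℂ where
  toFun p := ∫ x in (-1:ℝ)..1, legendreP μ x * p.eval (x:ℂ)
  map_add' p q := by
    simp only [Polynomial.eval_add, mul_add]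
    apply intervalIntegral.integral_add <;> exact legendre_integrable μ _ (by fun_prop)
  map_smul' a p := by
    simp only [Polynomial.eval_smul, smul_eq_mul, RingHom.id_apply]
    rw [← intervalIntegral.integral_const_mul]
    congr 1; ext x; ring

lemma T_eq (μ : ℂ) (n : ℕ) : T μ n = (-1)^n * legFun μ (legPoly n^2) := by
  change _ = (-1)^n * ∫ x in (-1:ℝ)..1, legendreP μ x * (legPoly n^2).eval (x:ℂ)
  rw [T, ← intervalIntegral.integral_const_mul, integral_of_le (by norm_num), integral_of_le (by norm_num)]
  apply MeasureTheory.integral_congr_ae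
  have h1 : ∀ᵐ x : ℝ ∂(volume.restrict (Set.Ioc (-1) 1)), x ≠ 1 :=
    ae_restrict_of_ae (by simp [ae_iff])
  filter_upwards [ae_restrict_mem measurableSet_Ioc, h1] with x hx hx1
  have hx2 := lt_of_le_of_ne hx.2 hx1
  rw [(legendreP_nat n x hx.1 hx2).1, (legendreP_nat n (-x) (by linarith) (by linarith [hx.1])).1]
  push_cast
  rw [(legPoly_parity n x).1, Polynomial.eval_pow]
  ring

open Polynomial in
lemma legFun_rec (μ : ℂ) (n : ℕ) :
    ((2*(n:ℂ)+2)*(2*n+3) - μ*(μ+1)) * legFun μ (legPoly (n+1)^2) = ((2*(n:ℂ)+1)*(2*n+2) - μ*(μ+1)) * legFun μ (legPoly n^2) := by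
  have h := functional_L (legFun μ) (μ*(μ+1)) (by
    intro k
    have := moment_rec μ k
    simpa [legFun] using this) (legPoly (n+1)^2 - legPoly n^2) (by
      simp [legPoly_neg_one])
  have h2 := congrArg (legFun μ) (legPoly_sq n)
  have e1 : (2*(n:ℂ[X])+2)*(2*n+3)*legPoly (n+1)^2 = ((2*(n:ℂ)+2)*(2*n+3)) • legPoly (n+1)^2 := by
    rw [smul_eq_C_mul]; simp [C_two', C_three']
  have e2 : (2*(n:ℂ[X])+1)*(2*n+2)*legPoly n^2 = ((2*(n:ℂ)+1)*(2*n+2)) • legPoly n^2 := by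
    rw [smul_eq_C_mul]; simp [C_two', C_three']
  rw [map_add, e1, e2, map_smul, map_smul, smul_eq_mul, smul_eq_mul] at h2
  rw [map_sub (legFun μ) (legPoly (n+1)^2)] at h
  linear_combination h2 - h

lemma gamma_ne (μ : ℂ) (hμ : ∀ m : ℤ, μ ≠ (m : ℂ)) (a : ℤ) :
    Complex.Gamma ((a - μ)/2) ≠ 0 ∧ Complex.Gamma ((a + μ)/2) ≠ 0 := by
  constructor
  · apply Complex.Gamma_ne_zero
    intro m h
    apply hμ (a + 2*m)
    push_cast
    linear_combination -2*h
  · apply Complex.Gamma_ne_zero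
    intro m h
    apply hμ (-a - 2*m)
    push_cast
    linear_combination 2*h

lemma legFun_formula (μ : ℂ) (hμ : ∀ m : ℤ, μ ≠ (m : ℂ)) (n : ℕ) :
    legFun μ (legPoly n^2)
      = (π:ℂ) * Complex.Gamma ((2*n+1-μ)/2) * Complex.Gamma ((2*n+2+μ)/2)
        / ((Complex.Gamma ((1-μ)/2))^2 * (Complex.Gamma ((μ+2)/2))^2
            * Complex.Gamma ((2*n+2-μ)/2) * Complex.Gamma ((2*n+3+μ)/2)) := by
  have g1 : Complex.Gamma ((1-μ)/2) ≠ 0 := by simpa using (gamma_ne μ hμ 1).1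
  have g2 : Complex.Gamma ((μ+2)/2) ≠ 0 := by simpa [add_comm] using (gamma_ne μ hμ 2).2
  induction n with
  | zero =>
    have g3 : Complex.Gamma ((2-μ)/2) ≠ 0 := by simpa using (gamma_ne μ hμ 2).1
    have g4 : Complex.Gamma ((3+μ)/2) ≠ 0 := by simpa using (gamma_ne μ hμ 3).2
    have h0 : μ ≠ 0 := by simpa using hμ 0
    have h1 : μ + 1 ≠ 0 := by
      intro h; apply hμ (-1); push_cast; linear_combination h
    have hm := moment_zero μ h0 h1
    have e : legFun μ (legPoly 0^2) = ∫ x in (-1:ℝ)..1, legendreP μ x := by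
      simp [legFun, legPoly]
    rw [e, hm]
    have d1 := Complex.Gamma_mul_Gamma_add_half ((1-μ)/2)
    have d2 := Complex.Gamma_mul_Gamma_add_half ((μ+2)/2)
    rw [show (1-μ)/2+1/2 = (2-μ)/2 by ring, show 2*((1-μ)/2) = 1-μ by ring] at d1
    rw [show (μ+2)/2+1/2 = (3+μ)/2 by ring, show 2*((μ+2)/2) = μ+1+1 by ring, Complex.Gamma_add_one _ h1,
      Complex.Gamma_add_one _ h0] at d2
    have hr := Complex.Gamma_mul_Gamma_one_sub μ
    have hp : (π:ℂ) ≠ 0 := by exact_mod_cast pi_ne_zero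
    have hs : Complex.sin (π*μ) ≠ 0 := by
      rw [Complex.sin_ne_zero_iff]
      intro k h
      apply hμ k
      apply mul_left_cancel₀ hp
      rw [h]; ring
    have hpow : (2:ℂ)^(1-(1-μ)) * 2^(1-(μ+1+1)) = 1/2 := by
      rw [← Complex.cpow_add _ _ two_ne_zero, show 1-(1-μ) + (1-(μ+1+1)) = -1 by ring, Complex.cpow_neg_one]
      norm_num
    have hsq : ((√π : ℝ):ℂ)^2 = π := by
      exact_mod_cast congrArg (fun t : ℝ => (t:ℂ)) (Real.sq_sqrt pi_pos.le)
    have hprod : Complex.Gamma ((1-μ)/2) * Complex.Gamma ((2-μ)/2) * (Complex.Gamma ((μ+2)/2) * Complex.Gamma ((3+μ)/2))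
        = π * μ * (μ+1) * (π / Complex.sin (π*μ))/2 := by
      rw [d1, d2, ← hr]
      linear_combination (Complex.Gamma (1-μ) * ((μ+1)*(μ*Complex.Gamma μ)) * ((√π : ℝ):ℂ)^2)*hpow + (Complex.Gamma (1-μ) * ((μ+1)*(μ*Complex.Gamma μ))/2)*hsq
    have e3 : (π:ℂ) * Complex.Gamma ((2*(0:ℕ)+1-μ)/2) * Complex.Gamma ((2*(0:ℕ)+2+μ)/2)
        / ((Complex.Gamma ((1-μ)/2))^2 * (Complex.Gamma ((μ+2)/2))^2
            * Complex.Gamma ((2*(0:ℕ)+2-μ)/2) * Complex.Gamma ((2*(0:ℕ)+3+μ)/2)) =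
        π / (Complex.Gamma ((1-μ)/2) * Complex.Gamma ((2-μ)/2) * (Complex.Gamma ((μ+2)/2) * Complex.Gamma ((3+μ)/2))) := by
      simp only [Nat.cast_zero, mul_zero, zero_add]
      rw [add_comm 2 μ]
      field_simp
    rw [e3, hprod]
    field_simp
  | succ n ih =>
    have hrec := legFun_rec μ n
    have f1 : (2*(n:ℂ)+1-μ) ≠ 0 := by
      intro h; apply hμ (2*n+1); push_cast; linear_combination -h
    have f2 : (2*(n:ℂ)+2+μ) ≠ 0 := by
      intro h; apply hμ (-2*n-2); push_cast; linear_combination h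
    have f3 : (2*(n:ℂ)+2-μ) ≠ 0 := by
      intro h; apply hμ (2*n+2); push_cast; linear_combination -h
    have f4 : (2*(n:ℂ)+3+μ) ≠ 0 := by
      intro h; apply hμ (-2*n-3); push_cast; linear_combination h
    have g3 : Complex.Gamma ((2*n+2-μ)/2) ≠ 0 := by simpa using (gamma_ne μ hμ (2*n+2)).1
    have g4 : Complex.Gamma ((2*n+3+μ)/2) ≠ 0 := by simpa using (gamma_ne μ hμ (2*n+3)).2
    have k1 : (2*((n+1:ℕ):ℂ)+1-μ)/2 = (2*n+1-μ)/2+1 := by push_cast; ring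
    have k2 : (2*((n+1:ℕ):ℂ)+2+μ)/2 = (2*n+2+μ)/2+1 := by push_cast; ring
    have k3 : (2*((n+1:ℕ):ℂ)+2-μ)/2 = (2*n+2-μ)/2+1 := by push_cast; ring
    have k4 : (2*((n+1:ℕ):ℂ)+3+μ)/2 = (2*n+3+μ)/2+1 := by push_cast; ring
    rw [k1, k2, k3, k4, Complex.Gamma_add_one _ (div_ne_zero f1 two_ne_zero), Complex.Gamma_add_one _ (div_ne_zero f2 two_ne_zero),
      Complex.Gamma_add_one _ (div_ne_zero f3 two_ne_zero), Complex.Gamma_add_one _ (div_ne_zero f4 two_ne_zero)]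
    have c1 : (2*(n:ℂ)+2)*(2*n+3) - μ*(μ+1) = (2*n+2-μ)*(2*n+3+μ) := by ring
    have c2 : (2*(n:ℂ)+1)*(2*n+2) - μ*(μ+1) = (2*n+1-μ)*(2*n+2+μ) := by ring
    rw [c1, c2, ih] at hrec
    apply mul_left_cancel₀ (mul_ne_zero f3 f4)
    rw [hrec]
    clear hrec ih c1 c2 k1 k2 k3 k4
    generalize Complex.Gamma ((2*n+2-μ)/2) = G3 at *
    generalize Complex.Gamma ((2*n+3+μ)/2) = G4 at *
    generalize Complex.Gamma ((2*n+1-μ)/2) = G5 at *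
    generalize Complex.Gamma ((2*n+2+μ)/2) = G6 at *
    generalize Complex.Gamma ((1-μ)/2) = G1 at *
    generalize Complex.Gamma ((μ+2)/2) = G2 at *
    generalize 2*(n:ℂ)+2-μ = a3 at *
    generalize 2*(n:ℂ)+3+μ = a4 at *
    field_simp

theorem stmt_5 (μ : ℂ) (hμ : ∀ m : ℤ, μ ≠ (m : ℂ)) (n : ℕ) :
    T μ (n : ℂ)
      = (-1)^n * (π:ℂ) * Complex.Gamma ((2*n+1-μ)/2) * Complex.Gamma ((2*n+2+μ)/2)
        / ((Complex.Gamma ((1-μ)/2))^2 * (Complex.Gamma ((μ+2)/2))^2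
            * Complex.Gamma ((2*n+2-μ)/2) * Complex.Gamma ((2*n+3+μ)/2)) := by
  rw [T_eq, legFun_formula μ hμ n]
  ring
end
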